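/- Let x₀ < x₁ and T > 0. Let F : ℝ × ℝ × ℝ × [x₀,x₁] × [0,T] → ℝ, written F = F(r,p,q,x,t), be infinitely differentiable with ∂F/∂r > 0 everywhere (parabolicity). Let u, φ : [x₀,x₁] × [0,T] → ℝ be infinitely differentiable, both satisfying the equation w_t = F(w_{xx}, w_x, w, x, t) pointwise, and suppose u(xᵢ,t) ≠ φ(xᵢ,t) for i = 0,1 and all t ∈ [0,T] (no intersections on the lateral boundary). For t ∈ [0,T] let Z(t) = {x ∈ [x₀,x₁] : u(x,t) = φ(x,t)} be the set of intersections. Then: (a) Z(t) is a finite set for every t ∈ (0,T]; and (b) if at some time t̃ ∈ (0,T) there is x̃ ∈ (x₀,x₁) with u(x̃,t̃) = φ(x̃,t̃) and u_x(x̃,t̃) = φ_x(x̃,t̃) (a tangential intersection), then for all t₁, t₂ with 0 < t₁ < t̃ < t₂ ≤ T, the cardinality of Z(t₂) is strictly smaller than the cardinality of Z(t₁). -/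

import Mathlib

/-!
The difference `w` of the two solutions solves a linear parabolic equation
`w_t = a w_xx + b w_x + c w`, whose coefficients are means of derivatives of `F` over the segment
between the two jets. Near a zero where the first nonzero spatial derivative has order `k`, `w` is
to leading order a multiple of the heat polynomial of degree `k`. The sign of that polynomial leaves
at most one zero just after, and produces at least one zero just before, even two if `k ≥ 2`. As
zeros stay away from the lateral boundary, their number never increases and drops at a multiple
zero.

There remains to exclude a zero of infinite order, say at `(x', T)`. In the coordinate
`ρ = ∫ a ^ (-1 / 2)` centred at `x'`, in which the diffusion has unit speed, weight `w ^ 2` by the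
backward Gaussian which concentrates at `ρ = 0` at time `T + ε`. Poon's parabolic frequency of `w`
is almost monotone, the boundary terms being negligible because `w` does not vanish there: the
Gaussian controls more mass inside. Hence the weighted mass at time `T` is at least `c * ε ^ K` with
`K` independent of `ε`, whereas a zero of infinite order would make it `O(ε ^ n)` for every `n`.
-/

open Set Filter Topology MeasureTheory Asymptotics
open scoped ContDiff

section ParametricIntegral

universe u

variable {E G : Type u} [NormedAddCommGroup E] [NormedSpace ℝ E]
  [NormedAddCommGroup G] [NormedSpace ℝ G] {s : Set E} {c d : ℝ}

theorem continuousOn_section {X Y Z : Type*} [TopologicalSpace X] [TopologicalSpace Y]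
    [TopologicalSpace Z] {s : Set X} {k : Set Y} {g : X → Y → Z}
    (hg : ContinuousOn (Function.uncurry g) (s ×ˢ k)) {x : X} (hx : x ∈ s) :
    ContinuousOn (g x) k :=
  hg.comp (f := fun y => (x, y)) (by fun_prop) fun _ hy => ⟨hx, hy⟩

theorem intervalIntegrable_section {X Z : Type*} [TopologicalSpace X] [NormedAddCommGroup Z]
    {s : Set X} (hcd : c ≤ d) {g : X → ℝ → Z}
    (hg : ContinuousOn (Function.uncurry g) (s ×ˢ Icc c d)) {x : X} (hx : x ∈ s) :
    IntervalIntegrable (g x) volume c d :=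
  (continuousOn_section hg hx).intervalIntegrable_of_Icc hcd

theorem eventually_forall_norm_sub_sub_le {β : Type*} [TopologicalSpace β] {K : Set β}
    (hs : Convex ℝ s) (hK : IsCompact K) {g : E → β → G} {g' : E → β → E →L[ℝ] G}
    (hg : ∀ z ∈ s, ∀ θ ∈ K, HasFDerivWithinAt (fun y => g y θ) (g' z θ) s z)
    (hg' : ContinuousOn (Function.uncurry g') (s ×ˢ K)) {z : E} (hz : z ∈ s) {δ : ℝ}
    (hδ : 0 < δ) :
    ∀ᶠ y in 𝓝[s] z, ∀ θ ∈ K, ‖g y θ - g z θ - g' z θ (y - z)‖ ≤ δ * ‖y - z‖ := by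
  obtain ⟨v, hv, hvδ⟩ := hK.mem_uniformity_of_prod hg' hz (Metric.dist_mem_uniformity hδ)
  obtain ⟨r, hr, hrv⟩ := Metric.mem_nhdsWithin_iff.1 hv
  filter_upwards [self_mem_nhdsWithin, mem_nhdsWithin_of_mem_nhds (Metric.ball_mem_nhds z hr)]
    with y hys hyr θ hθ
  refine (hs.inter (convex_ball z r)).norm_image_sub_le_of_norm_hasFDerivWithin_le'
    (f := fun y => g y θ) (f' := fun y => g' y θ)
    (fun x hx => (hg x hx.1 θ hθ).mono inter_subset_left) (fun x hx => ?_)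
    ⟨hz, Metric.mem_ball_self hr⟩ ⟨hys, hyr⟩
  have hdist := hvδ x (hrv ⟨hx.2, hx.1⟩) θ hθ
  simp only [mem_ofPred_eq, dist_eq_norm] at hdist
  exact hdist.le

theorem hasFDerivWithinAt_integral_param (hs : Convex ℝ s) (hcd : c ≤ d)
    {g : E → ℝ → G} {g' : E → ℝ → E →L[ℝ] G}
    (hg : ∀ z ∈ s, ∀ θ ∈ Icc c d, HasFDerivWithinAt (fun y => g y θ) (g' z θ) s z)
    (hgc : ContinuousOn (Function.uncurry g) (s ×ˢ Icc c d))
    (hgc' : ContinuousOn (Function.uncurry g') (s ×ˢ Icc c d)) {z : E} (hz : z ∈ s) :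
    HasFDerivWithinAt (fun y => ∫ θ in c..d, g y θ) (∫ θ in c..d, g' z θ) s z := by
  rw [hasFDerivWithinAt_iff_isLittleO, isLittleO_iff]
  intro ε hε
  obtain ⟨δ, hδ, hδε⟩ : ∃ δ > 0, δ * |d - c| ≤ ε :=
    ⟨ε / (|d - c| + 1), by positivity, by
      rw [div_mul_eq_mul_div, div_le_iff₀ (by positivity)]
      nlinarith [abs_nonneg (d - c)]⟩
  filter_upwards [self_mem_nhdsWithin,
    eventually_forall_norm_sub_sub_le hs isCompact_Icc hg hgc' hz hδ] with y hys hy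
  have hIy := intervalIntegrable_section hcd hgc hys
  have hIz := intervalIntegrable_section hcd hgc hz
  have hI' : IntervalIntegrable (fun θ => g' z θ (y - z)) volume c d :=
    ((continuousOn_section hgc' hz).clm_apply
      continuousOn_const).intervalIntegrable_of_Icc hcd
  rw [ContinuousLinearMap.intervalIntegral_apply (intervalIntegrable_section hcd hgc' hz),
    ← intervalIntegral.integral_sub hIy hIz, ← intervalIntegral.integral_sub (hIy.sub hIz) hI']
  calc _ ≤ (δ * ‖y - z‖) * |d - c| :=
        intervalIntegral.norm_integral_le_of_norm_le_const fun θ hθ =>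
          hy θ (Ioc_subset_Icc_self (uIoc_of_le hcd ▸ hθ))
    _ = (δ * |d - c|) * ‖y - z‖ := by ring
    _ ≤ ε * ‖y - z‖ := by gcongr

theorem exists_contDiffOn_hasFDerivWithinAt_integral (hs : Convex ℝ s) (hu : UniqueDiffOn ℝ s)
    (hcd : c < d) {g : E → ℝ → G}
    (hg : ContDiffOn ℝ ∞ (Function.uncurry g) (s ×ˢ Icc c d)) :
    ∃ g' : E → ℝ → E →L[ℝ] G, ContDiffOn ℝ ∞ (Function.uncurry g') (s ×ˢ Icc c d) ∧
      ∀ z ∈ s, HasFDerivWithinAt (fun y => ∫ θ in c..d, g y θ) (∫ θ in c..d, g' z θ) s z := by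
  set g' : E → ℝ → E →L[ℝ] G := fun z θ =>
    (fderivWithin ℝ (Function.uncurry g) (s ×ˢ Icc c d) (z, θ)).comp
      (ContinuousLinearMap.inl ℝ E ℝ)
  have hg' : ContDiffOn ℝ ∞ (Function.uncurry g') (s ×ˢ Icc c d) :=
    (hg.fderivWithin (hu.prod (uniqueDiffOn_Icc hcd)) (by simp)).clm_comp contDiffOn_const
  have hderiv : ∀ z ∈ s, ∀ θ ∈ Icc c d, HasFDerivWithinAt (fun y => g y θ) (g' z θ) s z := by
    intro z hz θ hθ
    have h := (hg.differentiableOn (by simp) (z, θ) ⟨hz, hθ⟩).hasFDerivWithinAt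
    exact h.comp (f := fun y : E => (y, θ)) z (hasFDerivAt_prodMk_left z θ).hasFDerivWithinAt
      fun y hy => ⟨hy, hθ⟩
  exact ⟨g', hg', fun z hz => hasFDerivWithinAt_integral_param hs hcd.le hderiv
    hg.continuousOn hg'.continuousOn hz⟩

theorem contDiffOn_integral_param [CompleteSpace G] (hs : Convex ℝ s) (hu : UniqueDiffOn ℝ s)
    (hcd : c < d) {g : E → ℝ → G}
    (hg : ContDiffOn ℝ ∞ (Function.uncurry g) (s ×ˢ Icc c d)) :
    ContDiffOn ℝ ∞ (fun y => ∫ θ in c..d, g y θ) s := by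
  refine contDiffOn_infty.2 fun n => ?_
  induction n generalizing G with
  | zero =>
    obtain ⟨g', -, h⟩ := exists_contDiffOn_hasFDerivWithinAt_integral hs hu hcd hg
    exact contDiffOn_zero.2 fun z hz => (h z hz).continuousWithinAt
  | succ n ih =>
    obtain ⟨g', hg', h⟩ := exists_contDiffOn_hasFDerivWithinAt_integral hs hu hcd hg
    rw [Nat.cast_succ, contDiffOn_succ_iff_hasFDerivWithinAt_of_uniqueDiffOn hu]
    exact ⟨by simp, _, ih hg', h⟩

end ParametricIntegral

/-- The closed space-time rectangle `[x₀, x₁] × [0, T]`, space first. -/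
def spaceTimeRect (x₀ x₁ T : ℝ) : Set (ℝ × ℝ) := Icc x₀ x₁ ×ˢ Icc 0 T

/-- The partial derivative in the space variable, within the set `s`: on the boundary of the
space-time rectangle it is one-sided. -/
noncomputable def derivX (s : Set (ℝ × ℝ)) (f : ℝ × ℝ → ℝ) (z : ℝ × ℝ) : ℝ :=
  fderivWithin ℝ f s z (1, 0)

/-- The partial derivative in the time variable, within the set `s`. -/
noncomputable def derivT (s : Set (ℝ × ℝ)) (f : ℝ × ℝ → ℝ) (z : ℝ × ℝ) : ℝ :=
  fderivWithin ℝ f s z (0, 1)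

section PartialDerivatives

variable {s s' : Set (ℝ × ℝ)} {f g : ℝ × ℝ → ℝ} {z : ℝ × ℝ}

theorem contDiffOn_derivX (hs : UniqueDiffOn ℝ s) (hf : ContDiffOn ℝ ∞ f s) :
    ContDiffOn ℝ ∞ (derivX s f) s :=
  (hf.fderivWithin hs (by simp)).clm_apply contDiffOn_const

theorem contDiffOn_derivT (hs : UniqueDiffOn ℝ s) (hf : ContDiffOn ℝ ∞ f s) :
    ContDiffOn ℝ ∞ (derivT s f) s :=
  (hf.fderivWithin hs (by simp)).clm_apply contDiffOn_const

theorem contDiffOn_derivX_iterate (hs : UniqueDiffOn ℝ s) (hf : ContDiffOn ℝ ∞ f s) (j : ℕ) :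
    ContDiffOn ℝ ∞ ((derivX s)^[j] f) s := by
  induction j with
  | zero => exact hf
  | succ j ih => rw [Function.iterate_succ_apply']; exact contDiffOn_derivX hs ih

theorem derivX_congr (h : EqOn f g s) : EqOn (derivX s f) (derivX s g) s := fun z hz => by
  rw [derivX, derivX, fderivWithin_congr h (h hz)]

theorem derivT_congr (h : EqOn f g s) : EqOn (derivT s f) (derivT s g) s := fun z hz => by
  rw [derivT, derivT, fderivWithin_congr h (h hz)]

theorem derivX_add (hs : UniqueDiffOn ℝ s) (hf : ContDiffOn ℝ ∞ f s) (hg : ContDiffOn ℝ ∞ g s)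
    (hz : z ∈ s) : derivX s (fun z => f z + g z) z = derivX s f z + derivX s g z := by
  simp only [derivX, fderivWithin_fun_add (hs z hz) (hf.differentiableOn (by simp) z hz)
    (hg.differentiableOn (by simp) z hz), add_apply]

theorem derivX_sub (hs : UniqueDiffOn ℝ s) (hf : ContDiffOn ℝ ∞ f s) (hg : ContDiffOn ℝ ∞ g s)
    (hz : z ∈ s) : derivX s (fun z => f z - g z) z = derivX s f z - derivX s g z := by
  simp only [derivX, fderivWithin_fun_sub (hs z hz) (hf.differentiableOn (by simp) z hz)
    (hg.differentiableOn (by simp) z hz), sub_apply]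

theorem derivT_sub (hs : UniqueDiffOn ℝ s) (hf : ContDiffOn ℝ ∞ f s) (hg : ContDiffOn ℝ ∞ g s)
    (hz : z ∈ s) : derivT s (fun z => f z - g z) z = derivT s f z - derivT s g z := by
  simp only [derivT, fderivWithin_fun_sub (hs z hz) (hf.differentiableOn (by simp) z hz)
    (hg.differentiableOn (by simp) z hz), sub_apply]

theorem derivX_mul (hs : UniqueDiffOn ℝ s) (hf : ContDiffOn ℝ ∞ f s) (hg : ContDiffOn ℝ ∞ g s)
    (hz : z ∈ s) : derivX s (fun z => f z * g z) z = derivX s f z * g z + f z * derivX s g z := by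
  simp only [derivX, fderivWithin_fun_mul (hs z hz) (hf.differentiableOn (by simp) z hz)
    (hg.differentiableOn (by simp) z hz), add_apply, smul_apply, smul_eq_mul]
  ring

theorem derivX_derivT_comm (hs : UniqueDiffOn ℝ s) (hf : ContDiffOn ℝ ∞ f s) (hz : z ∈ s)
    (hzs : z ∈ closure (interior s)) : derivX s (derivT s f) z = derivT s (derivX s f) z := by
  have hd : DifferentiableWithinAt ℝ (fderivWithin ℝ f s) s z :=
    ((hf.fderivWithin hs (m := ∞) (by simp)).differentiableOn (by simp)) z hz
  have hsecond : ∀ a b : ℝ × ℝ, fderivWithin ℝ (fun y => fderivWithin ℝ f s y a) s z b =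
      fderivWithin ℝ (fderivWithin ℝ f s) s z b a := by
    intro a b
    rw [fderivWithin_clm_apply (hs z hz) hd (differentiableWithinAt_const a)]
    simp
  have hsymm : IsSymmSndFDerivWithinAt ℝ f s z :=
    (hf z hz).isSymmSndFDerivWithinAt
      (by rw [minSmoothness_of_isRCLikeNormedField]; exact ENat.LEInfty.out) hs hzs hz
  change fderivWithin ℝ (fun y => fderivWithin ℝ f s y (0, 1)) s z (1, 0) =
    fderivWithin ℝ (fun y => fderivWithin ℝ f s y (1, 0)) s z (0, 1)
  rw [hsecond, hsecond]
  exact hsymm.eq _ _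

theorem derivX_of_subset (hs' : UniqueDiffOn ℝ s') (hss : s' ⊆ s) (hf : ContDiffOn ℝ ∞ f s) :
    EqOn (derivX s' f) (derivX s f) s' := fun z hz => by
  rw [derivX, derivX, fderivWithin_subset hss (hs' z hz) (hf.differentiableOn (by simp) z (hss hz))]

theorem derivT_of_subset (hs' : UniqueDiffOn ℝ s') (hss : s' ⊆ s) (hf : ContDiffOn ℝ ∞ f s) :
    EqOn (derivT s' f) (derivT s f) s' := fun z hz => by
  rw [derivT, derivT, fderivWithin_subset hss (hs' z hz) (hf.differentiableOn (by simp) z (hss hz))]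

theorem derivX_iterate_of_subset (hs : UniqueDiffOn ℝ s) (hs' : UniqueDiffOn ℝ s') (hss : s' ⊆ s)
    (hf : ContDiffOn ℝ ∞ f s) (j : ℕ) : EqOn ((derivX s')^[j] f) ((derivX s)^[j] f) s' := by
  induction j with
  | zero => exact fun _ _ => rfl
  | succ j ih =>
    simp only [Function.iterate_succ_apply']
    exact (derivX_congr ih).trans (derivX_of_subset hs' hss (contDiffOn_derivX_iterate hs hf j))

end PartialDerivatives

section SpaceTimeRect

variable {x₀ x₁ T : ℝ} {f : ℝ × ℝ → ℝ} {x t c : ℝ}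

local notation "S" => spaceTimeRect x₀ x₁ T

theorem convex_spaceTimeRect (x₀ x₁ T : ℝ) : Convex ℝ (spaceTimeRect x₀ x₁ T) :=
  (convex_Icc _ _).prod (convex_Icc _ _)

theorem isCompact_spaceTimeRect (x₀ x₁ T : ℝ) : IsCompact (spaceTimeRect x₀ x₁ T) :=
  isCompact_Icc.prod isCompact_Icc

theorem uniqueDiffOn_spaceTimeRect (hx : x₀ < x₁) (hT : 0 < T) : UniqueDiffOn ℝ S :=
  (uniqueDiffOn_Icc hx).prod (uniqueDiffOn_Icc hT)

theorem closure_interior_spaceTimeRect (hx : x₀ < x₁) (hT : 0 < T) :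
    closure (interior S) = S := by
  rw [spaceTimeRect, interior_prod_eq, interior_Icc, interior_Icc, closure_prod_eq,
    closure_Ioo hx.ne, closure_Ioo hT.ne]

theorem spaceTimeRect_subset {T' : ℝ} (hT' : T' ≤ T) :
    spaceTimeRect x₀ x₁ T' ⊆ spaceTimeRect x₀ x₁ T :=
  prod_mono_right (Icc_subset_Icc_right hT')

theorem continuousOn_timeSlice (hf : ContinuousOn f S) (ht : t ∈ Icc 0 T) :
    ContinuousOn (fun x => f (x, t)) (Icc x₀ x₁) :=
  hf.comp (f := fun x => (x, t)) (by fun_prop) fun _ hx => ⟨hx, ht⟩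

theorem intervalIntegrable_timeSlice (hx : x₀ ≤ x₁) (hf : ContinuousOn f S) (ht : t ∈ Icc 0 T) :
    IntervalIntegrable (fun x => f (x, t)) volume x₀ x₁ :=
  (continuousOn_timeSlice hf ht).intervalIntegrable_of_Icc hx

theorem exists_abs_le_of_continuousOn_spaceTimeRect (hf : ContinuousOn f S) :
    ∃ C, 0 ≤ C ∧ ∀ z ∈ S, |f z| ≤ C := by
  obtain ⟨C, hC⟩ := (isCompact_spaceTimeRect x₀ x₁ T).exists_bound_of_continuousOn hf
  exact ⟨max C 0, le_max_right _ _, fun z hz => (hC z hz).trans (le_max_left _ _)⟩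

theorem hasDerivWithinAt_derivX (hf : ContDiffOn ℝ ∞ f S) (hz : (x, t) ∈ S) :
    HasDerivWithinAt (fun y => f (y, t)) (derivX S f (x, t)) (Icc x₀ x₁) x :=
  (hf.differentiableOn (by simp) _ hz).hasFDerivWithinAt.comp_hasDerivWithinAt
    (f := fun y => (y, t)) x
    ((hasDerivWithinAt_id x _).prodMk (hasDerivWithinAt_const x _ t)) fun _ hy => ⟨hy, hz.2⟩

theorem hasDerivWithinAt_derivT (hf : ContDiffOn ℝ ∞ f S) (hz : (x, t) ∈ S) :
    HasDerivWithinAt (fun s => f (x, s)) (derivT S f (x, t)) (Icc 0 T) t :=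
  (hf.differentiableOn (by simp) _ hz).hasFDerivWithinAt.comp_hasDerivWithinAt
    (f := fun s => (x, s)) t
    ((hasDerivWithinAt_const t _ x).prodMk (hasDerivWithinAt_id t _)) fun _ hy => ⟨hz.1, hy⟩

theorem derivX_eq_of_hasDerivWithinAt (hx : x₀ < x₁) (hf : ContDiffOn ℝ ∞ f S)
    (hz : (x, t) ∈ S) (h : HasDerivWithinAt (fun y => f (y, t)) c (Icc x₀ x₁) x) :
    derivX S f (x, t) = c :=
  (uniqueDiffOn_Icc hx x hz.1).eq_deriv _ (hasDerivWithinAt_derivX hf hz) h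

theorem derivT_eq_of_hasDerivWithinAt (hT : 0 < T) (hf : ContDiffOn ℝ ∞ f S)
    (hz : (x, t) ∈ S) (h : HasDerivWithinAt (fun s => f (x, s)) c (Icc 0 T) t) :
    derivT S f (x, t) = c :=
  (uniqueDiffOn_Icc hT t hz.2).eq_deriv _ (hasDerivWithinAt_derivT hf hz) h

end SpaceTimeRect

/-! ### Heat polynomials -/

/-- Heat polynomials: `heatPoly a m` is the parabolically homogeneous solution of degree `m` of
`P_t = a P_xx`, normalized by `P(x, 0) = x ^ m / m!`. -/
noncomputable def heatPoly (a : ℝ) : ℕ → ℝ → ℝ → ℝ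
  | 0, _, _ => 1
  | 1, x, _ => x
  | m + 2, x, t => (x * heatPoly a (m + 1) x t + 2 * a * t * heatPoly a m x t) / (m + 2)
section HeatPoly

variable {a : ℝ}

theorem heatPoly_zero (x t : ℝ) : heatPoly a 0 x t = 1 := by rw [heatPoly]

theorem heatPoly_one (x t : ℝ) : heatPoly a 1 x t = x := by rw [heatPoly]

theorem heatPoly_add_two (m : ℕ) (x t : ℝ) : heatPoly a (m + 2) x t =
    (x * heatPoly a (m + 1) x t + 2 * a * t * heatPoly a m x t) / (m + 2) := by rw [heatPoly]

theorem contDiff_heatPoly (m : ℕ) :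
    ContDiff ℝ ∞ (fun z : ℝ × ℝ => heatPoly a m z.1 z.2) := by
  induction m using Nat.twoStepInduction with
  | zero => simp only [heatPoly_zero]; fun_prop
  | one => simp only [heatPoly_one]; fun_prop
  | more m h0 h1 => simp only [heatPoly_add_two]; fun_prop

theorem hasDerivAt_heatPoly_fst (m : ℕ) (x t : ℝ) :
    HasDerivAt (fun y => heatPoly a (m + 1) y t) (heatPoly a m x t) x := by
  induction m using Nat.twoStepInduction with
  | zero => simp only [zero_add, heatPoly_one, heatPoly_zero]; exact hasDerivAt_id x
  | one =>
    simp only [heatPoly_add_two 0, heatPoly_one, heatPoly_zero, zero_add]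
    refine ((((hasDerivAt_id' x).fun_mul (hasDerivAt_id' x)).add_const (2 * a * t * 1)).div_const
      ((0 : ℕ) + 2 : ℝ)).congr_deriv ?_
    simp
  | more m h0 h1 =>
    simp only [heatPoly_add_two (m + 1)]
    refine ((((hasDerivAt_id' x).fun_mul h1).fun_add (h0.const_mul (2 * a * t))).div_const
      ((m + 1 : ℕ) + 2 : ℝ)).congr_deriv ?_
    have h := heatPoly_add_two (a := a) m x t
    rw [eq_div_iff (by positivity)] at h
    rw [div_eq_iff (by positivity)]
    push_cast
    linear_combination -h

theorem hasDerivAt_heatPoly_snd (m : ℕ) (x t : ℝ) :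
    HasDerivAt (fun s => heatPoly a (m + 2) x s) (a * heatPoly a m x t) t := by
  induction m using Nat.twoStepInduction with
  | zero =>
    simp only [heatPoly_add_two 0, heatPoly_one, heatPoly_zero, zero_add]
    refine (((((hasDerivAt_id' t).const_mul (2 * a)).mul_const 1).const_add (x * x)).div_const
      ((0 : ℕ) + 2 : ℝ)).congr_deriv ?_
    norm_num
  | one =>
    simp only [heatPoly_add_two 1, heatPoly_add_two 0, heatPoly_one, heatPoly_zero, zero_add]
    refine ((((((((hasDerivAt_id' t).const_mul (2 * a)).mul_const 1).const_add (x * x)).div_const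
      ((0 : ℕ) + 2 : ℝ)).const_mul x).fun_add (((hasDerivAt_id' t).const_mul (2 * a)).mul_const x)
      ).div_const ((1 : ℕ) + 2 : ℝ)).congr_deriv ?_
    push_cast; ring
  | more m h0 h1 =>
    simp only [heatPoly_add_two (m + 2)]
    refine (((h1.const_mul x).fun_add (((hasDerivAt_id' t).const_mul (2 * a)).fun_mul h0)).div_const
      ((m + 2 : ℕ) + 2 : ℝ)).congr_deriv ?_
    have h := heatPoly_add_two (a := a) m x t
    rw [eq_div_iff (by positivity)] at h
    rw [div_eq_iff (by positivity)]
    push_cast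
    linear_combination -a * h

theorem heatPoly_at_zero (m : ℕ) (x : ℝ) : heatPoly a m x 0 = x ^ m / m.factorial := by
  induction m using Nat.twoStepInduction with
  | zero => simp [heatPoly_zero]
  | one => simp [heatPoly_one]
  | more m _ h1 =>
    rw [heatPoly_add_two, h1, Nat.factorial_succ (m + 1)]
    have : ((m + 1).factorial : ℝ) ≠ 0 := by positivity
    have : ((m : ℝ) + 2) ≠ 0 := by positivity
    push_cast
    field_simp
    ring

theorem heatPoly_neg (m : ℕ) (x t : ℝ) : heatPoly a m (-x) t = (-1) ^ m * heatPoly a m x t := by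
  induction m using Nat.twoStepInduction with
  | zero => simp [heatPoly_zero]
  | one => simp [heatPoly_one]
  | more m h0 h1 => rw [heatPoly_add_two, heatPoly_add_two, h0, h1]; ring

theorem heatPoly_homogeneous (m : ℕ) (r x t : ℝ) :
    heatPoly a m (r * x) (r ^ 2 * t) = r ^ m * heatPoly a m x t := by
  induction m using Nat.twoStepInduction with
  | zero => simp [heatPoly_zero]
  | one => simp [heatPoly_one]
  | more m h0 h1 => rw [heatPoly_add_two, heatPoly_add_two, h0, h1]; ring
theorem heatPoly_even_nonneg_and_mul_odd_nonneg (ha : 0 ≤ a) {t : ℝ} (ht : 0 ≤ t) (n : ℕ)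
    (x : ℝ) : 0 ≤ heatPoly a (2 * n) x t ∧ 0 ≤ x * heatPoly a (2 * n + 1) x t := by
  induction n with
  | zero => exact ⟨by simp [heatPoly_zero], by simpa [heatPoly_one] using mul_self_nonneg x⟩
  | succ n ih =>
    obtain ⟨heven, hodd⟩ := ih
    have heven' : 0 ≤ heatPoly a (2 * n + 2) x t := by rw [heatPoly_add_two]; positivity
    refine ⟨heven', ?_⟩
    calc (0 : ℝ) ≤ (x ^ 2 * heatPoly a (2 * n + 2) x t
          + 2 * a * t * (x * heatPoly a (2 * n + 1) x t)) / ((2 * n + 1 : ℕ) + 2) := by positivity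
      _ = x * heatPoly a (2 * n + 1 + 2) x t := by rw [heatPoly_add_two (2 * n + 1)]; ring

theorem sq_mul_heatPoly_even_div_le (ha : 0 ≤ a) {t : ℝ} (ht : 0 ≤ t) (n : ℕ) (x : ℝ) :
    x ^ 2 * heatPoly a (2 * n) x t / (2 * n + 1) ≤ x * heatPoly a (2 * n + 1) x t := by
  cases n with
  | zero => simp [heatPoly_zero, heatPoly_one, sq]
  | succ n =>
    have hodd := (heatPoly_even_nonneg_and_mul_odd_nonneg ha ht n x).2
    calc x ^ 2 * heatPoly a (2 * n + 2) x t / (2 * (n + 1 : ℕ) + 1)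
        ≤ (x ^ 2 * heatPoly a (2 * n + 2) x t
          + 2 * a * t * (x * heatPoly a (2 * n + 1) x t)) / (2 * (n + 1 : ℕ) + 1) := by
          gcongr; exact le_add_of_nonneg_right (by positivity)
      _ = x * heatPoly a (2 * n + 1 + 2) x t := by
        rw [heatPoly_add_two (2 * n + 1)]; push_cast; ring

theorem exists_mul_heatPoly_even_le (ha : 0 < a) (n : ℕ) : ∃ d > 0, ∀ x t : ℝ, 0 ≤ t →
    d * (x ^ 2 + t) * heatPoly a (2 * n) x t ≤ heatPoly a (2 * (n + 1)) x t := by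
  set d : ℝ := min (1 / (2 * n + 1)) (2 * a)
  refine ⟨d / (2 * n + 2), by positivity, fun x t ht => ?_⟩
  have heven := (heatPoly_even_nonneg_and_mul_odd_nonneg ha.le ht n x).1
  have hx : d * (x ^ 2 * heatPoly a (2 * n) x t) ≤ x * heatPoly a (2 * n + 1) x t :=
    calc _ ≤ 1 / (2 * n + 1) * (x ^ 2 * heatPoly a (2 * n) x t) := by
          gcongr; exact min_le_left _ _
      _ = x ^ 2 * heatPoly a (2 * n) x t / (2 * n + 1) := by ring
      _ ≤ _ := sq_mul_heatPoly_even_div_le ha.le ht n x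
  have ht' : d * (t * heatPoly a (2 * n) x t) ≤ 2 * a * (t * heatPoly a (2 * n) x t) := by
    gcongr; exact min_le_right _ _
  calc d / (2 * n + 2) * (x ^ 2 + t) * heatPoly a (2 * n) x t
      = (d * (x ^ 2 * heatPoly a (2 * n) x t) + d * (t * heatPoly a (2 * n) x t))
          / (2 * n + 2) := by ring
    _ ≤ (x * heatPoly a (2 * n + 1) x t + 2 * a * t * heatPoly a (2 * n) x t)
          / (2 * n + 2) := by gcongr ?_ / _; linarith
    _ = heatPoly a (2 * (n + 1)) x t := by rw [mul_add, heatPoly_add_two]; push_cast; rfl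

theorem exists_pow_le_heatPoly_even (ha : 0 < a) (n : ℕ) : ∃ c > 0, ∀ x t : ℝ, 0 ≤ t →
    c * (x ^ 2 + t) ^ n ≤ heatPoly a (2 * n) x t := by
  induction n with
  | zero => exact ⟨1, one_pos, fun x t _ => by simp [heatPoly_zero]⟩
  | succ n ih =>
    obtain ⟨c, hc, hcn⟩ := ih
    obtain ⟨d, hd, hdn⟩ := exists_mul_heatPoly_even_le ha n
    refine ⟨d * c, by positivity, fun x t ht => ?_⟩
    calc d * c * (x ^ 2 + t) ^ (n + 1) = d * (x ^ 2 + t) * (c * (x ^ 2 + t) ^ n) := by ring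
      _ ≤ d * (x ^ 2 + t) * heatPoly a (2 * n) x t := by gcongr; exact hcn x t ht
      _ ≤ _ := hdn x t ht

theorem exists_gt_heatPoly_pos (m : ℕ) (y t : ℝ) : ∃ X > y, 0 < heatPoly a m X t := by
  have hcont : Continuous fun r : ℝ => heatPoly a m 1 (r ^ 2 * t) :=
    (contDiff_heatPoly m).continuous.comp (f := fun r : ℝ => ((1 : ℝ), r ^ 2 * t)) (by fun_prop)
  have hpos : ∀ᶠ r in 𝓝[>] (0 : ℝ), 0 < heatPoly a m 1 (r ^ 2 * t) := by
    refine (hcont.tendsto 0).eventually (eventually_gt_nhds ?_) |>.filter_mono nhdsWithin_le_nhds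
    rw [zero_pow two_ne_zero, zero_mul, heatPoly_at_zero]
    positivity
  obtain ⟨r, ⟨hr, hry⟩, hr0⟩ := ((hpos.and
    (tendsto_inv_nhdsGT_zero.eventually (eventually_gt_atTop y))).and self_mem_nhdsWithin).exists
  refine ⟨r⁻¹, hry, ?_⟩
  have hscale := heatPoly_homogeneous (a := a) m r r⁻¹ t
  rw [mul_inv_cancel₀ (ne_of_gt hr0)] at hscale
  rw [hscale] at hr
  exact pos_of_mul_pos_right hr (pow_nonneg (le_of_lt hr0) m)

theorem heatPoly_add_two_neg_of_root (ha : 0 < a) {k : ℕ} {y : ℝ}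
    (hroot : heatPoly a (k + 1) y (-1) = 0) (hpos : 0 < heatPoly a k y (-1)) :
    heatPoly a (k + 2) y (-1) < 0 := by
  rw [heatPoly_add_two, hroot]
  exact div_neg_of_neg_of_pos (by nlinarith [mul_pos ha hpos]) (by positivity)

-- The largest roots of successive heat polynomials interlace, by Rolle and the recursion.
theorem exists_largest_root_heatPoly (ha : 0 < a) (k : ℕ) : ∃ y : ℝ, 0 ≤ y ∧
    heatPoly a (k + 1) y (-1) = 0 ∧ (∀ x > y, 0 < heatPoly a (k + 1) x (-1)) ∧
    ∀ x ≥ y, 0 < heatPoly a k x (-1) := by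
  induction k with
  | zero => exact ⟨0, le_rfl, by simp [heatPoly_one], fun x hx => by simpa [heatPoly_one] using hx,
      fun x _ => by simp [heatPoly_zero]⟩
  | succ k ih =>
    obtain ⟨y, hy, hroot, hpos, hk⟩ := ih
    have hneg := heatPoly_add_two_neg_of_root ha hroot (hk y le_rfl)
    have hcont : Continuous fun x => heatPoly a (k + 2) x (-1) :=
      continuous_iff_continuousAt.2 fun x => (hasDerivAt_heatPoly_fst (k + 1) x (-1)).continuousAt
    have hmono : StrictMonoOn (fun x => heatPoly a (k + 2) x (-1)) (Ici y) := by
      refine strictMonoOn_of_deriv_pos (convex_Ici y) hcont.continuousOn fun x hx => ?_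
      rw [interior_Ici] at hx
      rw [(hasDerivAt_heatPoly_fst (k + 1) x (-1)).deriv]
      exact hpos x hx
    obtain ⟨X, hX, hXpos⟩ := exists_gt_heatPoly_pos (a := a) (k + 2) y (-1)
    obtain ⟨y', hy', hz⟩ := intermediate_value_Icc hX.le hcont.continuousOn
      (show (0 : ℝ) ∈ Icc _ _ from ⟨hneg.le, hXpos.le⟩)
    have hyy' : y < y' := lt_of_le_of_ne hy'.1 fun h => by subst h; exact hneg.ne hz
    exact ⟨y', hy.trans hyy'.le, hz, fun x hx => hz ▸ hmono hyy'.le (hyy'.trans hx).le hx,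
      fun x hx => hpos x (hyy'.trans_le hx)⟩

theorem exists_heatPoly_add_two_neg (ha : 0 < a) (k : ℕ) :
    ∃ y : ℝ, 0 ≤ y ∧ heatPoly a (k + 2) y (-1) < 0 := by
  obtain ⟨y, hy, hroot, -, hk⟩ := exists_largest_root_heatPoly ha k
  exact ⟨y, hy, heatPoly_add_two_neg_of_root ha hroot (hk y le_rfl)⟩

end HeatPoly

/-! ### Parabolic Taylor expansion -/

/-- The parabolic distance between two space-time points, for which a time step counts as the
square of a space step. -/
noncomputable def parabolicDist (z₀ z : ℝ × ℝ) : ℝ := |z.1 - z₀.1| + √|z.2 - z₀.2|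

/-- The heat polynomial of degree `m` of `P_t = α P_xx`, centred at `z₀`. -/
noncomputable def heatPolyAt (α : ℝ) (z₀ : ℝ × ℝ) (m : ℕ) (z : ℝ × ℝ) : ℝ :=
  heatPoly α m (z.1 - z₀.1) (z.2 - z₀.2)

section ParabolicOrder

variable {x₀ x₁ T : ℝ} {z₀ z z' : ℝ × ℝ} {e e' : ℕ} {g h : ℝ × ℝ → ℝ}

local notation "S" => spaceTimeRect x₀ x₁ T

theorem parabolicDist_nonneg (z₀ z : ℝ × ℝ) : 0 ≤ parabolicDist z₀ z := by
  unfold parabolicDist; positivity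

theorem abs_fst_le_parabolicDist (z₀ z : ℝ × ℝ) : |z.1 - z₀.1| ≤ parabolicDist z₀ z :=
  le_add_of_nonneg_right (Real.sqrt_nonneg _)

theorem abs_snd_le_parabolicDist_sq (z₀ z : ℝ × ℝ) : |z.2 - z₀.2| ≤ parabolicDist z₀ z ^ 2 :=
  (Real.sqrt_le_left (parabolicDist_nonneg z₀ z)).1 (le_add_of_nonneg_left (abs_nonneg _))

theorem parabolicDist_le_of_abs_le (h₁ : |z.1 - z₀.1| ≤ |z'.1 - z₀.1|)
    (h₂ : |z.2 - z₀.2| ≤ |z'.2 - z₀.2|) : parabolicDist z₀ z ≤ parabolicDist z₀ z' :=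
  add_le_add h₁ (Real.sqrt_le_sqrt h₂)

theorem parabolicDist_pos (h : z ≠ z₀) : 0 < parabolicDist z₀ z := by
  refine (parabolicDist_nonneg z₀ z).lt_of_ne fun h0 => h ?_
  have h₁ := abs_fst_le_parabolicDist z₀ z
  have h₂ := abs_snd_le_parabolicDist_sq z₀ z
  rw [← h0] at h₁ h₂
  exact Prod.ext (sub_eq_zero.1 (abs_nonpos_iff.1 h₁))
    (sub_eq_zero.1 (abs_nonpos_iff.1 (by simpa using h₂)))

theorem continuous_parabolicDist (z₀ : ℝ × ℝ) : Continuous (parabolicDist z₀) := by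
  unfold parabolicDist; fun_prop

theorem isBigO_parabolicDist_pow_of_le (he : e' ≤ e) :
    (parabolicDist z₀ · ^ e) =O[𝓟 S] (parabolicDist z₀ · ^ e') := by
  have hbdd : (parabolicDist z₀ · ^ (e - e')) =O[𝓟 S] fun _ => (1 : ℝ) :=
    ((continuous_parabolicDist z₀).pow _).continuousOn.isBigO_principal
      (isCompact_spaceTimeRect x₀ x₁ T) (by simp)
  simpa only [← pow_add, Nat.sub_add_cancel he, one_mul] using
    hbdd.mul (isBigO_refl (parabolicDist z₀ · ^ e') _)

theorem isBigO_parabolicDist_pow_zero (hg : ContinuousOn g S) :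
    g =O[𝓟 S] (parabolicDist z₀ · ^ 0) := by
  simpa only [pow_zero] using
    hg.isBigO_principal (isCompact_spaceTimeRect x₀ x₁ T) (c := (1 : ℝ)) (by simp)

theorem isBigO_continuousOn_mul (hg : ContinuousOn g S)
    (hh : h =O[𝓟 S] (parabolicDist z₀ · ^ e)) :
    (fun z => g z * h z) =O[𝓟 S] (parabolicDist z₀ · ^ e) := by
  simpa only [pow_zero, one_mul] using (isBigO_parabolicDist_pow_zero (z₀ := z₀) hg).mul hh

theorem isBigO_sub_fst_of_derivX (hz₀ : z₀ ∈ S) (hg : ContDiffOn ℝ ∞ g S)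
    (hgx : derivX S g =O[𝓟 S] (parabolicDist z₀ · ^ e)) :
    (fun z => g z - g (z₀.1, z.2)) =O[𝓟 S] (parabolicDist z₀ · ^ (e + 1)) := by
  obtain ⟨C, hC, hgx⟩ := hgx.exists_nonneg
  refine isBigO_principal.2 ⟨C, fun z hz => ?_⟩
  have hd := parabolicDist_nonneg z₀ z
  have hsub : uIcc z₀.1 z.1 ⊆ Icc x₀ x₁ := uIcc_subset_Icc hz₀.1 hz.1
  have hbound : ∀ y ∈ uIcc z₀.1 z.1, ‖derivX S g (y, z.2)‖ ≤ C * parabolicDist z₀ z ^ e := by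
    intro y hy
    refine (isBigOWith_principal.1 hgx (y, z.2) ⟨hsub hy, hz.2⟩).trans ?_
    rw [Real.norm_of_nonneg (pow_nonneg (parabolicDist_nonneg _ _) _)]
    gcongr
    · exact parabolicDist_nonneg _ _
    · exact parabolicDist_le_of_abs_le (abs_sub_left_of_mem_uIcc hy) le_rfl
  have hmvt := Convex.norm_image_sub_le_of_norm_hasDerivWithin_le
    (fun y hy => (hasDerivWithinAt_derivX hg (x := y) (t := z.2) ⟨hsub hy, hz.2⟩).mono hsub)
    hbound (convex_uIcc _ _) left_mem_uIcc right_mem_uIcc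
  rw [Real.norm_of_nonneg (pow_nonneg hd _), pow_succ, ← mul_assoc]
  exact hmvt.trans (mul_le_mul_of_nonneg_left (abs_fst_le_parabolicDist z₀ z) (by positivity))

theorem isBigO_sub_snd_of_derivT (hz₀ : z₀ ∈ S) (hg : ContDiffOn ℝ ∞ g S)
    (hgt : derivT S g =O[𝓟 S] (parabolicDist z₀ · ^ e)) :
    (fun z => g (z₀.1, z.2) - g z₀) =O[𝓟 S] (parabolicDist z₀ · ^ (e + 2)) := by
  obtain ⟨C, hC, hgt⟩ := hgt.exists_nonneg
  refine isBigO_principal.2 ⟨C, fun z hz => ?_⟩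
  have hd := parabolicDist_nonneg z₀ z
  have hsub : uIcc z₀.2 z.2 ⊆ Icc 0 T := uIcc_subset_Icc hz₀.2 hz.2
  have hbound : ∀ s ∈ uIcc z₀.2 z.2, ‖derivT S g (z₀.1, s)‖ ≤ C * parabolicDist z₀ z ^ e := by
    intro s hs
    refine (isBigOWith_principal.1 hgt (z₀.1, s) ⟨hz₀.1, hsub hs⟩).trans ?_
    rw [Real.norm_of_nonneg (pow_nonneg (parabolicDist_nonneg _ _) _)]
    gcongr
    · exact parabolicDist_nonneg _ _
    · exact parabolicDist_le_of_abs_le (by simp) (abs_sub_left_of_mem_uIcc hs)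
  have hmvt := Convex.norm_image_sub_le_of_norm_hasDerivWithin_le
    (fun s hs => (hasDerivWithinAt_derivT hg (x := z₀.1) (t := s) ⟨hz₀.1, hsub hs⟩).mono hsub)
    hbound (convex_uIcc _ _) left_mem_uIcc right_mem_uIcc
  rw [Real.norm_of_nonneg (pow_nonneg hd _), pow_add, ← mul_assoc]
  exact hmvt.trans (mul_le_mul_of_nonneg_left (abs_snd_le_parabolicDist_sq z₀ z) (by positivity))

theorem isBigO_parabolicDist_of_partials (hz₀ : z₀ ∈ S) (hg : ContDiffOn ℝ ∞ g S)
    (h0 : g z₀ = 0) (hgx : derivX S g =O[𝓟 S] (parabolicDist z₀ · ^ e))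
    (hgt : derivT S g =O[𝓟 S] (parabolicDist z₀ · ^ (e - 1))) :
    g =O[𝓟 S] (parabolicDist z₀ · ^ (e + 1)) := by
  have ht := (isBigO_sub_snd_of_derivT hz₀ hg hgt).trans
    (isBigO_parabolicDist_pow_of_le (e' := e + 1) (by omega))
  simpa [h0] using (isBigO_sub_fst_of_derivX hz₀ hg hgx).add ht

theorem isBigO_parabolicDist_of_eq_zero (hS : UniqueDiffOn ℝ S) (hz₀ : z₀ ∈ S)
    (hg : ContDiffOn ℝ ∞ g S) (h0 : g z₀ = 0) : g =O[𝓟 S] (parabolicDist z₀ · ^ 1) :=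
  isBigO_parabolicDist_of_partials (e := 0) hz₀ hg h0
    (isBigO_parabolicDist_pow_zero (contDiffOn_derivX hS hg).continuousOn)
    (isBigO_parabolicDist_pow_zero (contDiffOn_derivT hS hg).continuousOn)

theorem isBigO_fst_sub (z₀ : ℝ × ℝ) (s : Set (ℝ × ℝ)) :
    (fun z => z.1 - z₀.1) =O[𝓟 s] (parabolicDist z₀ · ^ 1) :=
  .of_norm_le fun z => by
    simpa [abs_of_nonneg (parabolicDist_nonneg z₀ z)] using abs_fst_le_parabolicDist z₀ z

theorem isBigO_snd_sub (z₀ : ℝ × ℝ) (s : Set (ℝ × ℝ)) :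
    (fun z => z.2 - z₀.2) =O[𝓟 s] (parabolicDist z₀ · ^ 2) :=
  .of_norm_le fun z => by simpa using abs_snd_le_parabolicDist_sq z₀ z

theorem isBigO_heatPolyAt (α : ℝ) (z₀ : ℝ × ℝ) (m : ℕ) (s : Set (ℝ × ℝ)) :
    heatPolyAt α z₀ m =O[𝓟 s] (parabolicDist z₀ · ^ m) := by
  induction m using Nat.twoStepInduction with
  | zero => exact .of_norm_le fun z => by simp [heatPolyAt, heatPoly_zero]
  | one => exact (isBigO_fst_sub z₀ s).congr_left fun z => by rw [heatPolyAt, heatPoly_one]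
  | more m h0 h1 =>
    have hX := ((isBigO_fst_sub z₀ s).mul h1).const_mul_left (1 / ((m : ℝ) + 2))
    have hT := ((isBigO_snd_sub z₀ s).mul h0).const_mul_left (2 * α / ((m : ℝ) + 2))
    simp only [← pow_add, show 1 + (m + 1) = m + 2 by ring] at hX
    simp only [← pow_add, add_comm 2 m] at hT
    refine (hX.add hT).congr_left fun z => ?_
    simp only [heatPolyAt, heatPoly_add_two]
    ring

theorem contDiff_heatPolyAt (α : ℝ) (z₀ : ℝ × ℝ) (m : ℕ) : ContDiff ℝ ∞ (heatPolyAt α z₀ m) :=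
  (contDiff_heatPoly m).comp (f := fun z : ℝ × ℝ => (z.1 - z₀.1, z.2 - z₀.2)) (by fun_prop)

theorem derivX_const_mul_heatPolyAt (hx : x₀ < x₁) (κ α : ℝ) (m : ℕ) (hz : z ∈ S) :
    derivX S (fun z => κ * heatPolyAt α z₀ (m + 1) z) z = κ * heatPolyAt α z₀ m z :=
  derivX_eq_of_hasDerivWithinAt hx (contDiff_const.mul (contDiff_heatPolyAt _ _ _)).contDiffOn hz
    (((hasDerivAt_heatPoly_fst (a := α) m (z.1 - z₀.1) (z.2 - z₀.2)).comp_sub_const z.1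
      z₀.1).hasDerivWithinAt.const_mul κ)

theorem derivT_const_mul_heatPolyAt (hT : 0 < T) (κ α : ℝ) (m : ℕ) (hz : z ∈ S) :
    derivT S (fun z => κ * heatPolyAt α z₀ (m + 2) z) z = κ * (α * heatPolyAt α z₀ m z) :=
  derivT_eq_of_hasDerivWithinAt hT (contDiff_const.mul (contDiff_heatPolyAt _ _ _)).contDiffOn hz
    (((hasDerivAt_heatPoly_snd (a := α) m (z.1 - z₀.1) (z.2 - z₀.2)).comp_sub_const z.2
      z₀.2).hasDerivWithinAt.const_mul κ)

end ParabolicOrder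

/-- The functions which agree on `s` with a combination, with coefficients smooth on `s`, of the
spatial derivatives of `w` of order less than `n`. -/
inductive SpatialDerivComb (s : Set (ℝ × ℝ)) (w : ℝ × ℝ → ℝ) (n : ℕ) : (ℝ × ℝ → ℝ) → Prop
  | term {c : ℝ × ℝ → ℝ} (hc : ContDiffOn ℝ ∞ c s) {i : ℕ} (hi : i < n) :
      SpatialDerivComb s w n (fun z => c z * (derivX s)^[i] w z)
  | add {g h : ℝ × ℝ → ℝ} (hg : SpatialDerivComb s w n g) (hh : SpatialDerivComb s w n h) :
      SpatialDerivComb s w n (fun z => g z + h z)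
  | congr {g h : ℝ × ℝ → ℝ} (hg : SpatialDerivComb s w n g) (hgh : EqOn h g s) :
      SpatialDerivComb s w n h

namespace SpatialDerivComb

variable {s : Set (ℝ × ℝ)} {w g : ℝ × ℝ → ℝ} {n : ℕ}

theorem contDiffOn (hs : UniqueDiffOn ℝ s) (hw : ContDiffOn ℝ ∞ w s)
    (hg : SpatialDerivComb s w n g) : ContDiffOn ℝ ∞ g s := by
  induction hg with
  | term hc _ => exact hc.mul (contDiffOn_derivX_iterate hs hw _)
  | add _ _ ihg ihh => exact ihg.add ihh
  | congr _ hgh ihg => exact ihg.congr hgh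

theorem derivX (hs : UniqueDiffOn ℝ s) (hw : ContDiffOn ℝ ∞ w s)
    (hg : SpatialDerivComb s w n g) : SpatialDerivComb s w (n + 1) (derivX s g) := by
  induction hg with
  | term hc hi =>
    refine .congr (.add (.term (contDiffOn_derivX hs hc) (hi.trans (Nat.lt_succ_self n)))
      (.term hc (Nat.succ_lt_succ hi))) fun z hz => ?_
    rw [Function.iterate_succ_apply']
    exact derivX_mul hs hc (contDiffOn_derivX_iterate hs hw _) hz
  | add hg hh ihg ihh =>
    exact (ihg.add ihh).congr fun z hz =>
      derivX_add hs (hg.contDiffOn hs hw) (hh.contDiffOn hs hw) hz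
  | congr _ hgh ihg => exact ihg.congr (derivX_congr hgh)

theorem isBigO {x₀ x₁ T : ℝ} {z₀ : ℝ × ℝ} {e : ℕ}
    (hg : SpatialDerivComb (spaceTimeRect x₀ x₁ T) w n g)
    (hw : ∀ i < n, (_root_.derivX (spaceTimeRect x₀ x₁ T))^[i] w
      =O[𝓟 (spaceTimeRect x₀ x₁ T)] (parabolicDist z₀ · ^ e)) :
    g =O[𝓟 (spaceTimeRect x₀ x₁ T)] (parabolicDist z₀ · ^ e) := by
  induction hg with
  | term hc hi => exact isBigO_continuousOn_mul hc.continuousOn (hw _ hi)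
  | add _ _ ihg ihh => exact ihg.add ihh
  | congr _ hgh ihg => exact ihg.congr' hgh.symm.eventuallyEq (EventuallyEq.refl _ _)

end SpatialDerivComb

/-- `w` is a smooth solution on the space-time rectangle of the linear parabolic equation
`w_t = a w_xx + b w_x + c w` with smooth coefficients and `a > 0`. -/
structure LinearParabolic (x₀ x₁ T : ℝ) (w a b c : ℝ × ℝ → ℝ) : Prop where
  left_lt_right : x₀ < x₁
  time_pos : 0 < T
  contDiffOn_sol : ContDiffOn ℝ ∞ w (spaceTimeRect x₀ x₁ T)
  contDiffOn_a : ContDiffOn ℝ ∞ a (spaceTimeRect x₀ x₁ T)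
  contDiffOn_b : ContDiffOn ℝ ∞ b (spaceTimeRect x₀ x₁ T)
  contDiffOn_c : ContDiffOn ℝ ∞ c (spaceTimeRect x₀ x₁ T)
  a_pos : ∀ z ∈ spaceTimeRect x₀ x₁ T, 0 < a z
  eqn : ∀ z ∈ spaceTimeRect x₀ x₁ T, derivT (spaceTimeRect x₀ x₁ T) w z =
    a z * derivX (spaceTimeRect x₀ x₁ T) (derivX (spaceTimeRect x₀ x₁ T) w) z
      + b z * derivX (spaceTimeRect x₀ x₁ T) w z + c z * w z

namespace LinearParabolic

variable {x₀ x₁ T : ℝ} {w a b c : ℝ × ℝ → ℝ}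

local notation "S" => spaceTimeRect x₀ x₁ T
local notation "∂ₓ" => derivX S

theorem uniqueDiffOn (H : LinearParabolic x₀ x₁ T w a b c) : UniqueDiffOn ℝ S :=
  uniqueDiffOn_spaceTimeRect H.left_lt_right H.time_pos

theorem contDiffOn_iterate (H : LinearParabolic x₀ x₁ T w a b c) (j : ℕ) :
    ContDiffOn ℝ ∞ (∂ₓ^[j] w) S :=
  contDiffOn_derivX_iterate H.uniqueDiffOn H.contDiffOn_sol j

theorem exists_derivT_iterate_eq (H : LinearParabolic x₀ x₁ T w a b c) (j : ℕ) :
    ∃ g, SpatialDerivComb S w (j + 2) g ∧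
      ∀ z ∈ S, derivT S (∂ₓ^[j] w) z = a z * ∂ₓ^[j + 2] w z + g z := by
  have hS := H.uniqueDiffOn
  induction j with
  | zero =>
    refine ⟨_, .add (.term H.contDiffOn_b one_lt_two) (.term H.contDiffOn_c two_pos),
      fun z hz => ?_⟩
    rw [Function.iterate_zero, id, H.eqn z hz, add_assoc]
    rfl
  | succ j ih =>
    obtain ⟨g, hg, h⟩ := ih
    have hj2 := H.contDiffOn_iterate (j + 2)
    refine ⟨_, .add (.term (contDiffOn_derivX hS H.contDiffOn_a) (Nat.lt_succ_self (j + 2)))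
      (hg.derivX hS H.contDiffOn_sol), fun z hz => ?_⟩
    rw [Function.iterate_succ_apply',
      ← derivX_derivT_comm hS (H.contDiffOn_iterate j) hz
        (by rwa [closure_interior_spaceTimeRect H.left_lt_right H.time_pos]),
      derivX_congr h hz,
      derivX_add hS (H.contDiffOn_a.mul hj2) (hg.contDiffOn hS H.contDiffOn_sol) hz,
      derivX_mul hS H.contDiffOn_a hj2 hz, show j + 1 + 2 = (j + 2) + 1 by ring,
      Function.iterate_succ_apply' _ (j + 2)]
    ring

variable {z₀ : ℝ × ℝ} {k : ℕ}

-- Induction on `n`: each use of the equation gains one parabolic order.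
theorem isBigO_iterate_min (H : LinearParabolic x₀ x₁ T w a b c) (hz₀ : z₀ ∈ S)
    (hk : ∀ i < k, ∂ₓ^[i] w z₀ = 0) (n i : ℕ) :
    ∂ₓ^[i] w =O[𝓟 S] (parabolicDist z₀ · ^ min n (k - i)) := by
  induction n generalizing i with
  | zero =>
    rw [Nat.zero_min]
    exact isBigO_parabolicDist_pow_zero (H.contDiffOn_iterate i).continuousOn
  | succ n ih =>
    rcases le_or_gt k i with hi | hi
    · rw [Nat.sub_eq_zero_of_le hi, Nat.min_zero]
      exact isBigO_parabolicDist_pow_zero (H.contDiffOn_iterate i).continuousOn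
    · rw [show min (n + 1) (k - i) = min n (k - (i + 1)) + 1 by omega]
      obtain ⟨g, hg, hpde⟩ := H.exists_derivT_iterate_eq i
      refine isBigO_parabolicDist_of_partials hz₀ (H.contDiffOn_iterate i) (hk i hi) ?_ ?_
      · rw [← Function.iterate_succ_apply' ∂ₓ]; exact ih (i + 1)
      · have hlead := isBigO_continuousOn_mul H.contDiffOn_a.continuousOn (ih (i + 2))
        refine IsBigO.congr' (.add (hlead.trans (isBigO_parabolicDist_pow_of_le (by omega)))
          (hg.isBigO fun l _ => (ih l).trans (isBigO_parabolicDist_pow_of_le (by omega))))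
          (EqOn.eventuallyEq fun z hz => (hpde z hz).symm) (EventuallyEq.refl _ _)

theorem isBigO_iterate (H : LinearParabolic x₀ x₁ T w a b c) (hz₀ : z₀ ∈ S)
    (hk : ∀ i < k, ∂ₓ^[i] w z₀ = 0) (i : ℕ) :
    ∂ₓ^[i] w =O[𝓟 S] (parabolicDist z₀ · ^ (k - i)) := by
  simpa using H.isBigO_iterate_min hz₀ hk k i

theorem derivX_iterate_sub_heatPolyAt (H : LinearParabolic x₀ x₁ T w a b c) (κ α : ℝ) (j m : ℕ) :
    EqOn (∂ₓ fun z => ∂ₓ^[j] w z - κ * heatPolyAt α z₀ (m + 1) z)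
      (fun z => ∂ₓ^[j + 1] w z - κ * heatPolyAt α z₀ m z) S := fun z hz => by
  simp only [derivX_sub H.uniqueDiffOn (H.contDiffOn_iterate j)
      (contDiff_const.mul (contDiff_heatPolyAt α z₀ (m + 1))).contDiffOn hz,
    derivX_const_mul_heatPolyAt H.left_lt_right κ α m hz, Function.iterate_succ_apply' ∂ₓ]

-- `a w_xx - a(z₀) κ P = a (w_xx - κ P) + κ (a - a(z₀)) P`, and each term has order `m + 1`.
theorem isBigO_derivT_iterate_sub_heatPolyAt (H : LinearParabolic x₀ x₁ T w a b c) (hz₀ : z₀ ∈ S)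
    (κ : ℝ) (j m : ℕ) (hk : ∀ i < j + (m + 2), ∂ₓ^[i] w z₀ = 0)
    (ih : (fun z => ∂ₓ^[j + 2] w z - κ * heatPolyAt (a z₀) z₀ m z)
      =O[𝓟 S] (parabolicDist z₀ · ^ (m + 1))) :
    derivT S (fun z => ∂ₓ^[j] w z - κ * heatPolyAt (a z₀) z₀ (m + 2) z)
      =O[𝓟 S] (parabolicDist z₀ · ^ (m + 1)) := by
  obtain ⟨g, hg, hpde⟩ := H.exists_derivT_iterate_eq j
  have ha : (fun z => a z - a z₀) =O[𝓟 S] (parabolicDist z₀ · ^ 1) :=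
    isBigO_parabolicDist_of_eq_zero H.uniqueDiffOn hz₀ (H.contDiffOn_a.sub contDiffOn_const)
      (sub_self _)
  have hlead := isBigO_continuousOn_mul H.contDiffOn_a.continuousOn ih
  have hfrozen := (ha.mul (isBigO_heatPolyAt (a z₀) z₀ m S)).const_mul_left κ
  simp only [← pow_add, add_comm 1 m] at hfrozen
  have hlower : g =O[𝓟 S] (parabolicDist z₀ · ^ (m + 1)) := hg.isBigO fun l _ =>
    (H.isBigO_iterate hz₀ hk l).trans (isBigO_parabolicDist_pow_of_le (by omega))
  refine ((hlead.add hfrozen).add hlower).congr' (EqOn.eventuallyEq fun z hz => ?_)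
    (EventuallyEq.refl _ _)
  rw [derivT_sub H.uniqueDiffOn (H.contDiffOn_iterate j)
      (contDiff_const.mul (contDiff_heatPolyAt (a z₀) z₀ (m + 2))).contDiffOn hz,
    derivT_const_mul_heatPolyAt H.time_pos κ (a z₀) m hz, hpde z hz]
  ring

-- Induction on `m`: the remainder is integrated back from its two partial derivatives.
theorem isBigO_iterate_sub_heatPolyAt (H : LinearParabolic x₀ x₁ T w a b c) (hz₀ : z₀ ∈ S)
    (j m : ℕ) (hk : ∀ i < j + m, ∂ₓ^[i] w z₀ = 0) :
    (fun z => ∂ₓ^[j] w z - ∂ₓ^[j + m] w z₀ * heatPolyAt (a z₀) z₀ m z)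
      =O[𝓟 S] (parabolicDist z₀ · ^ (m + 1)) := by
  have hsmooth : ∀ (κ : ℝ) (j m : ℕ),
      ContDiffOn ℝ ∞ (fun z => ∂ₓ^[j] w z - κ * heatPolyAt (a z₀) z₀ m z) S := fun κ j m =>
    (H.contDiffOn_iterate j).sub (contDiff_const.mul (contDiff_heatPolyAt _ _ _)).contDiffOn
  have hzero : ∀ m κ, ∂ₓ^[j] w z₀ = 0 →
      ∂ₓ^[j] w z₀ - κ * heatPolyAt (a z₀) z₀ (m + 1) z₀ = 0 := fun m κ h => by
    simp [h, heatPolyAt, heatPoly_at_zero]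
  induction m using Nat.twoStepInduction generalizing j with
  | zero =>
    exact isBigO_parabolicDist_of_eq_zero H.uniqueDiffOn hz₀ (hsmooth _ _ _)
      (by simp [heatPolyAt, heatPoly_zero])
  | one =>
    refine isBigO_parabolicDist_of_partials (e := 1) hz₀ (hsmooth _ _ _)
      (hzero 0 _ (hk j (by omega))) ?_
      (isBigO_parabolicDist_pow_zero
        (contDiffOn_derivT H.uniqueDiffOn (hsmooth _ _ _)).continuousOn)
    refine IsBigO.congr' ?_ (H.derivX_iterate_sub_heatPolyAt _ _ j 0).symm.eventuallyEq
      (EventuallyEq.refl _ _)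
    exact isBigO_parabolicDist_of_eq_zero H.uniqueDiffOn hz₀ (hsmooth _ _ _)
      (by simp [heatPolyAt, heatPoly_zero])
  | more m ih0 ih1 =>
    have hx := ih1 (j + 1) (fun i hi => hk i (by omega))
      fun m κ h => by simp [h, heatPolyAt, heatPoly_at_zero]
    have ht := ih0 (j + 2) (fun i hi => hk i (by omega))
      fun m κ h => by simp [h, heatPolyAt, heatPoly_at_zero]
    rw [show j + 1 + (m + 1) = j + (m + 2) by ring] at hx
    rw [show j + 2 + m = j + (m + 2) by ring] at ht
    exact isBigO_parabolicDist_of_partials (e := m + 2) hz₀ (hsmooth _ _ _)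
      (hzero (m + 1) _ (hk j (by omega)))
      (hx.congr' (H.derivX_iterate_sub_heatPolyAt _ _ j (m + 1)).symm.eventuallyEq
        (EventuallyEq.refl _ _))
      (H.isBigO_derivT_iterate_sub_heatPolyAt hz₀ _ j m hk ht)

end LinearParabolic

section LeadingTerm

variable {s : Set (ℝ × ℝ)} {z₀ z : ℝ × ℝ} {g : ℝ × ℝ → ℝ} {α κ : ℝ}

theorem parabolicDist_sq_le (h : z₀.2 ≤ z.2) :
    parabolicDist z₀ z ^ 2 ≤ 2 * ((z.1 - z₀.1) ^ 2 + (z.2 - z₀.2)) := by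
  have hτ : 0 ≤ z.2 - z₀.2 := sub_nonneg.2 h
  rw [parabolicDist, abs_of_nonneg hτ]
  nlinarith [Real.sq_sqrt hτ, sq_abs (z.1 - z₀.1), sq_nonneg (|z.1 - z₀.1| - √(z.2 - z₀.2))]

theorem tendsto_parabolicDist (z₀ : ℝ × ℝ) : Tendsto (parabolicDist z₀) (𝓝 z₀) (𝓝 0) :=
  (continuous_parabolicDist z₀).tendsto' _ _ (by simp [parabolicDist])

theorem parabolicDist_parabola {r : ℝ} (hr : 0 ≤ r) (X τ : ℝ) :
    parabolicDist z₀ (z₀.1 + r * X, z₀.2 + r ^ 2 * τ) = r * (|X| + √|τ|) := by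
  simp only [parabolicDist, add_sub_cancel_left, abs_mul, abs_of_nonneg hr, abs_pow]
  rw [Real.sqrt_mul (by positivity), Real.sqrt_sq hr, ← mul_add]

theorem mul_pos_of_abs_sub_lt {p q : ℝ} (h : |q - p| < |p|) : 0 < p * q := by
  have hsq := sq_lt_sq.2 h
  nlinarith [sq_nonneg q]

theorem eventually_pos_of_even_order (hα : 0 < α) (hκ : κ ≠ 0) (n : ℕ)
    (h : (fun z => g z - κ * heatPolyAt α z₀ (2 * n) z)
      =O[𝓟 s] (parabolicDist z₀ · ^ (2 * n + 1))) :
    ∀ᶠ z in 𝓝[s ∩ {z | z₀.2 ≤ z.2}] z₀, z ≠ z₀ → 0 < κ * g z := by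
  obtain ⟨C, hC⟩ := h.bound
  obtain ⟨d, hd, hlow⟩ := exists_pow_le_heatPoly_even hα n
  have hsmall : ∀ᶠ z in 𝓝 z₀, C * parabolicDist z₀ z < |κ| * (d / 2 ^ n) := by
    have hlim := (tendsto_parabolicDist z₀).const_mul C
    rw [mul_zero] at hlim
    exact hlim.eventually_lt_const (by positivity)
  filter_upwards [mem_nhdsWithin_of_mem_nhds hsmall, self_mem_nhdsWithin] with z hz hzs hne
  have hσ : 0 < parabolicDist z₀ z := parabolicDist_pos hne
  have hP : d / 2 ^ n * parabolicDist z₀ z ^ (2 * n) ≤ heatPolyAt α z₀ (2 * n) z := calc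
    _ ≤ d / 2 ^ n * (2 * ((z.1 - z₀.1) ^ 2 + (z.2 - z₀.2))) ^ n := by
        rw [pow_mul]
        gcongr
        exact parabolicDist_sq_le hzs.2
    _ = d * ((z.1 - z₀.1) ^ 2 + (z.2 - z₀.2)) ^ n := by
        rw [mul_pow, ← mul_assoc, div_mul_cancel₀ _ (by positivity)]
    _ ≤ _ := hlow _ _ (sub_nonneg.2 hzs.2)
  have hP0 : 0 < heatPolyAt α z₀ (2 * n) z := lt_of_lt_of_le (by positivity) hP
  have hrem : |g z - κ * heatPolyAt α z₀ (2 * n) z| < |κ * heatPolyAt α z₀ (2 * n) z| := calc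
    _ ≤ C * parabolicDist z₀ z * parabolicDist z₀ z ^ (2 * n) := by
        simpa [pow_succ', mul_assoc, abs_of_pos hσ] using hC hzs.1
    _ < |κ| * (d / 2 ^ n) * parabolicDist z₀ z ^ (2 * n) := by gcongr
    _ ≤ |κ * heatPolyAt α z₀ (2 * n) z| := by
        rw [abs_mul, abs_of_pos hP0, mul_assoc]
        gcongr
  have hpos := mul_pos_of_abs_sub_lt hrem
  rw [mul_right_comm] at hpos
  exact pos_of_mul_pos_left hpos hP0.le

theorem eventually_pos_on_parabola (hκ : κ ≠ 0) {k : ℕ} {X τ : ℝ} (hP : heatPoly α k X τ ≠ 0)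
    (h : (fun z => g z - κ * heatPolyAt α z₀ k z) =O[𝓟 s] (parabolicDist z₀ · ^ (k + 1))) :
    ∀ᶠ r in 𝓝[>] 0, (z₀.1 + r * X, z₀.2 + r ^ 2 * τ) ∈ s →
      0 < κ * heatPoly α k X τ * g (z₀.1 + r * X, z₀.2 + r ^ 2 * τ) := by
  obtain ⟨C, hC⟩ := h.bound
  have hsmall : ∀ᶠ r in 𝓝[>] (0 : ℝ), C * (|X| + √|τ|) ^ (k + 1) * r < |κ * heatPoly α k X τ| := by
    have hlim : Tendsto (fun r : ℝ => C * (|X| + √|τ|) ^ (k + 1) * r) (𝓝 0) (𝓝 0) :=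
      (continuous_const.mul continuous_id).tendsto' _ _ (mul_zero _)
    exact (hlim.mono_left nhdsWithin_le_nhds).eventually_lt_const
      (abs_pos.2 (mul_ne_zero hκ hP))
  filter_upwards [hsmall, self_mem_nhdsWithin] with r hr (hr0 : 0 < r) hz
  have hrem : |g (z₀.1 + r * X, z₀.2 + r ^ 2 * τ) - r ^ k * (κ * heatPoly α k X τ)|
      < |r ^ k * (κ * heatPoly α k X τ)| := calc
    _ ≤ C * (r * (|X| + √|τ|)) ^ (k + 1) := by
        have hbound := eventually_principal.1 hC _ hz
        rw [parabolicDist_parabola hr0.le, heatPolyAt, add_sub_cancel_left, add_sub_cancel_left,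
          heatPoly_homogeneous, mul_left_comm, Real.norm_eq_abs,
          Real.norm_of_nonneg (by positivity)] at hbound
        exact hbound
    _ = r ^ k * (C * (|X| + √|τ|) ^ (k + 1) * r) := by rw [mul_pow]; ring
    _ < r ^ k * |κ * heatPoly α k X τ| := by gcongr
    _ = _ := by rw [abs_mul (r ^ k), abs_of_pos (pow_pos hr0 k)]
  have hpos := mul_pos_of_abs_sub_lt hrem
  rw [mul_assoc] at hpos
  exact pos_of_mul_pos_right hpos (by positivity)

end LeadingTerm

/-! ### Zeros before and after a zero of finite order -/

section RealZeros

theorem exists_zero_of_mul_mul_neg {f : ℝ → ℝ} {u v κ : ℝ} (huv : u ≤ v)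
    (hf : ContinuousOn f (Icc u v)) (h : κ * f u * (κ * f v) < 0) : ∃ x ∈ Ioo u v, f x = 0 := by
  have h' : f u * f v < 0 := by nlinarith [mul_self_nonneg κ]
  rcases mul_neg_iff.1 h' with ⟨hu, hv⟩ | ⟨hu, hv⟩
  · exact intermediate_value_Ioo' huv hf ⟨hv, hu⟩
  · exact intermediate_value_Ioo huv hf ⟨hu, hv⟩

-- By Rolle's theorem, two zeros enclose `p`; so do then one of them and `p`.
theorem subsingleton_zeros_of_deriv_ne_zero {I : Set ℝ} (hI : I.OrdConnected) {f : ℝ → ℝ} {p : ℝ}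
    (hf : ContinuousOn f I) (hf' : ∀ x ∈ interior I, deriv f x = 0 → x = p ∧ f p = 0) :
    {x ∈ I | f x = 0}.Subsingleton := by
  have rolle : ∀ u ∈ I, ∀ v ∈ I, u < v → f u = 0 → f v = 0 → p ∈ Ioo u v ∧ f p = 0 := by
    intro u hu v hv huv hfu hfv
    have hsub : Icc u v ⊆ I := hI.out hu hv
    obtain ⟨ξ, hξ, hξ0⟩ := exists_deriv_eq_zero huv (hf.mono hsub) (hfu.trans hfv.symm)
    obtain ⟨rfl, hp⟩ := hf' ξ (interior_mono hsub (by rwa [interior_Icc])) hξ0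
    exact ⟨hξ, hp⟩
  have not_lt_zeros : ∀ u ∈ {x ∈ I | f x = 0}, ∀ v ∈ {x ∈ I | f x = 0}, ¬ u < v := by
    rintro u ⟨hu, hfu⟩ v ⟨hv, hfv⟩ huv
    obtain ⟨hpuv, hfp⟩ := rolle u hu v hv huv hfu hfv
    exact (rolle u hu p (hI.out hu hv (Ioo_subset_Icc_self hpuv)) hpuv.1 hfu hfp).1.2.false
  exact fun u hu v hv => le_antisymm (not_lt.1 (not_lt_zeros v hv u hu))
    (not_lt.1 (not_lt_zeros u hu v hv))

theorem exists_forall_ball_of_eventually_nhdsWithin_prod {A B : Set ℝ} {p : ℝ × ℝ → Prop}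
    {z₀ : ℝ × ℝ} (h : ∀ᶠ z in 𝓝[A ×ˢ B] z₀, p z) :
    ∃ ρ > 0, ∀ᶠ t in 𝓝[B] z₀.2, ∀ x ∈ A ∩ Metric.ball z₀.1 ρ, p (x, t) := by
  rw [show z₀ = (z₀.1, z₀.2) from rfl, nhdsWithin_prod_eq, eventually_prod_iff] at h
  obtain ⟨pA, hA, pB, hB, hp⟩ := h
  obtain ⟨ρ, hρ, hsub⟩ := Metric.mem_nhdsWithin_iff.1 hA
  exact ⟨ρ, hρ, hB.mono fun t ht x hx => hp (hsub hx.symm) ht⟩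

end RealZeros

/-- The zero set in space at time `t`. -/
def zerosAt (x₀ x₁ : ℝ) (w : ℝ × ℝ → ℝ) (t : ℝ) : Set ℝ := {x ∈ Icc x₀ x₁ | w (x, t) = 0}

namespace LinearParabolic

variable {x₀ x₁ T : ℝ} {w a b c : ℝ × ℝ → ℝ} {z₀ : ℝ × ℝ} {k : ℕ}

local notation "S" => spaceTimeRect x₀ x₁ T
local notation "∂ₓ" => derivX S
local notation "Z" => zerosAt x₀ x₁ w

-- If the order is even the sign of `w`, and if it is odd that of `w_x`, is determined after `z₀`.
theorem exists_eventually_subsingleton_after (H : LinearParabolic x₀ x₁ T w a b c) (hz₀ : z₀ ∈ S)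
    (hk : ∀ i < k, ∂ₓ^[i] w z₀ = 0) (hκ : ∂ₓ^[k] w z₀ ≠ 0) :
    ∃ ρ > 0, ∀ᶠ t in 𝓝[Icc z₀.2 T] z₀.2, (Z t ∩ Metric.ball z₀.1 ρ).Subsingleton := by
  have hsub : Icc x₀ x₁ ×ˢ Icc z₀.2 T ⊆ S ∩ {z | z₀.2 ≤ z.2} := fun z hz =>
    ⟨⟨hz.1, hz₀.2.1.trans hz.2.1, hz.2.2⟩, hz.2.1⟩
  obtain ⟨n, rfl | rfl⟩ := Nat.even_or_odd' k
  · obtain ⟨ρ, hρ, hev⟩ := exists_forall_ball_of_eventually_nhdsWithin_prod <|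
      (eventually_pos_of_even_order (H.a_pos z₀ hz₀) hκ n (by
        simpa using H.isBigO_iterate_sub_heatPolyAt hz₀ 0 (2 * n) (by simpa using hk))).filter_mono
      (nhdsWithin_mono z₀ hsub)
    refine ⟨ρ, hρ, hev.mono fun t ht => subsingleton_of_subset_singleton (a := z₀.1) ?_⟩
    rintro x ⟨⟨hx, hwx⟩, hxρ⟩
    by_contra hne
    have hpos := ht x ⟨hx, hxρ⟩ fun h => hne (congrArg Prod.fst h)
    simp [hwx] at hpos
  · obtain ⟨ρ, hρ, hev⟩ := exists_forall_ball_of_eventually_nhdsWithin_prod <|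
      (eventually_pos_of_even_order (H.a_pos z₀ hz₀) hκ n (by
        simpa [add_comm 1] using H.isBigO_iterate_sub_heatPolyAt hz₀ 1 (2 * n)
          (by simpa [add_comm 1] using hk))).filter_mono (nhdsWithin_mono z₀ hsub)
    refine ⟨ρ, hρ, (hev.and self_mem_nhdsWithin).mono fun t ⟨ht, htT⟩ => ?_⟩
    have htS : t ∈ Icc 0 T := ⟨hz₀.2.1.trans htT.1, htT.2⟩
    have hslice := continuousOn_timeSlice H.contDiffOn_sol.continuousOn htS
    refine (subsingleton_zeros_of_deriv_ne_zero (I := Icc x₀ x₁ ∩ Metric.ball z₀.1 ρ) (p := z₀.1)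
      (ordConnected_Icc.inter (by rw [Real.ball_eq_Ioo]; exact ordConnected_Ioo))
      (hslice.mono inter_subset_left) fun x hx hdx => ?_).anti fun x hx => ⟨⟨hx.1.1, hx.2⟩, hx.1.2⟩
    have hxI := interior_subset hx
    have hderiv := (hasDerivWithinAt_derivX H.contDiffOn_sol ⟨hxI.1, htS⟩).hasDerivAt
      (mem_interior_iff_mem_nhds.1 (interior_mono inter_subset_left hx))
    have hz : (x, t) = z₀ := by
      by_contra hne
      have hpos := ht x hxI hne
      simp [hderiv.deriv.symm.trans hdx] at hpos
    subst hz
    exact ⟨rfl, hk 0 (by omega)⟩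

theorem eventually_sign_at_sides (H : LinearParabolic x₀ x₁ T w a b c)
    (hx : z₀.1 ∈ Ioo x₀ x₁) (ht : z₀.2 ∈ Ioc 0 T) (hk : ∀ i < k, ∂ₓ^[i] w z₀ = 0)
    (hκ : ∂ₓ^[k] w z₀ ≠ 0) :
    ∀ᶠ ε in 𝓝[>] 0, ∀ᶠ t in 𝓝[<] z₀.2,
      0 < ∂ₓ^[k] w z₀ * w (z₀.1 + ε, t) ∧ 0 < (-1) ^ k * ∂ₓ^[k] w z₀ * w (z₀.1 - ε, t) := by
  have hE : (fun z => w z - ∂ₓ^[k] w z₀ * heatPolyAt (a z₀) z₀ k z)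
      =O[𝓟 S] (parabolicDist z₀ · ^ (k + 1)) := by
    simpa using H.isBigO_iterate_sub_heatPolyAt ⟨Ioo_subset_Icc_self hx, Ioc_subset_Icc_self ht⟩
      0 k (by simpa using hk)
  have hright := eventually_pos_on_parabola hκ (X := 1) (τ := 0)
    (by rw [heatPoly_at_zero]; positivity) hE
  have hleft := eventually_pos_on_parabola hκ (X := -1) (τ := 0)
    (by rw [heatPoly_at_zero]; positivity) hE
  have hnear : ∀ X : ℝ, ∀ᶠ ε in 𝓝[>] (0 : ℝ), z₀.1 + ε * X ∈ Icc x₀ x₁ := fun X =>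
    ((by fun_prop : Continuous fun ε : ℝ => z₀.1 + ε * X).tendsto' 0 z₀.1 (by simp)).mono_left
      nhdsWithin_le_nhds |>.eventually (Icc_mem_nhds hx.1 hx.2)
  have hpersist : ∀ (c' : ℝ), ∀ x ∈ Icc x₀ x₁, 0 < c' * w (x, z₀.2) →
      ∀ᶠ t in 𝓝[<] z₀.2, 0 < c' * w (x, t) := fun c' x hx' hpos => by
    have hcont := (continuousOn_section (g := fun x t => w (x, t))
      H.contDiffOn_sol.continuousOn hx').continuousWithinAt (Ioc_subset_Icc_self ht)
    exact ((hcont.mono_of_mem_nhdsWithin (mem_of_superset (Ioo_mem_nhdsLT ht.1)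
      (Ioo_subset_Icc_self.trans (Icc_subset_Icc_right ht.2)))).const_mul c').eventually
      (eventually_gt_nhds hpos)
  filter_upwards [hright, hleft, hnear 1, hnear (-1)] with ε hr hl hxr hxl
  simp only [mul_zero, add_zero, heatPoly_at_zero] at hr hl
  have hr' := hr ⟨hxr, Ioc_subset_Icc_self ht⟩
  have hl' := hl ⟨hxl, Ioc_subset_Icc_self ht⟩
  simp only [mul_one, mul_neg, ← sub_eq_add_neg, one_pow] at hr' hl' hxr hxl
  refine (hpersist _ _ hxr ?_).and (hpersist _ _ hxl ?_)
  · rw [mul_right_comm] at hr'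
    exact pos_of_mul_pos_left hr' (by positivity)
  · rw [← mul_div_assoc, div_mul_eq_mul_div, mul_comm (∂ₓ^[k] w z₀)] at hl'
    exact (div_pos_iff_of_pos_right (by positivity)).1 hl'

theorem exists_eventually_sign_on_parabola (H : LinearParabolic x₀ x₁ T w a b c)
    (hx : z₀.1 ∈ Ioo x₀ x₁) (ht : z₀.2 ∈ Ioc 0 T) (hk₂ : 2 ≤ k)
    (hk : ∀ i < k, ∂ₓ^[i] w z₀ = 0) (hκ : ∂ₓ^[k] w z₀ ≠ 0) :
    ∃ y, 0 ≤ y ∧ ∀ᶠ t in 𝓝[<] z₀.2, ∂ₓ^[k] w z₀ * w (z₀.1 + √(z₀.2 - t) * y, t) < 0 ∧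
      (-1) ^ k * ∂ₓ^[k] w z₀ * w (z₀.1 - √(z₀.2 - t) * y, t) < 0 := by
  have hz₀ : z₀ ∈ S := ⟨Ioo_subset_Icc_self hx, Ioc_subset_Icc_self ht⟩
  have hE : (fun z => w z - ∂ₓ^[k] w z₀ * heatPolyAt (a z₀) z₀ k z)
      =O[𝓟 S] (parabolicDist z₀ · ^ (k + 1)) := by
    simpa using H.isBigO_iterate_sub_heatPolyAt hz₀ 0 k (by simpa using hk)
  obtain ⟨y, hy, hP⟩ : ∃ y, 0 ≤ y ∧ heatPoly (a z₀) k y (-1) < 0 := by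
    simpa [Nat.sub_add_cancel hk₂] using exists_heatPoly_add_two_neg (H.a_pos z₀ hz₀) (k - 2)
  refine ⟨y, hy, ?_⟩
  have hsqrt : Tendsto (fun t => √(z₀.2 - t)) (𝓝[<] z₀.2) (𝓝[>] 0) :=
    tendsto_nhdsWithin_iff.2 ⟨(Continuous.tendsto' (by fun_prop) _ _ (by simp)).mono_left
      nhdsWithin_le_nhds, eventually_mem_nhdsWithin.mono fun t ht =>
        Real.sqrt_pos.2 (sub_pos.2 ht)⟩
  have hright := hsqrt.eventually (eventually_pos_on_parabola hκ hP.ne hE)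
  have hleft := hsqrt.eventually (eventually_pos_on_parabola hκ (X := -y)
    (by rw [heatPoly_neg]; exact mul_ne_zero (by positivity) hP.ne) hE)
  have hnear : ∀ X : ℝ, ∀ᶠ t in 𝓝[<] z₀.2, z₀.1 + √(z₀.2 - t) * X ∈ Icc x₀ x₁ := fun X =>
    ((by fun_prop : Continuous fun t : ℝ => z₀.1 + √(z₀.2 - t) * X).tendsto' z₀.2 z₀.1
      (by simp)).mono_left nhdsWithin_le_nhds |>.eventually (Icc_mem_nhds hx.1 hx.2)
  filter_upwards [hright, hleft, hnear y, hnear (-y), Ioo_mem_nhdsLT ht.1] with t hr hl hxr hxl ht'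
  have htS : t ∈ Icc 0 T := ⟨ht'.1.le, ht'.2.le.trans ht.2⟩
  have htime : z₀.2 + √(z₀.2 - t) ^ 2 * -1 = t := by
    rw [Real.sq_sqrt (sub_nonneg.2 ht'.2.le)]; ring
  rw [htime] at hr hl
  have hr' := hr ⟨hxr, htS⟩
  have hl' := hl ⟨hxl, htS⟩
  rw [heatPoly_neg, mul_neg, ← sub_eq_add_neg] at hl'
  constructor
  · refine neg_of_mul_pos_left ?_ hP.le
    rwa [mul_right_comm] at hr'
  · refine neg_of_mul_pos_left ?_ hP.le
    rw [← mul_assoc, mul_right_comm] at hl'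
    rwa [mul_comm ((-1) ^ k)]

theorem eventually_nonempty_zeros_before (H : LinearParabolic x₀ x₁ T w a b c)
    (hx : z₀.1 ∈ Ioo x₀ x₁) (ht : z₀.2 ∈ Ioc 0 T) (hw : w z₀ = 0) (hwx : ∂ₓ w z₀ ≠ 0) :
    ∀ᶠ ε in 𝓝[>] 0, ∀ᶠ t in 𝓝[<] z₀.2, (Z t ∩ Metric.ball z₀.1 ε).Nonempty := by
  filter_upwards [H.eventually_sign_at_sides hx ht (k := 1) (by simpa using hw) hwx,
    Ioo_mem_nhdsGT (sub_pos.2 hx.1), Ioo_mem_nhdsGT (sub_pos.2 hx.2)] with ε hε hεl hεr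
  filter_upwards [hε, Ioo_mem_nhdsLT ht.1] with t ⟨hr, hl⟩ ht'
  have hslice := continuousOn_timeSlice H.contDiffOn_sol.continuousOn
    (show t ∈ Icc 0 T from ⟨ht'.1.le, ht'.2.le.trans ht.2⟩)
  have hsub : Icc (z₀.1 - ε) (z₀.1 + ε) ⊆ Icc x₀ x₁ :=
    Icc_subset_Icc (by linarith [hεl.2]) (by linarith [hεr.2])
  obtain ⟨x, hx, hx0⟩ := exists_zero_of_mul_mul_neg (κ := ∂ₓ w z₀) (by linarith [hεl.1])
    (hslice.mono hsub) (mul_neg_of_neg_of_pos (by simpa using hl) hr)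
  exact ⟨x, ⟨hsub (Ioo_subset_Icc_self hx), hx0⟩, by rwa [Real.ball_eq_Ioo]⟩

theorem eventually_nontrivial_zeros_before (H : LinearParabolic x₀ x₁ T w a b c)
    (hx : z₀.1 ∈ Ioo x₀ x₁) (ht : z₀.2 ∈ Ioc 0 T) (hk₂ : 2 ≤ k)
    (hk : ∀ i < k, ∂ₓ^[i] w z₀ = 0) (hκ : ∂ₓ^[k] w z₀ ≠ 0) :
    ∀ᶠ ε in 𝓝[>] 0, ∀ᶠ t in 𝓝[<] z₀.2, (Z t ∩ Metric.ball z₀.1 ε).Nontrivial := by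
  obtain ⟨y, hy, hpar⟩ := H.exists_eventually_sign_on_parabola hx ht hk₂ hk hκ
  filter_upwards [H.eventually_sign_at_sides hx ht hk hκ, self_mem_nhdsWithin,
    Ioo_mem_nhdsGT (sub_pos.2 hx.1), Ioo_mem_nhdsGT (sub_pos.2 hx.2)]
    with ε hε (hε0 : 0 < ε) hεl hεr
  have hnear : ∀ᶠ t in 𝓝[<] z₀.2, √(z₀.2 - t) * y < ε :=
    (((by fun_prop : Continuous fun t : ℝ => √(z₀.2 - t) * y).tendsto' z₀.2 0
      (by simp)).mono_left nhdsWithin_le_nhds).eventually_lt_const hε0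
  filter_upwards [hε, hpar, hnear, Ioo_mem_nhdsLT ht.1] with t ⟨hr, hl⟩ ⟨hr', hl'⟩ hry ht'
  have hslice := continuousOn_timeSlice H.contDiffOn_sol.continuousOn
    (show t ∈ Icc 0 T from ⟨ht'.1.le, ht'.2.le.trans ht.2⟩)
  have hry0 : 0 ≤ √(z₀.2 - t) * y := by positivity
  have hsub : Icc (z₀.1 - ε) (z₀.1 + ε) ⊆ Icc x₀ x₁ :=
    Icc_subset_Icc (by linarith [hεl.2]) (by linarith [hεr.2])
  obtain ⟨u, hu, hu0⟩ := exists_zero_of_mul_mul_neg (by linarith)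
    (hslice.mono ((Icc_subset_Icc_right (by linarith)).trans hsub)) (mul_neg_of_pos_of_neg hl hl')
  obtain ⟨v, hv, hv0⟩ := exists_zero_of_mul_mul_neg (by linarith)
    (hslice.mono ((Icc_subset_Icc_left (by linarith)).trans hsub)) (mul_neg_of_neg_of_pos hr' hr)
  have hu' : u ∈ Ioo (z₀.1 - ε) (z₀.1 + ε) := ⟨hu.1, by linarith [hu.2]⟩
  have hv' : v ∈ Ioo (z₀.1 - ε) (z₀.1 + ε) := ⟨by linarith [hv.1], hv.2⟩
  exact ⟨u, ⟨⟨hsub (Ioo_subset_Icc_self hu'), hu0⟩, by rwa [Real.ball_eq_Ioo]⟩,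
    v, ⟨⟨hsub (Ioo_subset_Icc_self hv'), hv0⟩, by rwa [Real.ball_eq_Ioo]⟩,
    by linarith [hu.2, hv.1]⟩

end LinearParabolic

/-! ### The parabolic frequency -/

/-- A mass `H` and an energy `D` on `[0, T]`, with derivatives `H'` and `D'`, whose parabolic
frequency `(T + ε - t) * D t / H t` is almost monotone. The backward time `T + ε - t` is that of a
heat kernel concentrating at time `T + ε`. -/
structure FrequencySystem (T ε C : ℝ) (H D H' D' : ℝ → ℝ) : Prop where
  hasDerivWithinAt_mass : ∀ t ∈ Icc 0 T, HasDerivWithinAt H (H' t) (Icc 0 T) t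
  hasDerivWithinAt_energy : ∀ t ∈ Icc 0 T, HasDerivWithinAt D (D' t) (Icc 0 T) t
  mass_pos : ∀ t ∈ Icc 0 T, 0 < H t
  energy_nonneg : ∀ t ∈ Icc 0 T, 0 ≤ D t
  frequency_deriv_le : ∀ t ∈ Icc 0 T,
    (T + ε - t) * D' t * H t - D t * H t - (T + ε - t) * D t * H' t ≤
      C * H t * (H t + (T + ε - t) * D t)
  le_mass_deriv : ∀ t ∈ Icc 0 T, -(C * D t + (C + C / (T + ε - t)) * H t) ≤ H' t

namespace FrequencySystem

variable {T ε C N₀ : ℝ} {H D H' D' : ℝ → ℝ}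

theorem antitoneOn_frequency (h : FrequencySystem T ε C H D H' D') :
    AntitoneOn (fun t => (1 + (T + ε - t) * D t / H t) * Real.exp (-(C * t))) (Icc 0 T) := by
  have hderiv : ∀ t ∈ Icc 0 T, HasDerivWithinAt
      (fun t => (1 + (T + ε - t) * D t / H t) * Real.exp (-(C * t)))
      (Real.exp (-(C * t)) / H t ^ 2 *
        ((T + ε - t) * D' t * H t - D t * H t - (T + ε - t) * D t * H' t -
          C * H t * (H t + (T + ε - t) * D t))) (Icc 0 T) t := fun t ht => by
    have hH := (h.mass_pos t ht).ne'
    refine ((((((hasDerivAt_id' t).hasDerivWithinAt.const_sub (T + ε)).fun_mul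
      (h.hasDerivWithinAt_energy t ht)).fun_div (h.hasDerivWithinAt_mass t ht) hH).const_add
      1).fun_mul ((hasDerivAt_id' t).hasDerivWithinAt.const_mul C).fun_neg.exp).congr_deriv ?_
    field_simp
    ring
  refine antitoneOn_of_hasDerivWithinAt_nonpos (convex_Icc 0 T)
    (fun t ht => (hderiv t ht).continuousWithinAt)
    (fun t ht => (hderiv t (interior_subset ht)).mono interior_subset) fun t ht => ?_
  exact mul_nonpos_of_nonneg_of_nonpos (by positivity)
    (sub_nonpos.2 (h.frequency_deriv_le t (interior_subset ht)))

theorem mass_add_mul_energy_le (h : FrequencySystem T ε C H D H' D') (hε : 0 < ε) (hC : 0 ≤ C)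
    (hN₀ : (T + ε) * D 0 ≤ N₀ * H 0) {t : ℝ} (ht : t ∈ Icc 0 T) :
    H t + (T + ε - t) * D t ≤ (1 + N₀) * Real.exp (C * T) * H t := by
  have h0 : (0 : ℝ) ∈ Icc 0 T := ⟨le_rfl, ht.1.trans ht.2⟩
  have hH := h.mass_pos t ht
  have hinit : (T + ε) * D 0 / H 0 ≤ N₀ := (div_le_iff₀ (h.mass_pos 0 h0)).2 hN₀
  have hfreq : (1 + (T + ε - t) * D t / H t) * Real.exp (-(C * t)) ≤ 1 + N₀ :=
    (h.antitoneOn_frequency h0 ht ht.1).trans (by simpa using hinit)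
  rw [Real.exp_neg, ← div_eq_mul_inv, div_le_iff₀ (Real.exp_pos _)] at hfreq
  have hN₁ : 0 ≤ 1 + N₀ := by
    have hRD : 0 ≤ (T + ε) * D 0 :=
      mul_nonneg (by linarith [ht.1, ht.2]) (h.energy_nonneg 0 h0)
    linarith [nonneg_of_mul_nonneg_left (hRD.trans hN₀) (h.mass_pos 0 h0)]
  calc H t + (T + ε - t) * D t = (1 + (T + ε - t) * D t / H t) * H t := by field_simp
    _ ≤ (1 + N₀) * Real.exp (C * t) * H t := by gcongr
    _ ≤ (1 + N₀) * Real.exp (C * T) * H t := by gcongr; exact ht.2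

theorem monotoneOn_mass_div_pow (h : FrequencySystem T ε C H D H' D') (hε : 0 < ε) (hC : 0 ≤ C)
    (hN₀ : (T + ε) * D 0 ≤ N₀ * H 0) {K : ℕ}
    (hK : C * (1 + (1 + N₀) * Real.exp (C * T)) ≤ K) :
    MonotoneOn (fun t => H t / (T + ε - t) ^ K * Real.exp (C * t)) (Icc 0 T) := by
  have hs : ∀ t ∈ Icc 0 T, 0 < T + ε - t := fun t ht => by linarith [ht.2]
  have hderiv : ∀ t ∈ Icc 0 T, HasDerivWithinAt
      (fun t => H t / (T + ε - t) ^ K * Real.exp (C * t))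
      (Real.exp (C * t) / (T + ε - t) ^ K * (H' t + (K / (T + ε - t) + C) * H t))
      (Icc 0 T) t := fun t ht => by
    have hst := (hs t ht).ne'
    refine (((h.hasDerivWithinAt_mass t ht).fun_div
      (((hasDerivAt_id' t).hasDerivWithinAt.const_sub (T + ε)).fun_pow K)
      (pow_ne_zero _ hst)).fun_mul
      ((hasDerivAt_id' t).hasDerivWithinAt.const_mul C).exp).congr_deriv ?_
    rcases K with _ | K
    · simp; ring
    · rw [Nat.add_sub_cancel]
      field_simp
      ring
  refine monotoneOn_of_hasDerivWithinAt_nonneg (convex_Icc 0 T)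
    (fun t ht => (hderiv t ht).continuousWithinAt)
    (fun t ht => (hderiv t (interior_subset ht)).mono interior_subset) fun t ht => ?_
  have ht' := interior_subset ht
  have hst := hs t ht'
  have hH := h.mass_pos t ht'
  refine mul_nonneg (by positivity) ?_
  have henergy : C * D t ≤ C * ((1 + N₀) * Real.exp (C * T) * H t / (T + ε - t)) := by
    gcongr
    rw [le_div_iff₀ hst]
    linarith [h.mass_add_mul_energy_le hε hC hN₀ ht']
  have hpow : C * (1 + (1 + N₀) * Real.exp (C * T)) / (T + ε - t) * H t
      ≤ K / (T + ε - t) * H t := by gcongr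
  linear_combination h.le_mass_deriv t ht' + henergy + hpow

theorem mass_zero_mul_pow_le (h : FrequencySystem T ε C H D H' D') (hT : 0 ≤ T) (hε : 0 < ε)
    (hε₁ : ε ≤ 1) (hC : 0 ≤ C) (hN₀ : (T + ε) * D 0 ≤ N₀ * H 0) {K : ℕ}
    (hK : C * (1 + (1 + N₀) * Real.exp (C * T)) ≤ K) :
    Real.exp (-(C * T)) / (T + 1) ^ K * H 0 * ε ^ K ≤ H T := by
  have hH := h.mass_pos 0 ⟨le_rfl, hT⟩
  have hmono := h.monotoneOn_mass_div_pow hε hC hN₀ hK ⟨le_rfl, hT⟩ ⟨hT, le_rfl⟩ hT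
  simp only [mul_zero, Real.exp_zero, mul_one, sub_zero, add_sub_cancel_left] at hmono
  calc Real.exp (-(C * T)) / (T + 1) ^ K * H 0 * ε ^ K
      = Real.exp (-(C * T)) * ε ^ K * (H 0 / (T + 1) ^ K) := by ring
    _ ≤ Real.exp (-(C * T)) * ε ^ K * (H 0 / (T + ε) ^ K) := by gcongr
    _ ≤ Real.exp (-(C * T)) * ε ^ K * (H T / ε ^ K * Real.exp (C * T)) := by gcongr
    _ = H T := by
      rw [Real.exp_neg]
      field_simp

end FrequencySystem

section SpaceTimeIntegrals

variable {x₀ x₁ T t : ℝ} {f : ℝ × ℝ → ℝ}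

local notation "S" => spaceTimeRect x₀ x₁ T

theorem integral_derivX (hx : x₀ < x₁) (hT : 0 < T) (hf : ContDiffOn ℝ ∞ f S)
    (ht : t ∈ Icc 0 T) : ∫ x in x₀..x₁, derivX S f (x, t) = f (x₁, t) - f (x₀, t) :=
  intervalIntegral.integral_eq_sub_of_hasDerivAt_of_le hx.le
    (continuousOn_timeSlice hf.continuousOn ht)
    (fun x hxm => (hasDerivWithinAt_derivX hf (x := x) (t := t)
      ⟨Ioo_subset_Icc_self hxm, ht⟩).hasDerivAt (Icc_mem_nhds hxm.1 hxm.2))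
    (intervalIntegrable_timeSlice hx.le
      (contDiffOn_derivX (uniqueDiffOn_spaceTimeRect hx hT) hf).continuousOn ht)

theorem hasDerivWithinAt_integral_timeSlice (hx : x₀ < x₁) (hT : 0 < T)
    (hf : ContDiffOn ℝ ∞ f S) (ht : t ∈ Icc 0 T) :
    HasDerivWithinAt (fun t => ∫ x in x₀..x₁, f (x, t))
      (∫ x in x₀..x₁, derivT S f (x, t)) (Icc 0 T) t := by
  have hft := (contDiffOn_derivT (uniqueDiffOn_spaceTimeRect hx hT) hf).continuousOn
  have hswap : MapsTo Prod.swap (Icc 0 T ×ˢ Icc x₀ x₁) S := fun y hy => ⟨hy.2, hy.1⟩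
  let toCLM := ContinuousLinearMap.toSpanSingletonCLE (𝕜 := ℝ) (E := ℝ)
  have hderiv := (hasFDerivWithinAt_integral_param (E := ℝ) (G := ℝ) (convex_Icc 0 T) hx.le
    (g := fun t x => f (x, t)) (g' := fun t x => toCLM (derivT S f (x, t)))
    (fun t ht x hxm => (hasDerivWithinAt_derivT hf (x := x) (t := t)
      ⟨hxm, ht⟩).hasFDerivWithinAt)
    (hf.continuousOn.comp continuous_swap.continuousOn hswap)
    (toCLM.continuous.comp_continuousOn (hft.comp continuous_swap.continuousOn hswap))
    ht).hasDerivWithinAt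
  refine hderiv.congr_deriv ?_
  have hint : IntervalIntegrable (fun x => toCLM (derivT S f (x, t))) volume x₀ x₁ :=
    (toCLM.continuous.comp_continuousOn
      (continuousOn_timeSlice hft ht)).intervalIntegrable_of_Icc hx.le
  rw [ContinuousLinearMap.intervalIntegral_apply hint]
  simp [toCLM]

end SpaceTimeIntegrals

/-- A smooth solution `w` on the space-time rectangle seen in an arclength coordinate `ρ` of density
`α = ρ_x`, in which `w` has slope `p = w_ρ`. For a diffusion with coefficient `a` the natural choice
is `α = a ^ (-1 / 2)`, which turns the principal part of the equation into the heat operator. -/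
structure ArclengthCoordinate (x₀ x₁ T : ℝ) (w α ρ p : ℝ × ℝ → ℝ) : Prop where
  left_lt_right : x₀ < x₁
  time_pos : 0 < T
  contDiffOn_sol : ContDiffOn ℝ ∞ w (spaceTimeRect x₀ x₁ T)
  contDiffOn_density : ContDiffOn ℝ ∞ α (spaceTimeRect x₀ x₁ T)
  contDiffOn_coord : ContDiffOn ℝ ∞ ρ (spaceTimeRect x₀ x₁ T)
  contDiffOn_slope : ContDiffOn ℝ ∞ p (spaceTimeRect x₀ x₁ T)
  density_pos : ∀ z ∈ spaceTimeRect x₀ x₁ T, 0 < α z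
  derivX_coord : ∀ z ∈ spaceTimeRect x₀ x₁ T, derivX (spaceTimeRect x₀ x₁ T) ρ z = α z
  derivX_sol : ∀ z ∈ spaceTimeRect x₀ x₁ T, derivX (spaceTimeRect x₀ x₁ T) w z = α z * p z

/-- The (unnormalized) backward Gaussian weight `exp (-ρ² / (4 * s))`, where `s = T + ε - t`. -/
noncomputable def gaussWeight (T ε : ℝ) (ρ : ℝ × ℝ → ℝ) (z : ℝ × ℝ) : ℝ :=
  Real.exp (-(ρ z ^ 2 / (4 * (T + ε - z.2))))

/-- The drift `ρ_t + ρ / (2 * s)`: the sum of the speed of the coordinate `ρ` and of the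
self-similar drift of the Gaussian weight. -/
noncomputable def gaussDrift (x₀ x₁ T ε : ℝ) (ρ : ℝ × ℝ → ℝ) (z : ℝ × ℝ) : ℝ :=
  derivT (spaceTimeRect x₀ x₁ T) ρ z + ρ z / (2 * (T + ε - z.2))

/-- The time derivative of `w` along the drift. -/
noncomputable def driftDeriv (x₀ x₁ T ε : ℝ) (w ρ p : ℝ × ℝ → ℝ) (z : ℝ × ℝ) : ℝ :=
  derivT (spaceTimeRect x₀ x₁ T) w z - gaussDrift x₀ x₁ T ε ρ z * p z

/-- The Ornstein-Uhlenbeck operator `w_ρρ - ρ * w_ρ / (2 * s)`, which is symmetric with respect to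
the Gaussian weight, applied to `w`. -/
noncomputable def gaussLaplace (x₀ x₁ T ε : ℝ) (α ρ p : ℝ × ℝ → ℝ) (z : ℝ × ℝ) : ℝ :=
  derivX (spaceTimeRect x₀ x₁ T) p z / α z - ρ z * p z / (2 * (T + ε - z.2))

/-- The boundary density in the integration by parts of the energy. -/
noncomputable def gradFlux (T ε : ℝ) (w ρ p : ℝ × ℝ → ℝ) (z : ℝ × ℝ) : ℝ :=
  w z * p z * gaussWeight T ε ρ z

/-- The boundary density in the evolution of the weighted mass. -/
noncomputable def massFlux (x₀ x₁ T ε : ℝ) (w ρ : ℝ × ℝ → ℝ) (z : ℝ × ℝ) : ℝ :=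
  w z ^ 2 * gaussDrift x₀ x₁ T ε ρ z * gaussWeight T ε ρ z

/-- The boundary density in the evolution of the weighted energy. -/
noncomputable def energyFlux (x₀ x₁ T ε : ℝ) (w ρ p : ℝ × ℝ → ℝ) (z : ℝ × ℝ) : ℝ :=
  p z ^ 2 * gaussDrift x₀ x₁ T ε ρ z * gaussWeight T ε ρ z +
    2 * (p z * driftDeriv x₀ x₁ T ε w ρ p z * gaussWeight T ε ρ z)

theorem gaussWeight_pos (T ε : ℝ) (ρ : ℝ × ℝ → ℝ) (z : ℝ × ℝ) : 0 < gaussWeight T ε ρ z :=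
  Real.exp_pos _

theorem time_remaining_pos {x₀ x₁ T ε : ℝ} (hε : 0 < ε) {z : ℝ × ℝ}
    (hz : z ∈ spaceTimeRect x₀ x₁ T) : 0 < T + ε - z.2 := by
  linarith [hz.2.2]

namespace ArclengthCoordinate

variable {x₀ x₁ T ε x t : ℝ} {w α ρ p : ℝ × ℝ → ℝ}

local notation "S" => spaceTimeRect x₀ x₁ T
local notation "∂ₓ" => derivX (spaceTimeRect x₀ x₁ T)
local notation "∂ₜ" => derivT (spaceTimeRect x₀ x₁ T)
local notation "G" => gaussWeight T ε ρ
local notation "κ" => gaussDrift x₀ x₁ T ε ρ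
local notation "Y" => driftDeriv x₀ x₁ T ε w ρ p
local notation "A" => gaussLaplace x₀ x₁ T ε α ρ p

theorem uniqueDiffOn (h : ArclengthCoordinate x₀ x₁ T w α ρ p) : UniqueDiffOn ℝ S :=
  uniqueDiffOn_spaceTimeRect h.left_lt_right h.time_pos

theorem derivX_derivT (h : ArclengthCoordinate x₀ x₁ T w α ρ p) {f : ℝ × ℝ → ℝ} {z : ℝ × ℝ}
    (hf : ContDiffOn ℝ ∞ f S) (hz : z ∈ S) : ∂ₓ (∂ₜ f) z = ∂ₜ (∂ₓ f) z :=
  derivX_derivT_comm h.uniqueDiffOn hf hz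
    ((closure_interior_spaceTimeRect h.left_lt_right h.time_pos).ge hz)

theorem contDiffOn_weight (h : ArclengthCoordinate x₀ x₁ T w α ρ p) (hε : 0 < ε) :
    ContDiffOn ℝ ∞ G S := by
  unfold gaussWeight
  exact (((h.contDiffOn_coord.pow 2).div (by fun_prop) fun z hz =>
    (mul_pos four_pos (time_remaining_pos hε hz)).ne').neg).exp

theorem contDiffOn_drift (h : ArclengthCoordinate x₀ x₁ T w α ρ p) (hε : 0 < ε) :
    ContDiffOn ℝ ∞ κ S := by
  unfold gaussDrift
  exact (contDiffOn_derivT h.uniqueDiffOn h.contDiffOn_coord).add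
    (h.contDiffOn_coord.div (by fun_prop) fun z hz =>
      (mul_pos two_pos (time_remaining_pos hε hz)).ne')

theorem contDiffOn_driftDeriv (h : ArclengthCoordinate x₀ x₁ T w α ρ p) (hε : 0 < ε) :
    ContDiffOn ℝ ∞ Y S :=
  (contDiffOn_derivT h.uniqueDiffOn h.contDiffOn_sol).sub
    ((h.contDiffOn_drift hε).mul h.contDiffOn_slope)

theorem contDiffOn_laplace (h : ArclengthCoordinate x₀ x₁ T w α ρ p) (hε : 0 < ε) :
    ContDiffOn ℝ ∞ A S := by
  unfold gaussLaplace
  exact ((contDiffOn_derivX h.uniqueDiffOn h.contDiffOn_slope).div h.contDiffOn_density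
    fun z hz => (h.density_pos z hz).ne').sub ((h.contDiffOn_coord.mul h.contDiffOn_slope).div
      (by fun_prop) fun z hz => (mul_pos two_pos (time_remaining_pos hε hz)).ne')

theorem contDiffOn_gradFlux (h : ArclengthCoordinate x₀ x₁ T w α ρ p) (hε : 0 < ε) :
    ContDiffOn ℝ ∞ (gradFlux T ε w ρ p) S :=
  (h.contDiffOn_sol.mul h.contDiffOn_slope).mul (h.contDiffOn_weight hε)

theorem contDiffOn_massFlux (h : ArclengthCoordinate x₀ x₁ T w α ρ p) (hε : 0 < ε) :
    ContDiffOn ℝ ∞ (massFlux x₀ x₁ T ε w ρ) S :=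
  ((h.contDiffOn_sol.pow 2).mul (h.contDiffOn_drift hε)).mul (h.contDiffOn_weight hε)

theorem contDiffOn_energyFlux (h : ArclengthCoordinate x₀ x₁ T w α ρ p) (hε : 0 < ε) :
    ContDiffOn ℝ ∞ (energyFlux x₀ x₁ T ε w ρ p) S :=
  (((h.contDiffOn_slope.pow 2).mul (h.contDiffOn_drift hε)).mul (h.contDiffOn_weight hε)).add
    (contDiffOn_const.mul
      ((h.contDiffOn_slope.mul (h.contDiffOn_driftDeriv hε)).mul (h.contDiffOn_weight hε)))

theorem contDiffOn_sq_mul (h : ArclengthCoordinate x₀ x₁ T w α ρ p) (hε : 0 < ε)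
    {v : ℝ × ℝ → ℝ} (hv : ContDiffOn ℝ ∞ v S) :
    ContDiffOn ℝ ∞ (fun z => v z ^ 2 * α z * G z) S :=
  ((hv.pow 2).mul h.contDiffOn_density).mul (h.contDiffOn_weight hε)

theorem hasDerivWithinAt_weight_fst (h : ArclengthCoordinate x₀ x₁ T w α ρ p) (hε : 0 < ε)
    (hz : (x, t) ∈ S) : HasDerivWithinAt (fun y => G (y, t))
      (G (x, t) * (-(ρ (x, t) * α (x, t) / (2 * (T + ε - t))))) (Icc x₀ x₁) x := by
  have hs : 0 < T + ε - t := time_remaining_pos hε hz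
  have hρ := hasDerivWithinAt_derivX h.contDiffOn_coord hz
  rw [h.derivX_coord _ hz] at hρ
  refine (((hρ.fun_pow 2).div_const (4 * (T + ε - t))).fun_neg.exp).congr_deriv ?_
  simp only [gaussWeight]
  field_simp
  push_cast
  ring

theorem hasDerivWithinAt_weight_snd (h : ArclengthCoordinate x₀ x₁ T w α ρ p) (hε : 0 < ε)
    (hz : (x, t) ∈ S) : HasDerivWithinAt (fun τ => G (x, τ))
      (G (x, t) * (-(ρ (x, t) * ∂ₜ ρ (x, t) / (2 * (T + ε - t))) -
        ρ (x, t) ^ 2 / (4 * (T + ε - t) ^ 2))) (Icc 0 T) t := by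
  have hs : 0 < T + ε - t := time_remaining_pos hε hz
  have hρ := hasDerivWithinAt_derivT h.contDiffOn_coord hz
  refine (((hρ.fun_pow 2).fun_div (((hasDerivAt_id' t).hasDerivWithinAt.const_sub
    (T + ε)).const_mul 4) (by positivity)).fun_neg.exp).congr_deriv ?_
  simp only [gaussWeight]
  field_simp
  push_cast
  ring

theorem hasDerivWithinAt_drift (h : ArclengthCoordinate x₀ x₁ T w α ρ p) (hz : (x, t) ∈ S) :
    HasDerivWithinAt (fun y => κ (y, t)) (∂ₜ α (x, t) + α (x, t) / (2 * (T + ε - t)))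
      (Icc x₀ x₁) x := by
  have hρ := hasDerivWithinAt_derivX h.contDiffOn_coord hz
  have hρt := hasDerivWithinAt_derivX (contDiffOn_derivT h.uniqueDiffOn h.contDiffOn_coord) hz
  rw [h.derivX_derivT h.contDiffOn_coord hz, derivT_congr h.derivX_coord hz] at hρt
  rw [h.derivX_coord _ hz] at hρ
  exact hρt.fun_add (hρ.div_const (2 * (T + ε - t)))

theorem hasDerivWithinAt_driftDeriv (h : ArclengthCoordinate x₀ x₁ T w α ρ p)
    (hz : (x, t) ∈ S) : HasDerivWithinAt (fun y => Y (y, t))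
      ((∂ₜ α (x, t) * p (x, t) + α (x, t) * ∂ₜ p (x, t)) -
        ((∂ₜ α (x, t) + α (x, t) / (2 * (T + ε - t))) * p (x, t) +
          κ (x, t) * ∂ₓ p (x, t))) (Icc x₀ x₁) x := by
  have hwt := hasDerivWithinAt_derivX (contDiffOn_derivT h.uniqueDiffOn h.contDiffOn_sol) hz
  have hαp : ∂ₜ (fun z => α z * p z) (x, t) =
      ∂ₜ α (x, t) * p (x, t) + α (x, t) * ∂ₜ p (x, t) :=
    derivT_eq_of_hasDerivWithinAt h.time_pos (h.contDiffOn_density.mul h.contDiffOn_slope) hz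
      ((hasDerivWithinAt_derivT h.contDiffOn_density hz).fun_mul
        (hasDerivWithinAt_derivT h.contDiffOn_slope hz))
  rw [h.derivX_derivT h.contDiffOn_sol hz, derivT_congr h.derivX_sol hz, hαp] at hwt
  exact hwt.fun_sub
    ((h.hasDerivWithinAt_drift hz).fun_mul (hasDerivWithinAt_derivX h.contDiffOn_slope hz))

theorem derivT_massDensity (h : ArclengthCoordinate x₀ x₁ T w α ρ p) (hε : 0 < ε)
    (hz : (x, t) ∈ S) :
    ∂ₜ (fun z => w z ^ 2 * α z * G z) (x, t) =
      2 * (w (x, t) * Y (x, t) * α (x, t) * G (x, t)) -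
      w (x, t) ^ 2 * α (x, t) * G (x, t) / (2 * (T + ε - t)) +
      ∂ₓ (massFlux x₀ x₁ T ε w ρ) (x, t) := by
  have hs : 0 < T + ε - t := time_remaining_pos hε hz
  have htime := derivT_eq_of_hasDerivWithinAt h.time_pos
    (h.contDiffOn_sq_mul hε h.contDiffOn_sol) hz
    ((((hasDerivWithinAt_derivT h.contDiffOn_sol hz).fun_pow 2).fun_mul
      (hasDerivWithinAt_derivT h.contDiffOn_density hz)).fun_mul
      (h.hasDerivWithinAt_weight_snd hε hz))
  have hspace := derivX_eq_of_hasDerivWithinAt h.left_lt_right (h.contDiffOn_massFlux hε) hz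
    ((((hasDerivWithinAt_derivX h.contDiffOn_sol hz).fun_pow 2).fun_mul
      (h.hasDerivWithinAt_drift hz)).fun_mul (h.hasDerivWithinAt_weight_fst hε hz))
  rw [htime, hspace, h.derivX_sol _ hz]
  simp only [driftDeriv, gaussDrift]
  field_simp
  push_cast
  ring

theorem derivX_gradFlux (h : ArclengthCoordinate x₀ x₁ T w α ρ p) (hε : 0 < ε)
    (hz : (x, t) ∈ S) :
    ∂ₓ (gradFlux T ε w ρ p) (x, t) = p (x, t) ^ 2 * α (x, t) * G (x, t) +
      w (x, t) * A (x, t) * α (x, t) * G (x, t) := by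
  have hs : 0 < T + ε - t := time_remaining_pos hε hz
  have hα := h.density_pos _ hz
  have hspace := derivX_eq_of_hasDerivWithinAt h.left_lt_right (h.contDiffOn_gradFlux hε) hz
    (((hasDerivWithinAt_derivX h.contDiffOn_sol hz).fun_mul
      (hasDerivWithinAt_derivX h.contDiffOn_slope hz)).fun_mul
      (h.hasDerivWithinAt_weight_fst hε hz))
  rw [hspace, h.derivX_sol _ hz]
  simp only [gaussLaplace]
  field_simp
  ring

theorem derivT_energyDensity (h : ArclengthCoordinate x₀ x₁ T w α ρ p) (hε : 0 < ε)
    (hz : (x, t) ∈ S) :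
    ∂ₜ (fun z => p z ^ 2 * α z * G z) (x, t) =
      -2 * (Y (x, t) * A (x, t) * α (x, t) * G (x, t)) +
      p (x, t) ^ 2 * α (x, t) * G (x, t) / (2 * (T + ε - t)) +
      ∂ₓ (energyFlux x₀ x₁ T ε w ρ p) (x, t) := by
  have hs : 0 < T + ε - t := time_remaining_pos hε hz
  have hα := h.density_pos _ hz
  have hpx := hasDerivWithinAt_derivX h.contDiffOn_slope hz
  have htime := derivT_eq_of_hasDerivWithinAt h.time_pos
    (h.contDiffOn_sq_mul hε h.contDiffOn_slope) hz
    ((((hasDerivWithinAt_derivT h.contDiffOn_slope hz).fun_pow 2).fun_mul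
      (hasDerivWithinAt_derivT h.contDiffOn_density hz)).fun_mul
      (h.hasDerivWithinAt_weight_snd hε hz))
  have hspace := derivX_eq_of_hasDerivWithinAt h.left_lt_right (h.contDiffOn_energyFlux hε) hz
    ((((hpx.fun_pow 2).fun_mul (h.hasDerivWithinAt_drift hz)).fun_mul
      (h.hasDerivWithinAt_weight_fst hε hz)).fun_add
      (((hpx.fun_mul (h.hasDerivWithinAt_driftDeriv hz)).fun_mul
        (h.hasDerivWithinAt_weight_fst hε hz)).const_mul 2))
  rw [htime, hspace]
  simp only [gaussLaplace, driftDeriv, gaussDrift]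
  field_simp
  push_cast
  ring

end ArclengthCoordinate

section WeightedIntegrals

variable {w p y A k : ℝ → ℝ} {u v M : ℝ}

theorem integral_mul_add_mul (c d : ℝ) (hw : IntervalIntegrable w volume u v)
    (hp : IntervalIntegrable p volume u v) :
    ∫ x in u..v, (c * w x + d * p x) = c * (∫ x in u..v, w x) + d * ∫ x in u..v, p x := by
  rw [intervalIntegral.integral_add (hw.const_mul c) (hp.const_mul d),
    intervalIntegral.integral_const_mul, intervalIntegral.integral_const_mul]

theorem sq_integral_mul_le (huv : u ≤ v) (hw : ContinuousOn w (Icc u v))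
    (hp : ContinuousOn p (Icc u v)) (hk : ContinuousOn k (Icc u v))
    (hk₀ : ∀ x ∈ Icc u v, 0 ≤ k x) (hpos : 0 < ∫ x in u..v, w x ^ 2 * k x) :
    (∫ x in u..v, w x * p x * k x) ^ 2 ≤
      (∫ x in u..v, w x ^ 2 * k x) * ∫ x in u..v, p x ^ 2 * k x := by
  set a := ∫ x in u..v, w x ^ 2 * k x with ha
  set b := ∫ x in u..v, w x * p x * k x with hb
  have hint : ∀ f : ℝ → ℝ, ContinuousOn f (Icc u v) → IntervalIntegrable f volume u v :=
    fun f hf => hf.intervalIntegrable_of_Icc huv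
  have hnonneg : 0 ≤ ∫ x in u..v, (a * p x - b * w x) ^ 2 * k x :=
    intervalIntegral.integral_nonneg huv fun x hx => mul_nonneg (sq_nonneg _) (hk₀ x hx)
  have hexpand : ∫ x in u..v, (a * p x - b * w x) ^ 2 * k x =
      a ^ 2 * (∫ x in u..v, p x ^ 2 * k x) + 1 * (-(2 * a * b) * b + b ^ 2 * a) := by
    rw [hb, ha, ← integral_mul_add_mul _ _ (hint _ (by fun_prop)) (hint _ (by fun_prop)), ← ha,
      ← hb, ← integral_mul_add_mul _ _ (hint _ (by fun_prop)) (hint _ (by fun_prop))]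
    exact intervalIntegral.integral_congr fun x _ => by ring
  rw [hexpand] at hnonneg
  have hmul : 0 ≤ a * (a * (∫ x in u..v, p x ^ 2 * k x) - b ^ 2) := by linarith
  linarith [nonneg_of_mul_nonneg_right hmul hpos]

theorem sq_half_integral_add_le (huv : u ≤ v) (hw : ContinuousOn w (Icc u v))
    (hy : ContinuousOn y (Icc u v)) (hA : ContinuousOn A (Icc u v))
    (hk : ContinuousOn k (Icc u v)) (hk₀ : ∀ x ∈ Icc u v, 0 ≤ k x)
    (hpos : 0 < ∫ x in u..v, w x ^ 2 * k x) :
    (((∫ x in u..v, w x * y x * k x) + ∫ x in u..v, w x * A x * k x) / 2) ^ 2 ≤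
      (∫ x in u..v, w x ^ 2 * k x) *
        ((∫ x in u..v, y x * A x * k x) + (∫ x in u..v, (y x - A x) ^ 2 * k x) / 4) := by
  have hint : ∀ f : ℝ → ℝ, ContinuousOn f (Icc u v) → IntervalIntegrable f volume u v :=
    fun f hf => hf.intervalIntegrable_of_Icc huv
  have hcs := sq_integral_mul_le (p := fun x => (y x + A x) / 2) huv hw (by fun_prop) hk hk₀ hpos
  have hmean : ∫ x in u..v, w x * ((y x + A x) / 2) * k x =
      1 / 2 * (∫ x in u..v, w x * y x * k x) + 1 / 2 * ∫ x in u..v, w x * A x * k x := by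
    rw [← integral_mul_add_mul _ _ (hint _ (by fun_prop)) (hint _ (by fun_prop))]
    exact intervalIntegral.integral_congr fun x _ => by ring
  have hpolar : ∫ x in u..v, ((y x + A x) / 2) ^ 2 * k x =
      1 * (∫ x in u..v, y x * A x * k x) + 1 / 4 * ∫ x in u..v, (y x - A x) ^ 2 * k x := by
    rw [← integral_mul_add_mul _ _ (hint _ (by fun_prop)) (hint _ (by fun_prop))]
    exact intervalIntegral.integral_congr fun x _ => by ring
  rw [hmean, hpolar] at hcs
  convert hcs using 2 <;> ring

theorem integral_mul_le_of_le_sq_add_sq {F : ℝ → ℝ} (c : ℝ) (huv : u ≤ v)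
    (hw : ContinuousOn w (Icc u v)) (hp : ContinuousOn p (Icc u v)) (hF : ContinuousOn F (Icc u v))
    (hk : ContinuousOn k (Icc u v)) (hk₀ : ∀ x ∈ Icc u v, 0 ≤ k x)
    (hFc : ∀ x ∈ Icc u v, F x ≤ c * (w x ^ 2 + p x ^ 2)) :
    ∫ x in u..v, F x * k x ≤
      c * ((∫ x in u..v, w x ^ 2 * k x) + ∫ x in u..v, p x ^ 2 * k x) := by
  have hint : ∀ f : ℝ → ℝ, ContinuousOn f (Icc u v) → IntervalIntegrable f volume u v :=
    fun f hf => hf.intervalIntegrable_of_Icc huv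
  rw [mul_add, ← integral_mul_add_mul _ _ (hint _ (by fun_prop)) (hint _ (by fun_prop))]
  refine intervalIntegral.integral_mono_on huv (hint _ (by fun_prop)) (hint _ (by fun_prop))
    fun x hxm => ?_
  linarith [mul_le_mul_of_nonneg_right (hFc x hxm) (hk₀ x hxm)]

theorem integral_sub_sq_mul_le (huv : u ≤ v)
    (hw : ContinuousOn w (Icc u v)) (hp : ContinuousOn p (Icc u v)) (hy : ContinuousOn y (Icc u v))
    (hA : ContinuousOn A (Icc u v)) (hk : ContinuousOn k (Icc u v))
    (hk₀ : ∀ x ∈ Icc u v, 0 ≤ k x) (hyA : ∀ x ∈ Icc u v, |y x - A x| ≤ M * (|w x| + |p x|)) :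
    ∫ x in u..v, (y x - A x) ^ 2 * k x ≤
      2 * M ^ 2 * ((∫ x in u..v, w x ^ 2 * k x) + ∫ x in u..v, p x ^ 2 * k x) := by
  refine integral_mul_le_of_le_sq_add_sq (F := fun x => (y x - A x) ^ 2) _ huv hw hp
    (by fun_prop) hk hk₀ fun x hxm => ?_
  calc (y x - A x) ^ 2 = |y x - A x| ^ 2 := (sq_abs _).symm
    _ ≤ (M * (|w x| + |p x|)) ^ 2 := by gcongr; exact hyA x hxm
    _ ≤ M ^ 2 * (2 * (|w x| ^ 2 + |p x| ^ 2)) := by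
      rw [mul_pow]
      gcongr
      exact add_sq_le
    _ = 2 * M ^ 2 * (w x ^ 2 + p x ^ 2) := by rw [sq_abs, sq_abs]; ring

theorem integral_mul_sub_integral_mul_le (huv : u ≤ v)
    (hw : ContinuousOn w (Icc u v)) (hp : ContinuousOn p (Icc u v)) (hy : ContinuousOn y (Icc u v))
    (hA : ContinuousOn A (Icc u v)) (hk : ContinuousOn k (Icc u v))
    (hk₀ : ∀ x ∈ Icc u v, 0 ≤ k x) (hM : 0 ≤ M)
    (hyA : ∀ x ∈ Icc u v, |y x - A x| ≤ M * (|w x| + |p x|)) :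
    (∫ x in u..v, w x * A x * k x) - (∫ x in u..v, w x * y x * k x) ≤
      2 * M * ((∫ x in u..v, w x ^ 2 * k x) + ∫ x in u..v, p x ^ 2 * k x) := by
  have hint : ∀ f : ℝ → ℝ, ContinuousOn f (Icc u v) → IntervalIntegrable f volume u v :=
    fun f hf => hf.intervalIntegrable_of_Icc huv
  rw [← intervalIntegral.integral_sub (hint _ (by fun_prop)) (hint _ (by fun_prop))]
  simp only [← sub_mul, ← mul_sub]
  refine integral_mul_le_of_le_sq_add_sq (F := fun x => w x * (A x - y x)) _ huv hw hp
    (by fun_prop) hk hk₀ fun x hxm => ?_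
  have hAy := hyA x hxm
  rw [abs_sub_comm] at hAy
  calc w x * (A x - y x) ≤ |w x| * |A x - y x| := (le_abs_self _).trans_eq (abs_mul _ _)
    _ ≤ |w x| * (M * (|w x| + |p x|)) := by gcongr
    _ = M * (|w x| * (|w x| + |p x|)) := by ring
    _ ≤ M * (2 * (|w x| ^ 2 + |p x| ^ 2)) :=
      mul_le_mul_of_nonneg_left (by nlinarith [sq_nonneg (|w x| - |p x|)]) hM
    _ = 2 * M * (w x ^ 2 + p x ^ 2) := by rw [sq_abs, sq_abs]; ring

end WeightedIntegrals

theorem neg_dissipation_le {H D zY zA YA ff : ℝ}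
    (hcs : ((zY + zA) / 2) ^ 2 ≤ H * (YA + ff / 4)) :
    -2 * YA * H - 2 * D * zY ≤ ff * H / 2 + 2 * (D + zA) * D := by
  nlinarith [sq_nonneg ((zY - zA) / 2 + (D + zA))]

theorem frequency_deriv_le_of_dissipation {s R H D zY zA YA ff b₁ b₂ M L : ℝ} (hs : 0 < s)
    (hsR : s ≤ R) (hH : 0 ≤ H) (hD : 0 ≤ D) (hM : 0 ≤ M) (hL : 0 ≤ L)
    (hcs : ((zY + zA) / 2) ^ 2 ≤ H * (YA + ff / 4)) (hff : ff ≤ M * (H + D))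
    (h₀ : |D + zA| ≤ L * H) (h₁ : |b₁| ≤ L * H) (h₂ : |b₂| ≤ L * H) :
    s * (-2 * YA + D / (2 * s) + b₂) * H - D * H - s * D * (2 * zY - H / (2 * s) + b₁) ≤
      (M * (R + 1) + L * (R + 3)) * H * (H + s * D) := by
  have hR : 0 ≤ R := hs.le.trans hsR
  have hrest : s * (M * (H + D) + L * H + 3 * L * D) ≤
      (M * (R + 1) + L * (R + 3)) * (H + s * D) := by
    have hsH : s * H ≤ R * H := by gcongr
    have hsD : 0 ≤ s * D := by positivity
    linear_combination M * hsH + L * hsH + (M * R + L * R) * hsD + (M + 3 * L) * hH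
  calc s * (-2 * YA + D / (2 * s) + b₂) * H - D * H - s * D * (2 * zY - H / (2 * s) + b₁)
      = s * ((-2 * YA * H - 2 * D * zY) + b₂ * H + -b₁ * D) := by field_simp; ring
    _ ≤ s * ((M * (H + D) * H / 2 + 2 * (L * H) * D) + L * H * H + L * H * D) := by
      gcongr
      · refine (neg_dissipation_le hcs).trans ?_
        gcongr
        exact (abs_le.1 h₀).2
      · exact (abs_le.1 h₂).2
      · exact neg_le.1 (abs_le.1 h₁).1
    _ ≤ H * (s * (M * (H + D) + L * H + 3 * L * D)) := by
      have : 0 ≤ s * (M * (H + D) * H) := by positivity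
      linear_combination this / 2
    _ ≤ H * ((M * (R + 1) + L * (R + 3)) * (H + s * D)) := by gcongr
    _ = (M * (R + 1) + L * (R + 3)) * H * (H + s * D) := by ring

/-- The Gaussian mass `∫ w² G dρ` of `w` at time `t`. The mass of the slope `p` is the energy. -/
noncomputable def gaussMass (x₀ x₁ T ε : ℝ) (w α ρ : ℝ × ℝ → ℝ) (t : ℝ) : ℝ :=
  ∫ x in x₀..x₁, w (x, t) ^ 2 * α (x, t) * gaussWeight T ε ρ (x, t)

/-- At time `t`, the net boundary flux in each of the three integrations by parts is at most `L`
times the mass. -/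
structure FluxBound (x₀ x₁ T ε : ℝ) (w α ρ p : ℝ × ℝ → ℝ) (L t : ℝ) : Prop where
  grad : |gradFlux T ε w ρ p (x₁, t) - gradFlux T ε w ρ p (x₀, t)| ≤ L * gaussMass x₀ x₁ T ε w α ρ t
  mass : |massFlux x₀ x₁ T ε w ρ (x₁, t) - massFlux x₀ x₁ T ε w ρ (x₀, t)| ≤
    L * gaussMass x₀ x₁ T ε w α ρ t
  energy : |energyFlux x₀ x₁ T ε w ρ p (x₁, t) - energyFlux x₀ x₁ T ε w ρ p (x₀, t)| ≤
    L * gaussMass x₀ x₁ T ε w α ρ t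

namespace ArclengthCoordinate

variable {x₀ x₁ T ε t : ℝ} {w α ρ p : ℝ × ℝ → ℝ}

local notation "S" => spaceTimeRect x₀ x₁ T
local notation "∂ₓ" => derivX (spaceTimeRect x₀ x₁ T)
local notation "∂ₜ" => derivT (spaceTimeRect x₀ x₁ T)
local notation "G" => gaussWeight T ε ρ
local notation "Y" => driftDeriv x₀ x₁ T ε w ρ p
local notation "A" => gaussLaplace x₀ x₁ T ε α ρ p
local notation "mass" => gaussMass x₀ x₁ T ε w α ρ
local notation "energy" => gaussMass x₀ x₁ T ε p α ρ

theorem hasDerivWithinAt_mass (h : ArclengthCoordinate x₀ x₁ T w α ρ p) (hε : 0 < ε)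
    (ht : t ∈ Icc 0 T) : HasDerivWithinAt mass
      (2 * (∫ x in x₀..x₁, w (x, t) * Y (x, t) * α (x, t) * G (x, t)) -
        mass t / (2 * (T + ε - t)) +
        (massFlux x₀ x₁ T ε w ρ (x₁, t) - massFlux x₀ x₁ T ε w ρ (x₀, t))) (Icc 0 T) t := by
  have hx := h.left_lt_right
  have hmass := h.contDiffOn_sq_mul hε h.contDiffOn_sol
  have hflux := h.contDiffOn_massFlux hε
  have hwork : ContDiffOn ℝ ∞ (fun z => w z * Y z * α z * G z) S :=
    ((h.contDiffOn_sol.mul (h.contDiffOn_driftDeriv hε)).mul h.contDiffOn_density).mul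
      (h.contDiffOn_weight hε)
  have hmassInt := intervalIntegrable_timeSlice hx.le hmass.continuousOn ht
  have hfluxInt := intervalIntegrable_timeSlice hx.le
    (contDiffOn_derivX h.uniqueDiffOn hflux).continuousOn ht
  have hworkInt := intervalIntegrable_timeSlice hx.le hwork.continuousOn ht
  refine (hasDerivWithinAt_integral_timeSlice hx h.time_pos hmass ht).congr_deriv ?_
  rw [← integral_derivX hx h.time_pos hflux ht, gaussMass, ← intervalIntegral.integral_const_mul,
    ← intervalIntegral.integral_div,
    ← intervalIntegral.integral_sub (hworkInt.const_mul 2) (hmassInt.div_const _),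
    ← intervalIntegral.integral_add ((hworkInt.const_mul 2).sub (hmassInt.div_const _)) hfluxInt]
  refine intervalIntegral.integral_congr fun x hxm => ?_
  rw [uIcc_of_le hx.le] at hxm
  exact h.derivT_massDensity hε ⟨hxm, ht⟩

theorem energy_add_integral (h : ArclengthCoordinate x₀ x₁ T w α ρ p) (hε : 0 < ε)
    (ht : t ∈ Icc 0 T) :
    energy t + (∫ x in x₀..x₁, w (x, t) * A (x, t) * α (x, t) * G (x, t)) =
      gradFlux T ε w ρ p (x₁, t) - gradFlux T ε w ρ p (x₀, t) := by
  have hx := h.left_lt_right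
  have hwork : ContDiffOn ℝ ∞ (fun z => w z * A z * α z * G z) S :=
    ((h.contDiffOn_sol.mul (h.contDiffOn_laplace hε)).mul h.contDiffOn_density).mul
      (h.contDiffOn_weight hε)
  rw [← integral_derivX hx h.time_pos (h.contDiffOn_gradFlux hε) ht, gaussMass,
    ← intervalIntegral.integral_add
      (intervalIntegrable_timeSlice hx.le
        (h.contDiffOn_sq_mul hε h.contDiffOn_slope).continuousOn ht)
      (intervalIntegrable_timeSlice hx.le hwork.continuousOn ht)]
  refine intervalIntegral.integral_congr fun x hxm => ?_
  rw [uIcc_of_le hx.le] at hxm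
  exact (h.derivX_gradFlux hε ⟨hxm, ht⟩).symm

theorem hasDerivWithinAt_energy (h : ArclengthCoordinate x₀ x₁ T w α ρ p) (hε : 0 < ε)
    (ht : t ∈ Icc 0 T) : HasDerivWithinAt energy
      (-2 * (∫ x in x₀..x₁, Y (x, t) * A (x, t) * α (x, t) * G (x, t)) +
        energy t / (2 * (T + ε - t)) +
        (energyFlux x₀ x₁ T ε w ρ p (x₁, t) - energyFlux x₀ x₁ T ε w ρ p (x₀, t)))
      (Icc 0 T) t := by
  have hx := h.left_lt_right
  have henergy := h.contDiffOn_sq_mul hε h.contDiffOn_slope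
  have hflux := h.contDiffOn_energyFlux hε
  have hwork : ContDiffOn ℝ ∞ (fun z => Y z * A z * α z * G z) S :=
    (((h.contDiffOn_driftDeriv hε).mul (h.contDiffOn_laplace hε)).mul h.contDiffOn_density).mul
      (h.contDiffOn_weight hε)
  have henergyInt := intervalIntegrable_timeSlice hx.le henergy.continuousOn ht
  have hfluxInt := intervalIntegrable_timeSlice hx.le
    (contDiffOn_derivX h.uniqueDiffOn hflux).continuousOn ht
  have hworkInt := intervalIntegrable_timeSlice hx.le hwork.continuousOn ht
  refine (hasDerivWithinAt_integral_timeSlice hx h.time_pos henergy ht).congr_deriv ?_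
  rw [← integral_derivX hx h.time_pos hflux ht, gaussMass, ← intervalIntegral.integral_const_mul,
    ← intervalIntegral.integral_div,
    ← intervalIntegral.integral_add (hworkInt.const_mul (-2)) (henergyInt.div_const _),
    ← intervalIntegral.integral_add ((hworkInt.const_mul (-2)).add (henergyInt.div_const _))
      hfluxInt]
  refine intervalIntegral.integral_congr fun x hxm => ?_
  rw [uIcc_of_le hx.le] at hxm
  exact h.derivT_energyDensity hε ⟨hxm, ht⟩

theorem mass_nonneg (h : ArclengthCoordinate x₀ x₁ T w α ρ p) (v : ℝ × ℝ → ℝ)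
    (ht : t ∈ Icc 0 T) : 0 ≤ gaussMass x₀ x₁ T ε v α ρ t :=
  intervalIntegral.integral_nonneg h.left_lt_right.le fun _ hxm =>
    mul_nonneg (mul_nonneg (sq_nonneg _) (h.density_pos _ ⟨hxm, ht⟩).le) (gaussWeight_pos ..).le

variable {M L : ℝ}

theorem frequency_deriv_le (h : ArclengthCoordinate x₀ x₁ T w α ρ p) (hε : 0 < ε) (hε₁ : ε ≤ 1)
    (ht : t ∈ Icc 0 T) (hL : 0 ≤ L) (hYA : ∀ z ∈ S, |Y z - A z| ≤ M * (|w z| + |p z|))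
    (hpos : 0 < mass t) (hflux : FluxBound x₀ x₁ T ε w α ρ p L t) :
    (T + ε - t) * derivWithin energy (Icc 0 T) t * mass t - energy t * mass t -
        (T + ε - t) * energy t * derivWithin mass (Icc 0 T) t ≤
      (2 * M ^ 2 * (T + 2) + L * (T + 4)) * mass t * (mass t + (T + ε - t) * energy t) := by
  have hIcc := uniqueDiffOn_Icc h.time_pos t ht
  have hw := continuousOn_timeSlice h.contDiffOn_sol.continuousOn ht
  have hy := continuousOn_timeSlice (h.contDiffOn_driftDeriv hε).continuousOn ht
  have hA := continuousOn_timeSlice (h.contDiffOn_laplace hε).continuousOn ht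
  have hk : ContinuousOn (fun x => α (x, t) * G (x, t)) (Icc x₀ x₁) :=
    (continuousOn_timeSlice h.contDiffOn_density.continuousOn ht).mul
      (continuousOn_timeSlice (h.contDiffOn_weight hε).continuousOn ht)
  have hk₀ : ∀ x ∈ Icc x₀ x₁, 0 ≤ α (x, t) * G (x, t) := fun x hx =>
    (mul_pos (h.density_pos _ ⟨hx, ht⟩) (gaussWeight_pos ..)).le
  have hcs := sq_half_integral_add_le h.left_lt_right.le hw hy hA hk hk₀
    (by simpa only [gaussMass, mul_assoc] using hpos)
  have hdefect := integral_sub_sq_mul_le h.left_lt_right.le hw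
    (continuousOn_timeSlice h.contDiffOn_slope.continuousOn ht) hy hA hk hk₀
    fun x hx => hYA (x, t) ⟨hx, ht⟩
  simp only [← mul_assoc] at hcs hdefect
  rw [(h.hasDerivWithinAt_mass hε ht).derivWithin hIcc,
    (h.hasDerivWithinAt_energy hε ht).derivWithin hIcc]
  refine (frequency_deriv_le_of_dissipation (R := T + 1) (by linarith [ht.2]) (by linarith [ht.1])
    hpos.le (h.mass_nonneg p ht) (by positivity) hL hcs hdefect
    (by rw [h.energy_add_integral hε ht]; exact hflux.grad) hflux.mass hflux.energy).trans_eq ?_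
  ring

theorem le_derivWithin_mass (h : ArclengthCoordinate x₀ x₁ T w α ρ p) (hε : 0 < ε)
    (ht : t ∈ Icc 0 T) (hM : 0 ≤ M) (hYA : ∀ z ∈ S, |Y z - A z| ≤ M * (|w z| + |p z|))
    (hflux : FluxBound x₀ x₁ T ε w α ρ p L t) :
    -((2 + 4 * M) * energy t + (4 * M + 3 * L + 1 / (T + ε - t)) * mass t) ≤
      derivWithin mass (Icc 0 T) t := by
  have hk : ContinuousOn (fun x => α (x, t) * G (x, t)) (Icc x₀ x₁) :=
    (continuousOn_timeSlice h.contDiffOn_density.continuousOn ht).mul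
      (continuousOn_timeSlice (h.contDiffOn_weight hε).continuousOn ht)
  have hdefect := integral_mul_sub_integral_mul_le h.left_lt_right.le
    (continuousOn_timeSlice h.contDiffOn_sol.continuousOn ht)
    (continuousOn_timeSlice h.contDiffOn_slope.continuousOn ht)
    (continuousOn_timeSlice (h.contDiffOn_driftDeriv hε).continuousOn ht)
    (continuousOn_timeSlice (h.contDiffOn_laplace hε).continuousOn ht) hk
    (fun x hx => (mul_pos (h.density_pos _ ⟨hx, ht⟩) (gaussWeight_pos ..)).le) hM
    fun x hx => hYA (x, t) ⟨hx, ht⟩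
  simp only [← mul_assoc] at hdefect
  change _ ≤ 2 * M * (mass t + energy t) at hdefect
  have hremaining : 0 < T + ε - t := by linarith [ht.2]
  have hmass : mass t / (2 * (T + ε - t)) ≤ 1 / (T + ε - t) * mass t := by
    rw [div_mul_eq_mul_div, one_mul]
    exact div_le_div_of_nonneg_left (h.mass_nonneg w ht) hremaining (by linarith)
  rw [(h.hasDerivWithinAt_mass hε ht).derivWithin (uniqueDiffOn_Icc h.time_pos t ht)]
  linarith [h.energy_add_integral hε ht, (abs_le.1 hflux.grad).1, (abs_le.1 hflux.mass).1]

theorem frequencySystem (h : ArclengthCoordinate x₀ x₁ T w α ρ p) (hε : 0 < ε) (hε₁ : ε ≤ 1)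
    (hM : 0 ≤ M) (hL : 0 ≤ L) (hYA : ∀ z ∈ S, |Y z - A z| ≤ M * (|w z| + |p z|))
    (hpos : ∀ t ∈ Icc 0 T, 0 < mass t)
    (hflux : ∀ t ∈ Icc 0 T, FluxBound x₀ x₁ T ε w α ρ p L t) :
    FrequencySystem T ε (2 * M ^ 2 * (T + 2) + L * (T + 4) + 4 * M + 2) mass energy
      (derivWithin mass (Icc 0 T)) (derivWithin energy (Icc 0 T)) where
  hasDerivWithinAt_mass _ ht :=
    (h.hasDerivWithinAt_mass hε ht).differentiableWithinAt.hasDerivWithinAt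
  hasDerivWithinAt_energy _ ht :=
    (h.hasDerivWithinAt_energy hε ht).differentiableWithinAt.hasDerivWithinAt
  mass_pos := hpos
  energy_nonneg _ ht := h.mass_nonneg p ht
  frequency_deriv_le t ht := by
    have hremaining : 0 < T + ε - t := by linarith [ht.2]
    have hmass := hpos t ht
    have henergy := h.mass_nonneg (ε := ε) p ht
    refine (h.frequency_deriv_le hε hε₁ ht hL hYA hmass (hflux t ht)).trans ?_
    exact mul_le_mul_of_nonneg_right
      (mul_le_mul_of_nonneg_right (by linarith) hmass.le) (by positivity)
  le_mass_deriv t ht := by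
    refine le_trans (neg_le_neg ?_) (h.le_derivWithin_mass hε ht hM hYA (hflux t ht))
    have hT := h.time_pos
    have hremaining : 0 < T + ε - t := by linarith [ht.2]
    have hLT : 0 ≤ L * T := by positivity
    have hMT : 0 ≤ 2 * M ^ 2 * (T + 2) := by positivity
    have hLM : 4 * M + 3 * L ≤ 2 * M ^ 2 * (T + 2) + L * (T + 4) + 4 * M + 2 := by linarith
    have hone : 1 ≤ 2 * M ^ 2 * (T + 2) + L * (T + 4) + 4 * M + 2 := by linarith
    exact add_le_add
      (mul_le_mul_of_nonneg_right (by linarith) (h.mass_nonneg p ht))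
      (mul_le_mul_of_nonneg_right
        (add_le_add hLM (div_le_div_of_nonneg_right hone hremaining.le)) (hpos t ht).le)

end ArclengthCoordinate

theorem exists_Icc_subset_uIcc {a e η : ℝ} (hae : a ≠ e) (hη : 0 < η) :
    ∃ u v r, u < v ∧ 0 < r ∧ Icc u v ⊆ uIcc a e ∧ ∀ x ∈ Icc u v, r ≤ |x - e| ∧ |x - e| < η := by
  have hc : 0 < min η |a - e| := lt_min hη (abs_pos.2 (sub_ne_zero.2 hae))
  have hcη : min η |a - e| ≤ η := min_le_left _ _
  have hca : min η |a - e| ≤ |a - e| := min_le_right _ _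
  set c := min η |a - e|
  rcases hae.lt_or_gt with hlt | hlt
  · rw [abs_of_neg (sub_neg.2 hlt)] at hca
    refine ⟨e - c / 2, e - c / 3, c / 3, by linarith, by positivity, ?_, fun x hx => ?_⟩
    · rw [uIcc_of_le hlt.le]
      exact Icc_subset_Icc (by linarith) (by linarith)
    · rw [abs_of_neg (by linarith [hx.2])]
      constructor <;> linarith [hx.1, hx.2]
  · rw [abs_of_pos (sub_pos.2 hlt)] at hca
    refine ⟨e + c / 3, e + c / 2, c / 3, by linarith, by positivity, ?_, fun x hx => ?_⟩
    · rw [uIcc_of_ge hlt.le]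
      exact Icc_subset_Icc (by linarith) (by linarith)
    · rw [abs_of_pos (by linarith [hx.1])]
      constructor <;> linarith [hx.1, hx.2]

theorem exists_pos_le_abs_near {x₀ x₁ T e : ℝ} {w : ℝ × ℝ → ℝ} (hT : 0 ≤ T)
    (hw : ContinuousOn w (spaceTimeRect x₀ x₁ T)) (he : e ∈ Icc x₀ x₁)
    (hne : ∀ t ∈ Icc 0 T, w (e, t) ≠ 0) :
    ∃ η > 0, ∃ m > 0, ∀ t ∈ Icc 0 T, ∀ x ∈ Icc x₀ x₁, |x - e| < η → m ≤ |w (x, t)| := by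
  have hwe : ContinuousOn (fun t => |w (e, t)|) (Icc 0 T) :=
    (hw.comp (f := fun t => (e, t)) (by fun_prop) fun t ht => ⟨he, ht⟩).abs
  obtain ⟨t₀, ht₀, hmin⟩ := isCompact_Icc.exists_isMinOn ⟨0, ⟨le_rfl, hT⟩⟩ hwe
  have hm : 0 < |w (e, t₀)| := abs_pos.2 (hne t₀ ht₀)
  obtain ⟨η, hη, hunif⟩ := Metric.uniformContinuousOn_iff.1
    ((isCompact_spaceTimeRect x₀ x₁ T).uniformContinuousOn_of_continuous hw) _ (half_pos hm)
  refine ⟨η, hη, |w (e, t₀)| / 2, half_pos hm, fun t ht x hx hxe => ?_⟩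
  have hclose := hunif (x, t) ⟨hx, ht⟩ (e, t) ⟨he, ht⟩
    (by simpa [Prod.dist_eq, Real.dist_eq, hη] using hxe)
  have hle : |w (e, t₀)| ≤ |w (e, t)| := hmin ht
  rw [Real.dist_eq, abs_sub_comm] at hclose
  linarith [abs_sub_abs_le_abs_sub (w (e, t)) (w (x, t))]

theorem gaussWeight_mul_one_add_le {T ε x e t d : ℝ} {ρ : ℝ × ℝ → ℝ} (ht : t < T + ε)
    (hd : ρ (x, t) ^ 2 + d ≤ ρ (e, t) ^ 2) :
    gaussWeight T ε ρ (e, t) * (1 + d / (4 * (T + ε - t))) ≤ gaussWeight T ε ρ (x, t) := by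
  have := sub_pos.2 ht
  calc gaussWeight T ε ρ (e, t) * (1 + d / (4 * (T + ε - t)))
      ≤ gaussWeight T ε ρ (e, t) * Real.exp (d / (4 * (T + ε - t))) := by
        refine mul_le_mul_of_nonneg_left ?_ (gaussWeight_pos ..).le
        rw [add_comm]
        exact Real.add_one_le_exp _
    _ ≤ gaussWeight T ε ρ (x, t) := by
        unfold gaussWeight
        rw [← Real.exp_add, Real.exp_le_exp, neg_add_le_iff_le_add, ← sub_eq_add_neg,
          le_sub_iff_add_le, ← add_div, add_comm]
        gcongr

namespace ArclengthCoordinate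

variable {x₀ x₁ T ε t x' e m : ℝ} {w α ρ p : ℝ × ℝ → ℝ}

local notation "S" => spaceTimeRect x₀ x₁ T

theorem exists_pos_le_density (h : ArclengthCoordinate x₀ x₁ T w α ρ p) :
    ∃ m > 0, ∀ z ∈ S, m ≤ α z := by
  obtain ⟨z, hz, hmin⟩ := (isCompact_spaceTimeRect x₀ x₁ T).exists_isMinOn
    ⟨(x₀, 0), ⟨left_mem_Icc.2 h.left_lt_right.le, left_mem_Icc.2 h.time_pos.le⟩⟩
    h.contDiffOn_density.continuousOn
  exact ⟨α z, h.density_pos z hz, fun y hy => hmin hy⟩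

theorem mul_sub_le_coord_sub (h : ArclengthCoordinate x₀ x₁ T w α ρ p) (hm : ∀ z ∈ S, m ≤ α z)
    (ht : t ∈ Icc 0 T) {x y : ℝ} (hx : x ∈ Icc x₀ x₁) (hy : y ∈ Icc x₀ x₁) (hxy : x ≤ y) :
    m * (y - x) ≤ ρ (y, t) - ρ (x, t) := by
  have hd : ∀ x ∈ interior (Icc x₀ x₁), HasDerivAt (fun x => ρ (x, t)) (α (x, t)) x := by
    intro x hxi
    rw [interior_Icc] at hxi
    have hz : (x, t) ∈ S := ⟨Ioo_subset_Icc_self hxi, ht⟩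
    rw [← h.derivX_coord _ hz]
    exact (hasDerivWithinAt_derivX h.contDiffOn_coord hz).hasDerivAt (Icc_mem_nhds hxi.1 hxi.2)
  exact (convex_Icc x₀ x₁).mul_sub_le_image_sub_of_le_deriv
    (continuousOn_timeSlice h.contDiffOn_coord.continuousOn ht)
    (fun x hxi => (hd x hxi).differentiableAt.differentiableWithinAt)
    (fun x hxi => (hd x hxi).deriv.symm ▸ hm _ ⟨interior_subset hxi, ht⟩) x hx y hy hxy

theorem sq_coord_add_sq_le (h : ArclengthCoordinate x₀ x₁ T w α ρ p) (hm₀ : 0 ≤ m)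
    (hm : ∀ z ∈ S, m ≤ α z) (ht : t ∈ Icc 0 T) (hx' : x' ∈ Icc x₀ x₁) (he : e ∈ Icc x₀ x₁)
    (hρ : ρ (x', t) = 0) {x : ℝ} (hx : x ∈ uIcc x' e) :
    ρ (x, t) ^ 2 + (m * (e - x)) ^ 2 ≤ ρ (e, t) ^ 2 := by
  have hxI : x ∈ Icc x₀ x₁ := uIcc_subset_Icc hx' he hx
  rcases mem_uIcc.1 hx with ⟨hxx, hxe⟩ | ⟨hxe, hxx⟩
  · have hle := h.mul_sub_le_coord_sub hm ht hx' hxI hxx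
    have hge := h.mul_sub_le_coord_sub hm ht hxI he hxe
    have hnonneg : 0 ≤ m * (x - x') := mul_nonneg hm₀ (sub_nonneg.2 hxx)
    have hnonneg' : 0 ≤ m * (e - x) := mul_nonneg hm₀ (sub_nonneg.2 hxe)
    nlinarith
  · have hle := h.mul_sub_le_coord_sub hm ht hxI hx' hxx
    have hge := h.mul_sub_le_coord_sub hm ht he hxI hxe
    have hnonneg : 0 ≤ m * (x' - x) := mul_nonneg hm₀ (sub_nonneg.2 hxx)
    have hnonneg' : 0 ≤ m * (x - e) := mul_nonneg hm₀ (sub_nonneg.2 hxe)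
    nlinarith

theorem intervalIntegrable_massDensity (h : ArclengthCoordinate x₀ x₁ T w α ρ p) (hε : 0 < ε)
    {v : ℝ × ℝ → ℝ} (hv : ContDiffOn ℝ ∞ v S) (ht : t ∈ Icc 0 T) : IntervalIntegrable
      (fun x => v (x, t) ^ 2 * α (x, t) * gaussWeight T ε ρ (x, t)) volume x₀ x₁ :=
  intervalIntegrable_timeSlice h.left_lt_right.le (h.contDiffOn_sq_mul hε hv).continuousOn ht

theorem mul_sub_le_mass (h : ArclengthCoordinate x₀ x₁ T w α ρ p) (hε : 0 < ε) (ht : t ∈ Icc 0 T)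
    {u v c : ℝ} (hu : x₀ ≤ u) (huv : u ≤ v) (hv : v ≤ x₁)
    (hc : ∀ x ∈ Icc u v, c ≤ w (x, t) ^ 2 * α (x, t) * gaussWeight T ε ρ (x, t)) :
    c * (v - u) ≤ gaussMass x₀ x₁ T ε w α ρ t := by
  have hint := h.intervalIntegrable_massDensity hε h.contDiffOn_sol ht
  calc c * (v - u) = ∫ _ in u..v, c := by
        rw [intervalIntegral.integral_const, smul_eq_mul, mul_comm]
    _ ≤ ∫ x in u..v, w (x, t) ^ 2 * α (x, t) * gaussWeight T ε ρ (x, t) :=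
        intervalIntegral.integral_mono_on huv intervalIntegrable_const
          (hint.mono_set (uIcc_subset_uIcc (mem_uIcc_of_le hu (huv.trans hv))
            (mem_uIcc_of_le (hu.trans huv) hv))) hc
    _ ≤ gaussMass x₀ x₁ T ε w α ρ t := by
        refine intervalIntegral.integral_mono_interval hu huv hv ?_ hint
        filter_upwards [ae_restrict_mem measurableSet_Ioc] with x hx
        have hα := h.density_pos (x, t) ⟨Ioc_subset_Icc_self hx, ht⟩
        exact mul_nonneg (mul_nonneg (sq_nonneg _) hα.le) (gaussWeight_pos ..).le

theorem weight_le_mass_of_Icc (h : ArclengthCoordinate x₀ x₁ T w α ρ p) (hε : 0 < ε)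
    (ht : t ∈ Icc 0 T) {u v c d : ℝ} (hu : x₀ ≤ u) (huv : u < v) (hv : v ≤ x₁) (hc : 0 < c)
    (hm : 0 < m) (hd : 0 < d) (hw : ∀ x ∈ Icc u v, c ≤ |w (x, t)|) (hα : ∀ z ∈ S, m ≤ α z)
    (hρ : ∀ x ∈ Icc u v, ρ (x, t) ^ 2 + d ≤ ρ (e, t) ^ 2) :
    (1 + 1 / (T + ε - t)) * gaussWeight T ε ρ (e, t) ≤
      (1 + 4 / d) / (c ^ 2 * m * (v - u)) * gaussMass x₀ x₁ T ε w α ρ t := by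
  have hs : 0 < T + ε - t := by linarith [ht.2]
  have hlen : 0 < v - u := sub_pos.2 huv
  have hsub : Icc u v ⊆ Icc x₀ x₁ := Icc_subset_Icc hu hv
  have hweight := gaussWeight_pos T ε ρ (e, t)
  have hmass := h.mul_sub_le_mass hε ht hu huv.le hv fun x hx =>
    mul_le_mul (mul_le_mul (sq_le_sq.2 ((abs_of_pos hc).trans_le (hw x hx))) (hα _ ⟨hsub hx, ht⟩)
        hm.le (sq_nonneg _))
      (gaussWeight_mul_one_add_le (by linarith) (hρ x hx)) (by positivity)
      (mul_nonneg (sq_nonneg _) (h.density_pos _ ⟨hsub hx, ht⟩).le)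
  have hfactor : 1 + 1 / (T + ε - t) ≤ (1 + 4 / d) * (1 + d / (4 * (T + ε - t))) := by
    have hrest : 0 ≤ 4 / d + d / (4 * (T + ε - t)) := by positivity
    refine (le_add_of_nonneg_right hrest).trans_eq ?_
    field_simp
    ring
  rw [div_mul_eq_mul_div, le_div_iff₀ (mul_pos (by positivity) hlen)]
  calc (1 + 1 / (T + ε - t)) * gaussWeight T ε ρ (e, t) * (c ^ 2 * m * (v - u))
      ≤ (1 + 4 / d) * (1 + d / (4 * (T + ε - t))) * gaussWeight T ε ρ (e, t) *
          (c ^ 2 * m * (v - u)) := by gcongr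
    _ = (1 + 4 / d) * (c ^ 2 * m *
          (gaussWeight T ε ρ (e, t) * (1 + d / (4 * (T + ε - t)))) * (v - u)) := by ring
    _ ≤ (1 + 4 / d) * gaussMass x₀ x₁ T ε w α ρ t := by gcongr

-- Between `x'` and `e` the weight is larger than at `e` by a factor `exp (d / (4 * s))`, which
-- absorbs the factor `1 / s`.
theorem exists_weight_le_mass (h : ArclengthCoordinate x₀ x₁ T w α ρ p) (hx' : x' ∈ Icc x₀ x₁)
    (he : e ∈ Icc x₀ x₁) (hne : x' ≠ e) (hρ : ∀ t ∈ Icc 0 T, ρ (x', t) = 0)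
    (hw : ∀ t ∈ Icc 0 T, w (e, t) ≠ 0) :
    ∃ C > 0, ∀ ε, 0 < ε → ∀ t ∈ Icc 0 T,
      (1 + 1 / (T + ε - t)) * gaussWeight T ε ρ (e, t) ≤ C * gaussMass x₀ x₁ T ε w α ρ t := by
  obtain ⟨m, hm, hα⟩ := h.exists_pos_le_density
  obtain ⟨η, hη, c, hc, hcw⟩ := exists_pos_le_abs_near h.time_pos.le h.contDiffOn_sol.continuousOn
    he hw
  obtain ⟨u, v, r, huv, hr, hsub, hdist⟩ := exists_Icc_subset_uIcc hne hη
  have hsubI : Icc u v ⊆ Icc x₀ x₁ := hsub.trans (uIcc_subset_Icc hx' he)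
  refine ⟨(1 + 4 / (m * r) ^ 2) / (c ^ 2 * m * (v - u)), mul_pos (by positivity)
    (inv_pos.2 (mul_pos (by positivity) (sub_pos.2 huv))), fun ε hε t ht => ?_⟩
  refine h.weight_le_mass_of_Icc hε ht (hsubI (left_mem_Icc.2 huv.le)).1 huv
    (hsubI (right_mem_Icc.2 huv.le)).2 hc hm (by positivity)
    (fun x hx => hcw t ht x (hsubI hx) (hdist x hx).2) hα fun x hx => ?_
  have hgap : (m * r) ^ 2 ≤ (m * (e - x)) ^ 2 := by
    rw [← sq_abs (m * (e - x)), abs_mul, abs_of_pos hm, abs_sub_comm]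
    gcongr
    exact (hdist x hx).1
  linarith [h.sq_coord_add_sq_le hm.le hα ht hx' he (hρ t ht) (hsub hx)]

end ArclengthCoordinate

/-- A bound `B ≥ 1` at the point `z` for the solution, its slope, the density and the coordinate,
and for the time derivatives of the solution and of the coordinate. -/
structure DataBound (x₀ x₁ T : ℝ) (w α ρ p : ℝ × ℝ → ℝ) (B : ℝ) (z : ℝ × ℝ) : Prop where
  one_le : 1 ≤ B
  sol : |w z| ≤ B
  slope : |p z| ≤ B
  density : |α z| ≤ B
  coord : |ρ z| ≤ B
  derivT_sol : |derivT (spaceTimeRect x₀ x₁ T) w z| ≤ B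
  derivT_coord : |derivT (spaceTimeRect x₀ x₁ T) ρ z| ≤ B

namespace DataBound

variable {x₀ x₁ T ε B : ℝ} {w α ρ p : ℝ × ℝ → ℝ} {z : ℝ × ℝ}

theorem abs_gaussDrift_le (h : DataBound x₀ x₁ T w α ρ p B z) (hz : z.2 < T + ε) :
    |gaussDrift x₀ x₁ T ε ρ z| ≤ B * (1 + 1 / (T + ε - z.2)) := by
  have hs : 0 < T + ε - z.2 := sub_pos.2 hz
  have hB := h.one_le
  calc |gaussDrift x₀ x₁ T ε ρ z|
      ≤ |derivT (spaceTimeRect x₀ x₁ T) ρ z| + |ρ z| / (2 * (T + ε - z.2)) := by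
        refine (abs_add_le _ _).trans_eq ?_
        rw [abs_div, abs_of_pos (mul_pos two_pos hs)]
    _ ≤ B + B / (T + ε - z.2) := by
        gcongr
        exacts [h.derivT_coord, h.coord, by linarith]
    _ = B * (1 + 1 / (T + ε - z.2)) := by ring

theorem abs_driftDeriv_le (h : DataBound x₀ x₁ T w α ρ p B z) (hz : z.2 < T + ε) :
    |driftDeriv x₀ x₁ T ε w ρ p z| ≤ 2 * B ^ 2 * (1 + 1 / (T + ε - z.2)) := by
  have := sub_pos.2 hz
  have hB := h.one_le
  have hq : 1 ≤ 1 + 1 / (T + ε - z.2) := le_add_of_nonneg_right (by positivity)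
  calc |driftDeriv x₀ x₁ T ε w ρ p z|
      ≤ |derivT (spaceTimeRect x₀ x₁ T) w z| + |gaussDrift x₀ x₁ T ε ρ z| * |p z| :=
        (abs_sub _ _).trans_eq (by rw [abs_mul])
    _ ≤ B * (B * (1 + 1 / (T + ε - z.2))) + B * (1 + 1 / (T + ε - z.2)) * B := by
        refine add_le_add (h.derivT_sol.trans
          (le_mul_of_one_le_right (by linarith) (one_le_mul_of_one_le_of_one_le hB hq))) ?_
        gcongr
        exacts [h.abs_gaussDrift_le hz, h.slope]
    _ = 2 * B ^ 2 * (1 + 1 / (T + ε - z.2)) := by ring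

theorem abs_gradFlux_le (h : DataBound x₀ x₁ T w α ρ p B z) (hz : z.2 < T + ε) :
    |gradFlux T ε w ρ p z| ≤ 5 * B ^ 3 * ((1 + 1 / (T + ε - z.2)) * gaussWeight T ε ρ z) := by
  have := sub_pos.2 hz
  have hB := h.one_le
  have hG := gaussWeight_pos T ε ρ z
  have hq : 1 ≤ 1 + 1 / (T + ε - z.2) := le_add_of_nonneg_right (by positivity)
  rw [gradFlux, abs_mul, abs_mul, abs_of_pos hG, ← mul_assoc]
  refine mul_le_mul_of_nonneg_right ?_ hG.le
  calc |w z| * |p z| ≤ B * B := by gcongr; exacts [h.sol, h.slope]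
    _ ≤ B * B * (5 * B * (1 + 1 / (T + ε - z.2))) := by
        refine le_mul_of_one_le_right (by positivity) ?_
        exact one_le_mul_of_one_le_of_one_le (by linarith) hq
    _ = 5 * B ^ 3 * (1 + 1 / (T + ε - z.2)) := by ring

theorem abs_massFlux_le (h : DataBound x₀ x₁ T w α ρ p B z) (hz : z.2 < T + ε) :
    |massFlux x₀ x₁ T ε w ρ z| ≤
      5 * B ^ 3 * ((1 + 1 / (T + ε - z.2)) * gaussWeight T ε ρ z) := by
  have := sub_pos.2 hz
  have hB := h.one_le
  have hG := gaussWeight_pos T ε ρ z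
  rw [massFlux, abs_mul, abs_mul, abs_of_pos hG, abs_pow, ← mul_assoc]
  refine mul_le_mul_of_nonneg_right ?_ hG.le
  calc |w z| ^ 2 * |gaussDrift x₀ x₁ T ε ρ z| ≤ B ^ 2 * (B * (1 + 1 / (T + ε - z.2))) := by
        gcongr
        exacts [h.sol, h.abs_gaussDrift_le hz]
    _ = 1 * B ^ 3 * (1 + 1 / (T + ε - z.2)) := by ring
    _ ≤ 5 * B ^ 3 * (1 + 1 / (T + ε - z.2)) := by gcongr; norm_num

theorem abs_energyFlux_le (h : DataBound x₀ x₁ T w α ρ p B z) (hz : z.2 < T + ε) :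
    |energyFlux x₀ x₁ T ε w ρ p z| ≤
      5 * B ^ 3 * ((1 + 1 / (T + ε - z.2)) * gaussWeight T ε ρ z) := by
  have := sub_pos.2 hz
  have hB := h.one_le
  have hG := gaussWeight_pos T ε ρ z
  calc |energyFlux x₀ x₁ T ε w ρ p z|
      ≤ |p z| ^ 2 * |gaussDrift x₀ x₁ T ε ρ z| * gaussWeight T ε ρ z +
          2 * (|p z| * |driftDeriv x₀ x₁ T ε w ρ p z| * gaussWeight T ε ρ z) := by
        refine (abs_add_le _ _).trans_eq ?_
        simp only [abs_mul, abs_pow, abs_two, abs_of_pos hG]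
    _ ≤ B ^ 2 * (B * (1 + 1 / (T + ε - z.2))) * gaussWeight T ε ρ z +
          2 * (B * (2 * B ^ 2 * (1 + 1 / (T + ε - z.2))) * gaussWeight T ε ρ z) := by
        gcongr
        exacts [h.slope, h.abs_gaussDrift_le hz, h.slope, h.abs_driftDeriv_le hz]
    _ = 5 * B ^ 3 * ((1 + 1 / (T + ε - z.2)) * gaussWeight T ε ρ z) := by ring

end DataBound

theorem exp_neg_le_gaussWeight {T ε B : ℝ} {ρ : ℝ × ℝ → ℝ} {z : ℝ × ℝ} (hz : z.2 < T)
    (hε : 0 ≤ ε) (hρ : |ρ z| ≤ B) :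
    Real.exp (-(B ^ 2 / (4 * (T - z.2)))) ≤ gaussWeight T ε ρ z := by
  have := sub_pos.2 hz
  rw [gaussWeight, Real.exp_le_exp, neg_le_neg_iff]
  refine div_le_div₀ (sq_nonneg B) (sq_le_sq.2 (hρ.trans (le_abs_self B))) (by positivity) ?_
  linarith

theorem gaussWeight_le_one {x₀ x₁ T ε : ℝ} {ρ : ℝ × ℝ → ℝ} {z : ℝ × ℝ} (hε : 0 < ε)
    (hz : z ∈ spaceTimeRect x₀ x₁ T) : gaussWeight T ε ρ z ≤ 1 := by
  have hs := time_remaining_pos hε hz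
  rw [gaussWeight, Real.exp_le_one_iff, neg_nonpos]
  positivity

namespace ArclengthCoordinate

variable {x₀ x₁ T x' M : ℝ} {w α ρ p : ℝ × ℝ → ℝ}

local notation "S" => spaceTimeRect x₀ x₁ T
local notation "∂ₓ" => derivX (spaceTimeRect x₀ x₁ T)
local notation "∂ₜ" => derivT (spaceTimeRect x₀ x₁ T)
local notation "G[" ε "]" => gaussWeight T ε ρ
local notation "mass[" ε "]" => gaussMass x₀ x₁ T ε w α ρ
local notation "energy[" ε "]" => gaussMass x₀ x₁ T ε p α ρ

theorem exists_dataBound (h : ArclengthCoordinate x₀ x₁ T w α ρ p) :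
    ∃ B, ∀ z ∈ S, DataBound x₀ x₁ T w α ρ p B z := by
  have hcont := ((((h.contDiffOn_sol.continuousOn.abs.add h.contDiffOn_slope.continuousOn.abs).add
    h.contDiffOn_density.continuousOn.abs).add h.contDiffOn_coord.continuousOn.abs).add
    (contDiffOn_derivT h.uniqueDiffOn h.contDiffOn_sol).continuousOn.abs).add
    (contDiffOn_derivT h.uniqueDiffOn h.contDiffOn_coord).continuousOn.abs
  obtain ⟨B, hB₀, hB⟩ := exists_abs_le_of_continuousOn_spaceTimeRect hcont
  have hsum := fun z hz => (le_abs_self _).trans (hB z hz)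
  simp only [Pi.add_apply] at hsum
  refine ⟨B + 1, fun z hz => ?_⟩
  have hz' := hsum z hz
  have hw := abs_nonneg (w z)
  have hp := abs_nonneg (p z)
  have hα := abs_nonneg (α z)
  have hρ := abs_nonneg (ρ z)
  have hwt := abs_nonneg (∂ₜ w z)
  have hρt := abs_nonneg (∂ₜ ρ z)
  constructor <;> linarith

theorem exists_lateral_weight_le_mass (h : ArclengthCoordinate x₀ x₁ T w α ρ p)
    (hx' : x' ∈ Ioo x₀ x₁) (hρ : ∀ t ∈ Icc 0 T, ρ (x', t) = 0)
    (hw₀ : ∀ t ∈ Icc 0 T, w (x₀, t) ≠ 0) (hw₁ : ∀ t ∈ Icc 0 T, w (x₁, t) ≠ 0) :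
    ∃ C > 0, ∀ ε, 0 < ε → ∀ t ∈ Icc 0 T, ∀ e ∈ ({x₀, x₁} : Set ℝ),
      (1 + 1 / (T + ε - t)) * G[ε] (e, t) ≤ C * mass[ε] t := by
  have hx := h.left_lt_right.le
  have hx'I := Ioo_subset_Icc_self hx'
  obtain ⟨C₀, hC₀, hle₀⟩ := h.exists_weight_le_mass hx'I (left_mem_Icc.2 hx) hx'.1.ne' hρ hw₀
  obtain ⟨C₁, -, hle₁⟩ := h.exists_weight_le_mass hx'I (right_mem_Icc.2 hx) hx'.2.ne hρ hw₁
  refine ⟨max C₀ C₁, lt_max_of_lt_left hC₀, fun ε hε t ht e he => ?_⟩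
  have hmass : 0 ≤ mass[ε] t := h.mass_nonneg w ht
  rcases he with rfl | rfl
  · exact (hle₀ ε hε t ht).trans (mul_le_mul_of_nonneg_right (le_max_left _ _) hmass)
  · exact (hle₁ ε hε t ht).trans (mul_le_mul_of_nonneg_right (le_max_right _ _) hmass)

theorem fluxBound (h : ArclengthCoordinate x₀ x₁ T w α ρ p) {ε t B C : ℝ} (hε : 0 < ε)
    (ht : t ∈ Icc 0 T) (hB : ∀ z ∈ S, DataBound x₀ x₁ T w α ρ p B z)
    (hC : ∀ e ∈ ({x₀, x₁} : Set ℝ), (1 + 1 / (T + ε - t)) * G[ε] (e, t) ≤ C * mass[ε] t) :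
    FluxBound x₀ x₁ T ε w α ρ p (10 * B ^ 3 * C) t := by
  have hx := h.left_lt_right.le
  have ht' : t < T + ε := by linarith [ht.2]
  have hdata₀ := hB (x₀, t) ⟨left_mem_Icc.2 hx, ht⟩
  have hdata₁ := hB (x₁, t) ⟨right_mem_Icc.2 hx, ht⟩
  have hB₀ : 0 ≤ 5 * B ^ 3 := by have := hdata₀.one_le; positivity
  have hle₀ := mul_le_mul_of_nonneg_left (hC x₀ (mem_insert x₀ {x₁})) hB₀
  have hle₁ := mul_le_mul_of_nonneg_left (hC x₁ (mem_insert_of_mem x₀ rfl)) hB₀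
  have hdiff : ∀ a b : ℝ, |a| ≤ 5 * B ^ 3 * (C * mass[ε] t) → |b| ≤ 5 * B ^ 3 * (C * mass[ε] t) →
      |a - b| ≤ 10 * B ^ 3 * C * mass[ε] t := fun a b ha hb => by linarith [abs_sub a b]
  constructor
  · exact hdiff _ _ ((hdata₁.abs_gradFlux_le ht').trans hle₁)
      ((hdata₀.abs_gradFlux_le ht').trans hle₀)
  · exact hdiff _ _ ((hdata₁.abs_massFlux_le ht').trans hle₁)
      ((hdata₀.abs_massFlux_le ht').trans hle₀)
  · exact hdiff _ _ ((hdata₁.abs_energyFlux_le ht').trans hle₁)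
      ((hdata₀.abs_energyFlux_le ht').trans hle₀)

theorem exists_frequencySystem (h : ArclengthCoordinate x₀ x₁ T w α ρ p)
    (hx' : x' ∈ Ioo x₀ x₁) (hρ : ∀ t ∈ Icc 0 T, ρ (x', t) = 0)
    (hw₀ : ∀ t ∈ Icc 0 T, w (x₀, t) ≠ 0) (hw₁ : ∀ t ∈ Icc 0 T, w (x₁, t) ≠ 0) (hM : 0 ≤ M)
    (hf : ∀ z ∈ S, |∂ₜ w z - ∂ₜ ρ z * p z - ∂ₓ p z / α z| ≤ M * (|w z| + |p z|)) :
    ∃ C ≥ 0, ∀ ε ∈ Ioc 0 1, FrequencySystem T ε C mass[ε] energy[ε]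
      (derivWithin mass[ε] (Icc 0 T)) (derivWithin energy[ε] (Icc 0 T)) := by
  have hT := h.time_pos
  obtain ⟨B, hB⟩ := h.exists_dataBound
  obtain ⟨C, hC, hedge⟩ := h.exists_lateral_weight_le_mass hx' hρ hw₀ hw₁
  have hB₁ : 1 ≤ B := (hB (x₀, 0) ⟨left_mem_Icc.2 h.left_lt_right.le, left_mem_Icc.2 hT.le⟩).one_le
  refine ⟨2 * M ^ 2 * (T + 2) + 10 * B ^ 3 * C * (T + 4) + 4 * M + 2, by positivity,
    fun ε hε => h.frequencySystem hε.1 hε.2 hM (by positivity) (fun z hz => ?_) (fun t ht => ?_)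
      fun t ht => h.fluxBound hε.1 ht hB (hedge ε hε.1 t ht)⟩
  · convert hf z hz using 2
    unfold driftDeriv gaussLaplace gaussDrift
    ring
  · have hs : 0 < T + ε - t := by linarith [hε.1, ht.2]
    exact pos_of_mul_pos_right ((mul_pos (by positivity) (gaussWeight_pos ..)).trans_le
      (hedge ε hε.1 t ht x₀ (mem_insert x₀ {x₁}))) hC.le

theorem exists_pos_le_mass_zero (h : ArclengthCoordinate x₀ x₁ T w α ρ p)
    (hx' : x' ∈ Ioo x₀ x₁) (hρ : ∀ t ∈ Icc 0 T, ρ (x', t) = 0)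
    (hw₀ : ∀ t ∈ Icc 0 T, w (x₀, t) ≠ 0) : ∃ c > 0, ∀ ε, 0 < ε → c ≤ mass[ε] 0 := by
  have h0 : (0 : ℝ) ∈ Icc 0 T := left_mem_Icc.2 h.time_pos.le
  have hx₀ : x₀ ∈ Icc x₀ x₁ := left_mem_Icc.2 h.left_lt_right.le
  obtain ⟨C, hC, hle⟩ := h.exists_weight_le_mass (Ioo_subset_Icc_self hx') hx₀ hx'.1.ne' hρ hw₀
  refine ⟨Real.exp (-(|ρ (x₀, 0)| ^ 2 / (4 * (T - 0)))) / C, by positivity, fun ε hε => ?_⟩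
  have hs : 0 < T + ε - 0 := by linarith [h.time_pos]
  rw [div_le_iff₀' hC]
  calc Real.exp (-(|ρ (x₀, 0)| ^ 2 / (4 * (T - 0)))) ≤ G[ε] (x₀, 0) :=
        exp_neg_le_gaussWeight h.time_pos hε.le le_rfl
    _ ≤ (1 + 1 / (T + ε - 0)) * G[ε] (x₀, 0) :=
        le_mul_of_one_le_left (gaussWeight_pos ..).le (le_add_of_nonneg_right (by positivity))
    _ ≤ C * mass[ε] 0 := hle ε hε 0 h0

theorem mass_le (h : ArclengthCoordinate x₀ x₁ T w α ρ p) {ε t C : ℝ} (hε : 0 < ε)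
    {v : ℝ × ℝ → ℝ} (hv : ContDiffOn ℝ ∞ v S) (ht : t ∈ Icc 0 T)
    (hC : ∀ x ∈ Icc x₀ x₁, v (x, t) ^ 2 * α (x, t) * G[ε] (x, t) ≤ C) :
    gaussMass x₀ x₁ T ε v α ρ t ≤ (x₁ - x₀) * C := by
  have hmono := intervalIntegral.integral_mono_on h.left_lt_right.le
    (h.intervalIntegrable_massDensity hε hv ht) intervalIntegrable_const hC
  rwa [intervalIntegral.integral_const, smul_eq_mul] at hmono

theorem exists_energy_le (h : ArclengthCoordinate x₀ x₁ T w α ρ p) :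
    ∃ E ≥ 0, ∀ ε, 0 < ε → ∀ t ∈ Icc 0 T, energy[ε] t ≤ E := by
  have hx := h.left_lt_right
  obtain ⟨B, hB₀, hB⟩ := exists_abs_le_of_continuousOn_spaceTimeRect
    ((h.contDiffOn_slope.pow 2).mul h.contDiffOn_density).continuousOn
  refine ⟨(x₁ - x₀) * B, mul_nonneg (sub_nonneg.2 hx.le) hB₀, fun ε hε t ht =>
    h.mass_le hε h.contDiffOn_slope ht fun x hxm => ?_⟩
  have hα := h.density_pos (x, t) ⟨hxm, ht⟩
  exact (mul_le_of_le_one_right (by positivity) (gaussWeight_le_one hε ⟨hxm, ht⟩)).trans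
    ((le_abs_self _).trans (hB _ ⟨hxm, ht⟩))

theorem exists_mass_lower_bound (h : ArclengthCoordinate x₀ x₁ T w α ρ p)
    (hx' : x' ∈ Ioo x₀ x₁) (hρ : ∀ t ∈ Icc 0 T, ρ (x', t) = 0)
    (hw₀ : ∀ t ∈ Icc 0 T, w (x₀, t) ≠ 0) (hw₁ : ∀ t ∈ Icc 0 T, w (x₁, t) ≠ 0) (hM : 0 ≤ M)
    (hf : ∀ z ∈ S, |∂ₜ w z - ∂ₜ ρ z * p z - ∂ₓ p z / α z| ≤ M * (|w z| + |p z|)) :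
    ∃ K : ℕ, ∃ c > 0, ∀ ε ∈ Ioc 0 1, c * ε ^ K ≤ mass[ε] T := by
  have hT := h.time_pos
  obtain ⟨C, hC, hsystem⟩ := h.exists_frequencySystem hx' hρ hw₀ hw₁ hM hf
  obtain ⟨c, hc, hmass⟩ := h.exists_pos_le_mass_zero hx' hρ hw₀
  obtain ⟨E, hE, henergy⟩ := h.exists_energy_le
  obtain ⟨K, hK⟩ := exists_nat_ge (C * (1 + (1 + (T + 1) * E / c) * Real.exp (C * T)))
  refine ⟨K, Real.exp (-(C * T)) / (T + 1) ^ K * c, by positivity, fun ε hε => ?_⟩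
  have hfrequency : (T + ε) * energy[ε] 0 ≤ (T + 1) * E / c * mass[ε] 0 := by
    calc (T + ε) * energy[ε] 0 ≤ (T + 1) * E := by
          gcongr
          exacts [h.mass_nonneg p (left_mem_Icc.2 hT.le), hε.2,
            henergy ε hε.1 0 (left_mem_Icc.2 hT.le)]
      _ = (T + 1) * E / c * c := by field_simp
      _ ≤ (T + 1) * E / c * mass[ε] 0 := by
          gcongr
          exact hmass ε hε.1
  refine le_trans ?_ ((hsystem ε hε).mass_zero_mul_pow_le hT.le hε.1 hε.2 hC hfrequency hK)
  have := hε.1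
  gcongr
  exact hmass ε hε.1

end ArclengthCoordinate

theorem sq_pow_mul_exp_neg_le {m ε : ℝ} (hm : 0 < m) (hε : 0 < ε) (y : ℝ) (n : ℕ) :
    (y ^ 2) ^ n * Real.exp (-((m * y) ^ 2 / (4 * ε))) ≤ (4 / m ^ 2) ^ n * n.factorial * ε ^ n := by
  set v := (m * y) ^ 2 / (4 * ε) with hv
  have hexp := Real.pow_div_factorial_le_exp v (by positivity) n
  rw [div_le_iff₀' (by positivity)] at hexp
  calc (y ^ 2) ^ n * Real.exp (-v) = (4 / m ^ 2 * ε * v) ^ n * Real.exp (-v) := by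
        congr 2
        rw [hv]
        field_simp
    _ = (4 / m ^ 2 * ε) ^ n * (v ^ n / Real.exp v) := by rw [mul_pow, Real.exp_neg]; ring
    _ ≤ (4 / m ^ 2 * ε) ^ n * n.factorial := by
        gcongr
        rwa [div_le_iff₀ (Real.exp_pos v)]
    _ = (4 / m ^ 2) ^ n * n.factorial * ε ^ n := by ring

namespace ArclengthCoordinate

variable {x₀ x₁ T x' M C : ℝ} {w α ρ p : ℝ × ℝ → ℝ}

local notation "S" => spaceTimeRect x₀ x₁ T
local notation "∂ₓ" => derivX (spaceTimeRect x₀ x₁ T)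
local notation "∂ₜ" => derivT (spaceTimeRect x₀ x₁ T)

theorem exists_mass_upper_bound (h : ArclengthCoordinate x₀ x₁ T w α ρ p) (hx' : x' ∈ Icc x₀ x₁)
    (hρ : ρ (x', T) = 0) (n : ℕ) (hw : ∀ x ∈ Icc x₀ x₁, |w (x, T)| ≤ C * |x - x'| ^ n) :
    ∃ C', ∀ ε, 0 < ε → gaussMass x₀ x₁ T ε w α ρ T ≤ C' * ε ^ n := by
  have hT : T ∈ Icc 0 T := right_mem_Icc.2 h.time_pos.le
  obtain ⟨m, hm, hα⟩ := h.exists_pos_le_density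
  obtain ⟨B, hB₀, hB⟩ :=
    exists_abs_le_of_continuousOn_spaceTimeRect h.contDiffOn_density.continuousOn
  refine ⟨(x₁ - x₀) * (C ^ 2 * B * ((4 / m ^ 2) ^ n * n.factorial)), fun ε hε => ?_⟩
  rw [mul_assoc]
  refine h.mass_le hε h.contDiffOn_sol hT fun x hx => ?_
  have hα₀ := h.density_pos (x, T) ⟨hx, hT⟩
  have hsol : w (x, T) ^ 2 ≤ C ^ 2 * ((x - x') ^ 2) ^ n := by
    rw [← sq_abs (w _), ← sq_abs (x - x'), pow_right_comm, ← mul_pow]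
    exact pow_le_pow_left₀ (abs_nonneg _) (hw x hx) 2
  have hweight : gaussWeight T ε ρ (x, T) ≤ Real.exp (-((m * (x - x')) ^ 2 / (4 * ε))) := by
    have hcoord := h.sq_coord_add_sq_le hm.le hα hT hx' hx hρ left_mem_uIcc
    rw [hρ, zero_pow two_ne_zero, zero_add] at hcoord
    rw [gaussWeight, Real.exp_le_exp, neg_le_neg_iff, add_sub_cancel_left]
    gcongr
  calc w (x, T) ^ 2 * α (x, T) * gaussWeight T ε ρ (x, T)
      ≤ C ^ 2 * ((x - x') ^ 2) ^ n * B * Real.exp (-((m * (x - x')) ^ 2 / (4 * ε))) := by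
        have := gaussWeight_pos T ε ρ (x, T)
        gcongr
        exact (le_abs_self _).trans (hB _ ⟨hx, hT⟩)
    _ = C ^ 2 * B * (((x - x') ^ 2) ^ n * Real.exp (-((m * (x - x')) ^ 2 / (4 * ε)))) := by ring
    _ ≤ C ^ 2 * B * ((4 / m ^ 2) ^ n * n.factorial * ε ^ n) :=
        mul_le_mul_of_nonneg_left (sq_pow_mul_exp_neg_le hm hε _ n) (by positivity)
    _ = C ^ 2 * B * ((4 / m ^ 2) ^ n * n.factorial) * ε ^ n := by ring

theorem exists_not_vanishing_order (h : ArclengthCoordinate x₀ x₁ T w α ρ p)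
    (hx' : x' ∈ Ioo x₀ x₁) (hρ : ∀ t ∈ Icc 0 T, ρ (x', t) = 0)
    (hw₀ : ∀ t ∈ Icc 0 T, w (x₀, t) ≠ 0) (hw₁ : ∀ t ∈ Icc 0 T, w (x₁, t) ≠ 0) (hM : 0 ≤ M)
    (hf : ∀ z ∈ S, |∂ₜ w z - ∂ₜ ρ z * p z - ∂ₓ p z / α z| ≤ M * (|w z| + |p z|)) :
    ∃ n : ℕ, ∀ C, ∃ x ∈ Icc x₀ x₁, C * |x - x'| ^ n < |w (x, T)| := by
  obtain ⟨K, c, hc, hlow⟩ := h.exists_mass_lower_bound hx' hρ hw₀ hw₁ hM hf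
  refine ⟨K + 1, fun C => ?_⟩
  by_contra! hvanish
  obtain ⟨C', hup⟩ := h.exists_mass_upper_bound (Ioo_subset_Icc_self hx')
    (hρ T (right_mem_Icc.2 h.time_pos.le)) (K + 1) hvanish
  have hle : ∀ ε ∈ Ioc (0 : ℝ) 1, c ≤ C' * ε := fun ε hε => by
    have hboth := (hlow ε hε).trans (hup ε hε.1)
    rw [pow_succ', ← mul_assoc] at hboth
    exact le_of_mul_le_mul_right hboth (pow_pos hε.1 K)
  have hlim : Tendsto (fun ε : ℝ => C' * ε) (𝓝[>] 0) (𝓝 (C' * 0)) :=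
    (tendsto_id.const_mul C').mono_left nhdsWithin_le_nhds
  rw [mul_zero] at hlim
  exact hc.not_ge (ge_of_tendsto hlim (eventually_of_mem (Ioc_mem_nhdsGT one_pos) hle))

end ArclengthCoordinate

section Primitive

variable {x₀ x₁ T x' : ℝ} {α : ℝ × ℝ → ℝ}

local notation "S" => spaceTimeRect x₀ x₁ T

-- Rescaling the domain of integration to `[0, 1]` moves `x` into the integrand, so that smoothness
-- becomes differentiation under the integral sign.
theorem contDiffOn_integral_space (hx : x₀ < x₁) (hT : 0 < T) (hα : ContDiffOn ℝ ∞ α S)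
    (hx' : x' ∈ Icc x₀ x₁) : ContDiffOn ℝ ∞ (fun z => ∫ y in x'..z.1, α (y, z.2)) S := by
  have hmaps : MapsTo (fun z : (ℝ × ℝ) × ℝ => (x' + (z.1.1 - x') * z.2, z.1.2))
      (S ×ˢ Icc 0 1) S := fun z hz =>
    ⟨by simpa [mul_comm] using (convex_Icc x₀ x₁).add_smul_sub_mem hx' hz.1.1 hz.2, hz.1.2⟩
  have hrescaled : ContDiffOn ℝ ∞ (fun z : ℝ × ℝ => (z.1 - x') *
      ∫ θ in (0 : ℝ)..1, α (x' + (z.1 - x') * θ, z.2)) S :=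
    ContDiffOn.mul (by fun_prop) (contDiffOn_integral_param (convex_spaceTimeRect _ _ _)
      (uniqueDiffOn_spaceTimeRect hx hT) one_pos (hα.comp (by fun_prop) hmaps))
  refine hrescaled.congr fun z _ => ?_
  simpa using (intervalIntegral.smul_integral_comp_add_mul (a := 0) (b := 1)
    (fun y => α (y, z.2)) (z.1 - x') x').symm

theorem derivX_integral_space (hx : x₀ < x₁) (hT : 0 < T) (hα : ContDiffOn ℝ ∞ α S)
    (hx' : x' ∈ Icc x₀ x₁) : EqOn (derivX S fun z => ∫ y in x'..z.1, α (y, z.2)) α S := by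
  rintro ⟨x, t⟩ hz
  have hcont : ContinuousOn (fun y => α (y, t)) (Icc x₀ x₁) :=
    continuousOn_timeSlice hα.continuousOn hz.2
  have : Fact (x ∈ Icc x₀ x₁) := ⟨hz.1⟩
  refine derivX_eq_of_hasDerivWithinAt hx (contDiffOn_integral_space hx hT hα hx') hz ?_
  exact intervalIntegral.integral_hasDerivWithinAt_right (t := Icc x₀ x₁)
    (hcont.mono (ordConnected_Icc.uIcc_subset hx' hz.1)).intervalIntegrable
    (hcont.stronglyMeasurableAtFilter_nhdsWithin measurableSet_Icc x) (hcont x hz.1)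

end Primitive

namespace LinearParabolic

variable {x₀ x₁ T t' x' : ℝ} {w a b c α ρ p : ℝ × ℝ → ℝ}

local notation "S" => spaceTimeRect x₀ x₁ T
local notation "∂ₓ" => derivX S
local notation "∂ₜ" => derivT S

theorem restrict (H : LinearParabolic x₀ x₁ T w a b c) (ht' : t' ∈ Ioc 0 T) :
    LinearParabolic x₀ x₁ t' w a b c where
  left_lt_right := H.left_lt_right
  time_pos := ht'.1
  contDiffOn_sol := H.contDiffOn_sol.mono (spaceTimeRect_subset ht'.2)
  contDiffOn_a := H.contDiffOn_a.mono (spaceTimeRect_subset ht'.2)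
  contDiffOn_b := H.contDiffOn_b.mono (spaceTimeRect_subset ht'.2)
  contDiffOn_c := H.contDiffOn_c.mono (spaceTimeRect_subset ht'.2)
  a_pos z hz := H.a_pos z (spaceTimeRect_subset ht'.2 hz)
  eqn z hz := by
    have hsub := spaceTimeRect_subset (x₀ := x₀) (x₁ := x₁) ht'.2
    have hud := uniqueDiffOn_spaceTimeRect H.left_lt_right ht'.1
    have hiter := derivX_iterate_of_subset H.uniqueDiffOn hud hsub H.contDiffOn_sol
    have hxx := hiter 2 hz
    simp only [Function.iterate_succ_apply', Function.iterate_zero, id] at hxx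
    rw [derivT_of_subset hud hsub H.contDiffOn_sol hz, hxx,
      derivX_of_subset hud hsub H.contDiffOn_sol hz]
    exact H.eqn z (hsub hz)

theorem exists_arclengthCoordinate (H : LinearParabolic x₀ x₁ T w a b c)
    (hx' : x' ∈ Icc x₀ x₁) : ∃ α ρ p, ArclengthCoordinate x₀ x₁ T w α ρ p ∧
      (∀ z ∈ S, a z * α z ^ 2 = 1) ∧ ∀ t, ρ (x', t) = 0 := by
  have hsqrt : ∀ z ∈ S, 0 < √(a z) := fun z hz => Real.sqrt_pos.2 (H.a_pos z hz)
  have hpos : ∀ z ∈ S, 0 < (√(a z))⁻¹ := fun z hz => inv_pos.2 (hsqrt z hz)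
  have hα : ContDiffOn ℝ ∞ (fun z => (√(a z))⁻¹) S :=
    (H.contDiffOn_a.sqrt fun z hz => (H.a_pos z hz).ne').inv fun z hz => (hsqrt z hz).ne'
  refine ⟨fun z => (√(a z))⁻¹, fun z => ∫ y in x'..z.1, (√(a (y, z.2)))⁻¹,
    fun z => ∂ₓ w z / (√(a z))⁻¹, ?_, fun z hz => ?_, fun t => intervalIntegral.integral_same⟩
  · exact
      { left_lt_right := H.left_lt_right
        time_pos := H.time_pos
        contDiffOn_sol := H.contDiffOn_sol
        contDiffOn_density := hα
        contDiffOn_coord := contDiffOn_integral_space H.left_lt_right H.time_pos hα hx'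
        contDiffOn_slope := (contDiffOn_derivX H.uniqueDiffOn H.contDiffOn_sol).div hα
          fun z hz => (hpos z hz).ne'
        density_pos := hpos
        derivX_coord := derivX_integral_space H.left_lt_right H.time_pos hα hx'
        derivX_sol := fun z hz => (mul_div_cancel₀ _ (hpos z hz).ne').symm }
  · rw [inv_pow, Real.sq_sqrt (H.a_pos z hz).le, mul_inv_cancel₀ (H.a_pos z hz).ne']

theorem error_eq (H : LinearParabolic x₀ x₁ T w a b c) (h : ArclengthCoordinate x₀ x₁ T w α ρ p)
    (hα : ∀ z ∈ S, a z * α z ^ 2 = 1) {z : ℝ × ℝ} (hz : z ∈ S) :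
    ∂ₜ w z - ∂ₜ ρ z * p z - ∂ₓ p z / α z =
      (∂ₓ α z / α z ^ 2 + b z * α z - ∂ₜ ρ z) * p z + c z * w z := by
  have hαz := (h.density_pos z hz).ne'
  have hxx : ∂ₓ (∂ₓ w) z = ∂ₓ α z * p z + α z * ∂ₓ p z := by
    rw [derivX_congr h.derivX_sol hz,
      derivX_mul h.uniqueDiffOn h.contDiffOn_density h.contDiffOn_slope hz]
  rw [H.eqn z hz, hxx, h.derivX_sol z hz, eq_one_div_of_mul_eq_one_left (hα z hz)]
  field_simp
  ring

theorem exists_abs_error_le (H : LinearParabolic x₀ x₁ T w a b c)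
    (h : ArclengthCoordinate x₀ x₁ T w α ρ p) (hα : ∀ z ∈ S, a z * α z ^ 2 = 1) :
    ∃ M ≥ 0, ∀ z ∈ S, |∂ₜ w z - ∂ₜ ρ z * p z - ∂ₓ p z / α z| ≤ M * (|w z| + |p z|) := by
  have hq : ContDiffOn ℝ ∞ (fun z => ∂ₓ α z / α z ^ 2 + b z * α z - ∂ₜ ρ z) S :=
    (((contDiffOn_derivX h.uniqueDiffOn h.contDiffOn_density).div (h.contDiffOn_density.pow 2)
      fun z hz => (pow_pos (h.density_pos z hz) 2).ne').add
      (H.contDiffOn_b.mul h.contDiffOn_density)).sub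
      (contDiffOn_derivT h.uniqueDiffOn h.contDiffOn_coord)
  obtain ⟨B, hB₀, hB⟩ := exists_abs_le_of_continuousOn_spaceTimeRect hq.continuousOn
  obtain ⟨C, hC₀, hC⟩ := exists_abs_le_of_continuousOn_spaceTimeRect H.contDiffOn_c.continuousOn
  refine ⟨B + C, by positivity, fun z hz => ?_⟩
  rw [H.error_eq h hα hz]
  calc |(∂ₓ α z / α z ^ 2 + b z * α z - ∂ₜ ρ z) * p z + c z * w z|
      ≤ |∂ₓ α z / α z ^ 2 + b z * α z - ∂ₜ ρ z| * |p z| + |c z| * |w z| := by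
        rw [← abs_mul, ← abs_mul]; exact abs_add_le _ _
    _ ≤ B * |p z| + C * |w z| := by gcongr; exacts [hB z hz, hC z hz]
    _ ≤ (B + C) * (|w z| + |p z|) := by
        nlinarith [mul_nonneg hB₀ (abs_nonneg (w z)), mul_nonneg hC₀ (abs_nonneg (p z))]

theorem exists_derivX_iterate_ne_zero_final (H : LinearParabolic x₀ x₁ T w a b c)
    (hw₀ : ∀ t ∈ Icc 0 T, w (x₀, t) ≠ 0) (hw₁ : ∀ t ∈ Icc 0 T, w (x₁, t) ≠ 0)
    (hx' : x' ∈ Ioo x₀ x₁) : ∃ k, ∂ₓ^[k] w (x', T) ≠ 0 := by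
  obtain ⟨α, ρ, p, h, hα, hρ⟩ := H.exists_arclengthCoordinate (Ioo_subset_Icc_self hx')
  obtain ⟨M, hM, hf⟩ := H.exists_abs_error_le h hα
  obtain ⟨n, hn⟩ := h.exists_not_vanishing_order hx' (fun t _ => hρ t) hw₀ hw₁ hM hf
  have hT : T ∈ Icc 0 T := right_mem_Icc.2 H.time_pos.le
  by_contra! hvanish
  obtain ⟨C, hC⟩ := (H.isBigO_iterate (z₀ := (x', T)) (k := n)
    ⟨Ioo_subset_Icc_self hx', hT⟩ (fun i _ => hvanish i) 0).bound
  obtain ⟨x, hx, hlt⟩ := hn C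
  exact hlt.not_ge (by
    simpa [parabolicDist] using mem_principal.1 hC (show (x, T) ∈ S from ⟨hx, hT⟩))

theorem exists_derivX_iterate_ne_zero (H : LinearParabolic x₀ x₁ T w a b c)
    (hw₀ : ∀ t ∈ Icc 0 T, w (x₀, t) ≠ 0) (hw₁ : ∀ t ∈ Icc 0 T, w (x₁, t) ≠ 0)
    (hx' : x' ∈ Ioo x₀ x₁) (ht' : t' ∈ Ioc 0 T) : ∃ k, ∂ₓ^[k] w (x', t') ≠ 0 := by
  have hsub : Icc 0 t' ⊆ Icc 0 T := Icc_subset_Icc_right ht'.2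
  obtain ⟨k, hk⟩ := (H.restrict ht').exists_derivX_iterate_ne_zero_final
    (fun t ht => hw₀ t (hsub ht)) (fun t ht => hw₁ t (hsub ht)) hx'
  rw [derivX_iterate_of_subset H.uniqueDiffOn (H.restrict ht').uniqueDiffOn
    (spaceTimeRect_subset ht'.2) H.contDiffOn_sol k
    ⟨Ioo_subset_Icc_self hx', right_mem_Icc.2 ht'.1.le⟩] at hk
  exact ⟨k, hk⟩

end LinearParabolic

/-! ### Linearization along two solutions -/

section MeanDerivative

universe u v

variable {X : Type max u v} {E : Type u} {G : Type v} [NormedAddCommGroup X]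
  [NormedSpace ℝ X] [NormedAddCommGroup E] [NormedSpace ℝ E] [NormedAddCommGroup G]
  [NormedSpace ℝ G]

/-- The mean of the derivative of `Φ` over the segment from `y₀` to `y₁`, which expresses the
increment of `Φ` as a linear function of `y₁ - y₀` (Hadamard's lemma). -/
noncomputable def meanFDeriv (Φ : E → G) (D : Set E) (y₀ y₁ : E) : E →L[ℝ] G :=
  ∫ θ in (0 : ℝ)..1, fderivWithin ℝ Φ D (AffineMap.lineMap y₀ y₁ θ)

variable {Φ : E → G} {D : Set E} {y₀ y₁ : E}

theorem continuousOn_fderivWithin_lineMap (hD : Convex ℝ D) (hu : UniqueDiffOn ℝ D)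
    (hΦ : ContDiffOn ℝ ∞ Φ D) (h₀ : y₀ ∈ D) (h₁ : y₁ ∈ D) :
    ContinuousOn (fun θ : ℝ => fderivWithin ℝ Φ D (AffineMap.lineMap y₀ y₁ θ)) (Icc 0 1) :=
  (hΦ.continuousOn_fderivWithin hu (by simp)).comp AffineMap.lineMap_continuous.continuousOn
    fun _ hθ => hD.lineMap_mem h₀ h₁ hθ

theorem meanFDeriv_apply (hD : Convex ℝ D) (hu : UniqueDiffOn ℝ D) (hΦ : ContDiffOn ℝ ∞ Φ D)
    (h₀ : y₀ ∈ D) (h₁ : y₁ ∈ D) (e : E) :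
    meanFDeriv Φ D y₀ y₁ e =
      ∫ θ in (0 : ℝ)..1, fderivWithin ℝ Φ D (AffineMap.lineMap y₀ y₁ θ) e :=
  ContinuousLinearMap.intervalIntegral_apply
    ((continuousOn_fderivWithin_lineMap hD hu hΦ h₀ h₁).intervalIntegrable_of_Icc zero_le_one) e

theorem intervalIntegrable_fderivWithin_lineMap_apply (hD : Convex ℝ D) (hu : UniqueDiffOn ℝ D)
    (hΦ : ContDiffOn ℝ ∞ Φ D) (h₀ : y₀ ∈ D) (h₁ : y₁ ∈ D) (e : E) :
    IntervalIntegrable (fun θ : ℝ => fderivWithin ℝ Φ D (AffineMap.lineMap y₀ y₁ θ) e)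
      volume 0 1 :=
  ((continuousOn_fderivWithin_lineMap hD hu hΦ h₀ h₁).clm_apply
    continuousOn_const).intervalIntegrable_of_Icc zero_le_one

theorem meanFDeriv_apply_sub [CompleteSpace G] (hD : Convex ℝ D) (hu : UniqueDiffOn ℝ D)
    (hΦ : ContDiffOn ℝ ∞ Φ D) (h₀ : y₀ ∈ D) (h₁ : y₁ ∈ D) :
    meanFDeriv Φ D y₀ y₁ (y₁ - y₀) = Φ y₁ - Φ y₀ := by
  have hmaps : MapsTo (AffineMap.lineMap y₀ y₁) (Icc (0 : ℝ) 1) D := fun _ hθ =>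
    hD.lineMap_mem h₀ h₁ hθ
  have hderiv : ∀ θ ∈ Icc (0 : ℝ) 1, HasDerivWithinAt (fun θ : ℝ => Φ (AffineMap.lineMap y₀ y₁ θ))
      (fderivWithin ℝ Φ D (AffineMap.lineMap y₀ y₁ θ) (y₁ - y₀)) (Icc 0 1) θ := fun θ hθ =>
    (hΦ.differentiableOn (by simp) _ (hmaps hθ)).hasFDerivWithinAt.comp_hasDerivWithinAt θ
      AffineMap.hasDerivWithinAt_lineMap hmaps
  rw [meanFDeriv_apply hD hu hΦ h₀ h₁,
    intervalIntegral.integral_eq_sub_of_hasDerivAt_of_le zero_le_one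
      (fun θ hθ => (hderiv θ hθ).continuousWithinAt)
      (fun θ hθ => (hderiv θ (Ioo_subset_Icc_self hθ)).hasDerivAt (Icc_mem_nhds hθ.1 hθ.2))
      (intervalIntegrable_fderivWithin_lineMap_apply hD hu hΦ h₀ h₁ _)]
  simp

theorem contDiffOn_meanFDeriv [CompleteSpace G] {s : Set X} {f g : X → E} (hs : Convex ℝ s)
    (hus : UniqueDiffOn ℝ s) (hD : Convex ℝ D) (hu : UniqueDiffOn ℝ D) (hΦ : ContDiffOn ℝ ∞ Φ D)
    (hf : ContDiffOn ℝ ∞ f s) (hg : ContDiffOn ℝ ∞ g s) (hfD : MapsTo f s D)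
    (hgD : MapsTo g s D) : ContDiffOn ℝ ∞ (fun z => meanFDeriv Φ D (f z) (g z)) s := by
  have hfst : MapsTo Prod.fst (s ×ˢ Icc (0 : ℝ) 1) s := fun _ hz => hz.1
  have hline : ContDiffOn ℝ ∞ (fun z : X × ℝ => AffineMap.lineMap (f z.1) (g z.1) z.2)
      (s ×ˢ Icc (0 : ℝ) 1) := by
    simp only [AffineMap.lineMap_apply_module']
    have hf' := hf.comp contDiffOn_fst hfst
    exact (contDiffOn_snd.smul ((hg.comp contDiffOn_fst hfst).sub hf')).add hf'
  exact contDiffOn_integral_param hs hus one_pos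
    ((hΦ.fderivWithin hu (by simp)).comp hline
      fun z hz => hD.lineMap_mem (hfD hz.1) (hgD hz.1) hz.2)

theorem meanFDeriv_apply_pos {Φ : E → ℝ} {e : E} (hD : Convex ℝ D) (hu : UniqueDiffOn ℝ D)
    (hΦ : ContDiffOn ℝ ∞ Φ D) (hpos : ∀ y ∈ D, 0 < fderivWithin ℝ Φ D y e) (h₀ : y₀ ∈ D)
    (h₁ : y₁ ∈ D) : 0 < meanFDeriv Φ D y₀ y₁ e := by
  rw [meanFDeriv_apply hD hu hΦ h₀ h₁]
  exact intervalIntegral.intervalIntegral_pos_of_pos_on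
    (intervalIntegrable_fderivWithin_lineMap_apply hD hu hΦ h₀ h₁ e)
    (fun θ hθ => hpos _ (hD.lineMap_mem h₀ h₁ (Ioo_subset_Icc_self hθ))) one_pos

end MeanDerivative

section Linearization

variable {x₀ x₁ T : ℝ} {Φ : ℝ × ℝ × ℝ × ℝ × ℝ → ℝ} {u v : ℝ × ℝ → ℝ}

local notation "S" => spaceTimeRect x₀ x₁ T
local notation "∂ₓ" => derivX (spaceTimeRect x₀ x₁ T)
local notation "∂ₜ" => derivT (spaceTimeRect x₀ x₁ T)

/-- The domain of the nonlinearity: arbitrary values of `(w_xx, w_x, w)` over the points of the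
space-time rectangle. -/
def jetDomain (x₀ x₁ T : ℝ) : Set (ℝ × ℝ × ℝ × ℝ × ℝ) :=
  univ ×ˢ univ ×ˢ univ ×ˢ spaceTimeRect x₀ x₁ T

/-- The argument `(w_xx, w_x, w, x, t)` at which the nonlinearity is evaluated along `w`. -/
noncomputable def jet (s : Set (ℝ × ℝ)) (w : ℝ × ℝ → ℝ) (z : ℝ × ℝ) : ℝ × ℝ × ℝ × ℝ × ℝ :=
  (derivX s (derivX s w) z, derivX s w z, w z, z)

theorem convex_jetDomain (x₀ x₁ T : ℝ) : Convex ℝ (jetDomain x₀ x₁ T) :=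
  convex_univ.prod (convex_univ.prod (convex_univ.prod (convex_spaceTimeRect x₀ x₁ T)))

theorem uniqueDiffOn_jetDomain (hx : x₀ < x₁) (hT : 0 < T) :
    UniqueDiffOn ℝ (jetDomain x₀ x₁ T) :=
  uniqueDiffOn_univ.prod (uniqueDiffOn_univ.prod (uniqueDiffOn_univ.prod
    (uniqueDiffOn_spaceTimeRect hx hT)))

theorem mapsTo_jet (w : ℝ × ℝ → ℝ) : MapsTo (jet S w) S (jetDomain x₀ x₁ T) := fun _ hz =>
  ⟨trivial, trivial, trivial, hz⟩

theorem contDiffOn_jet {s : Set (ℝ × ℝ)} (hs : UniqueDiffOn ℝ s) (hu : ContDiffOn ℝ ∞ u s) :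
    ContDiffOn ℝ ∞ (jet s u) s :=
  (contDiffOn_derivX hs (contDiffOn_derivX hs hu)).prodMk
    ((contDiffOn_derivX hs hu).prodMk (hu.prodMk contDiffOn_id))

theorem jet_sub_jet {s : Set (ℝ × ℝ)} (hs : UniqueDiffOn ℝ s) (hu : ContDiffOn ℝ ∞ u s)
    (hv : ContDiffOn ℝ ∞ v s) {z : ℝ × ℝ} (hz : z ∈ s) :
    jet s u z - jet s v z = derivX s (derivX s fun z => u z - v z) z • (1, 0) +
      derivX s (fun z => u z - v z) z • (0, 1, 0) + (u z - v z) • (0, 0, 1, 0) := by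
  rw [derivX_congr (fun y hy => derivX_sub hs hu hv hy) hz, derivX_sub hs hu hv hz,
    derivX_sub hs (contDiffOn_derivX hs hu) (contDiffOn_derivX hs hv) hz]
  simp [jet]

theorem exists_linearParabolic (hx : x₀ < x₁) (hT : 0 < T)
    (hΦ : ContDiffOn ℝ ∞ Φ (jetDomain x₀ x₁ T))
    (hpos : ∀ y ∈ jetDomain x₀ x₁ T, 0 < fderivWithin ℝ Φ (jetDomain x₀ x₁ T) y (1, 0))
    (hu : ContDiffOn ℝ ∞ u S) (hv : ContDiffOn ℝ ∞ v S)
    (hueq : ∀ z ∈ S, ∂ₜ u z = Φ (jet S u z)) (hveq : ∀ z ∈ S, ∂ₜ v z = Φ (jet S v z)) :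
    ∃ a b c, LinearParabolic x₀ x₁ T (fun z => u z - v z) a b c := by
  have hS := uniqueDiffOn_spaceTimeRect hx hT
  have hD := convex_jetDomain x₀ x₁ T
  have hDu := uniqueDiffOn_jetDomain hx hT
  set L := fun z => meanFDeriv Φ (jetDomain x₀ x₁ T) (jet S v z) (jet S u z)
  have hL : ∀ e, ContDiffOn ℝ ∞ (fun z => L z e) S := fun e =>
    (contDiffOn_meanFDeriv (convex_spaceTimeRect x₀ x₁ T) hS hD hDu hΦ (contDiffOn_jet hS hv)
      (contDiffOn_jet hS hu) (mapsTo_jet v) (mapsTo_jet u)).clm_apply contDiffOn_const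
  refine ⟨fun z => L z (1, 0), fun z => L z (0, 1, 0), fun z => L z (0, 0, 1, 0), hx, hT,
    hu.sub hv, hL _, hL _, hL _, fun z hz => ?_, fun z hz => ?_⟩
  · exact meanFDeriv_apply_pos hD hDu hΦ hpos (mapsTo_jet v hz) (mapsTo_jet u hz)
  · calc ∂ₜ (fun z => u z - v z) z = Φ (jet S u z) - Φ (jet S v z) := by
          rw [derivT_sub hS hu hv hz, hueq z hz, hveq z hz]
      _ = L z (jet S u z - jet S v z) :=
          (meanFDeriv_apply_sub hD hDu hΦ (mapsTo_jet v hz) (mapsTo_jet u hz)).symm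
      _ = _ := by
          rw [jet_sub_jet hS hu hv hz]
          simp only [map_add, map_smul, smul_eq_mul, mul_comm]

end Linearization

/-! ### Counting zeros -/

theorem le_of_eventually_le_nhdsGT_of_eventually_le_nhdsLT {α β : Type*}
    [ConditionallyCompleteLinearOrder α] [TopologicalSpace α] [OrderTopology α] [DenselyOrdered α]
    [LinearOrder β] {N : α → β} {s t : α} (hst : s ≤ t)
    (hr : ∀ r ∈ Ico s t, ∀ᶠ q in 𝓝[>] r, N q ≤ N r)
    (hl : ∀ r ∈ Ioc s t, ∀ᶠ q in 𝓝[<] r, N r ≤ N q) : N t ≤ N s := by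
  by_contra! hlt
  obtain ⟨c, hc⟩ : ∃ c, IsGLB {q ∈ Icc s t | N s < N q} c :=
    ⟨_, isGLB_csInf ⟨t, right_mem_Icc.2 hst, hlt⟩ ⟨s, fun _ hq => hq.1.1⟩⟩
  have hsc : s ≤ c := hc.2 fun _ hq => hq.1.1
  have hct : c ≤ t := hc.1 ⟨right_mem_Icc.2 hst, hlt⟩
  rcases le_or_gt (N c) (N s) with hcs | hcs
  · have hct' : c < t := hct.lt_of_ne fun h => hlt.not_ge (h ▸ hcs)
    have hev : ∀ᶠ q in 𝓝[≥] c, N q ≤ N s := by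
      rw [← Ioi_insert, nhdsWithin_insert, eventually_sup, eventually_pure]
      exact ⟨hcs, (hr c ⟨hsc, hct'⟩).mono fun _ hq => hq.trans hcs⟩
    obtain ⟨q, ⟨-, hq⟩, hq'⟩ :=
      ((hc.frequently_mem ⟨t, right_mem_Icc.2 hst, hlt⟩).and_eventually hev).exists
    exact hq.not_ge hq'
  · have hsc' : s < c := hsc.lt_of_ne fun h => hcs.ne (congrArg N h)
    have : (𝓝[<] c).NeBot := nhdsLT_neBot_of_exists_lt ⟨s, hsc'⟩
    obtain ⟨q, hq, hqm⟩ := ((hl c ⟨hsc', hct⟩).and (Ioo_mem_nhdsLT hsc')).exists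
    exact (hc.1 ⟨⟨hqm.1.le, hqm.2.le.trans hct⟩, hcs.trans_le hq⟩).not_gt hqm.2

section Counting

variable {ι X : Type*} {A : Set ι} {B : Set X} {U : ι → Set X}

theorem ncard_le_ncard_of_subset_biUnion (hA : A.Finite) (hB : B ⊆ ⋃ i ∈ A, U i)
    (hU : ∀ i ∈ A, (B ∩ U i).Subsingleton) : B.ncard ≤ A.ncard := by
  have hcover : ∀ y : B, ∃ i : A, (y : X) ∈ U i := fun y => by simpa using hB y.2
  choose f hf using hcover
  have := hA.to_subtype
  rw [← Nat.card_coe_set_eq, ← Nat.card_coe_set_eq]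
  exact Nat.card_le_card_of_injective f fun y y' heq =>
    Subtype.ext (hU (f y) (f y).2 ⟨y.2, hf y⟩ ⟨y'.2, heq ▸ hf y'⟩)

theorem ncard_le_ncard_of_pairwiseDisjoint (hB : B.Finite) (hdisj : A.PairwiseDisjoint U)
    (hU : ∀ i ∈ A, (B ∩ U i).Nonempty) : A.ncard ≤ B.ncard := by
  have hmeet : ∀ i : A, ∃ y : B, (y : X) ∈ U i := fun i =>
    let ⟨y, hyB, hyU⟩ := hU i i.2
    ⟨⟨y, hyB⟩, hyU⟩
  choose f hf using hmeet
  have := hB.to_subtype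
  rw [← Nat.card_coe_set_eq, ← Nat.card_coe_set_eq]
  exact Nat.card_le_card_of_injective f fun i j heq =>
    Subtype.ext (hdisj.elim_set i.2 j.2 (f i) (hf i) (heq ▸ hf j))

theorem ncard_lt_ncard_of_pairwiseDisjoint (hB : B.Finite) (hdisj : A.PairwiseDisjoint U)
    (hU : ∀ i ∈ A, (B ∩ U i).Nonempty) {j : ι} (hj : j ∈ A) (hUj : (B ∩ U j).Nontrivial) :
    A.ncard < B.ncard := by
  obtain ⟨y, hyB, hyU⟩ := hU j hj
  refine (ncard_le_ncard_of_pairwiseDisjoint (hB.sdiff (t := {y})) hdisj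
    fun i hi => ?_).trans_lt (ncard_sdiff_singleton_lt_of_mem hyB hB)
  by_cases hij : i = j
  · obtain ⟨q, ⟨hqB, hqU⟩, hqy⟩ := hUj.exists_ne y
    exact ⟨q, ⟨hqB, hqy⟩, hij ▸ hqU⟩
  · obtain ⟨q, hqB, hqU⟩ := hU i hi
    refine ⟨q, ⟨hqB, ?_⟩, hqU⟩
    rintro rfl
    exact hij (hdisj.elim_set hi hj q hqU hyU)

theorem eventually_pairwiseDisjoint_ball {M : Type*} [MetricSpace M] {C : Set M} (hC : C.Finite) :
    ∀ᶠ ε in 𝓝[>] (0 : ℝ), C.PairwiseDisjoint (Metric.ball · ε) := by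
  refine (eventually_all_finite hC).2 fun x _ => (eventually_all_finite hC).2 fun y _ => ?_
  rcases eq_or_ne x y with hxy | hxy
  · exact .of_forall fun ε hne => absurd hxy hne
  · filter_upwards [Ioo_mem_nhdsGT (half_pos (dist_pos.2 hxy))] with ε hε _
    exact Metric.ball_disjoint_ball (by linarith [hε.2])

end Counting

namespace LinearParabolic

variable {x₀ x₁ T : ℝ} {w a b c : ℝ × ℝ → ℝ} {t' x' : ℝ}

local notation "S" => spaceTimeRect x₀ x₁ T
local notation "∂ₓ" => derivX S
local notation "Z" => zerosAt x₀ x₁ w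

theorem mem_Ioo_of_mem_zerosAt (hw₀ : ∀ t ∈ Icc 0 T, w (x₀, t) ≠ 0)
    (hw₁ : ∀ t ∈ Icc 0 T, w (x₁, t) ≠ 0) (ht' : t' ∈ Icc 0 T) (hx' : x' ∈ Z t') :
    x' ∈ Ioo x₀ x₁ :=
  ⟨hx'.1.1.lt_of_ne fun h => hw₀ t' ht' (h ▸ hx'.2),
    hx'.1.2.lt_of_ne fun h => hw₁ t' ht' (h ▸ hx'.2)⟩

theorem exists_order (H : LinearParabolic x₀ x₁ T w a b c)
    (hw₀ : ∀ t ∈ Icc 0 T, w (x₀, t) ≠ 0) (hw₁ : ∀ t ∈ Icc 0 T, w (x₁, t) ≠ 0)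
    (ht' : t' ∈ Ioc 0 T) (hx' : x' ∈ Z t') :
    ∃ k, (∀ i < k, ∂ₓ^[i] w (x', t') = 0) ∧ ∂ₓ^[k] w (x', t') ≠ 0 := by
  classical
  have hex := exists_derivX_iterate_ne_zero H hw₀ hw₁
    (mem_Ioo_of_mem_zerosAt hw₀ hw₁ (Ioc_subset_Icc_self ht') hx') ht'
  exact ⟨Nat.find hex, fun i hi => not_not.1 (Nat.find_min hex hi), Nat.find_spec hex⟩

theorem exists_eventually_subsingleton (H : LinearParabolic x₀ x₁ T w a b c)
    (hw₀ : ∀ t ∈ Icc 0 T, w (x₀, t) ≠ 0) (hw₁ : ∀ t ∈ Icc 0 T, w (x₁, t) ≠ 0)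
    (ht' : t' ∈ Ioc 0 T) (hx' : x' ∈ Z t') :
    ∃ ρ > 0, ∀ᶠ t in 𝓝[Icc t' T] t', (Z t ∩ Metric.ball x' ρ).Subsingleton := by
  obtain ⟨k, hk, hκ⟩ := H.exists_order hw₀ hw₁ ht' hx'
  exact H.exists_eventually_subsingleton_after (z₀ := (x', t'))
    ⟨hx'.1, Ioc_subset_Icc_self ht'⟩ hk hκ

theorem eventually_nontrivial_zeros (H : LinearParabolic x₀ x₁ T w a b c)
    (hw₀ : ∀ t ∈ Icc 0 T, w (x₀, t) ≠ 0) (hw₁ : ∀ t ∈ Icc 0 T, w (x₁, t) ≠ 0)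
    (ht' : t' ∈ Ioc 0 T) (hx' : x' ∈ Z t') (htan : ∂ₓ w (x', t') = 0) :
    ∀ᶠ ε in 𝓝[>] 0, ∀ᶠ t in 𝓝[<] t', (Z t ∩ Metric.ball x' ε).Nontrivial := by
  obtain ⟨k, hk, hκ⟩ := H.exists_order hw₀ hw₁ ht' hx'
  have hk₂ : 2 ≤ k := by
    by_contra! h
    interval_cases k
    exacts [hκ hx'.2, hκ htan]
  exact H.eventually_nontrivial_zeros_before (z₀ := (x', t'))
    (mem_Ioo_of_mem_zerosAt hw₀ hw₁ (Ioc_subset_Icc_self ht') hx') ht' hk₂ hk hκ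

theorem eventually_nonempty_zeros (H : LinearParabolic x₀ x₁ T w a b c)
    (hw₀ : ∀ t ∈ Icc 0 T, w (x₀, t) ≠ 0) (hw₁ : ∀ t ∈ Icc 0 T, w (x₁, t) ≠ 0)
    (ht' : t' ∈ Ioc 0 T) (hx' : x' ∈ Z t') :
    ∀ᶠ ε in 𝓝[>] 0, ∀ᶠ t in 𝓝[<] t', (Z t ∩ Metric.ball x' ε).Nonempty := by
  by_cases htan : ∂ₓ w (x', t') = 0
  · exact (H.eventually_nontrivial_zeros hw₀ hw₁ ht' hx' htan).mono fun _ hε =>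
      hε.mono fun _ => Set.Nontrivial.nonempty
  · exact H.eventually_nonempty_zeros_before (z₀ := (x', t'))
      (mem_Ioo_of_mem_zerosAt hw₀ hw₁ (Ioc_subset_Icc_self ht') hx') ht' hx'.2 htan

theorem finite_zerosAt (H : LinearParabolic x₀ x₁ T w a b c)
    (hw₀ : ∀ t ∈ Icc 0 T, w (x₀, t) ≠ 0) (hw₁ : ∀ t ∈ Icc 0 T, w (x₁, t) ≠ 0)
    (ht' : t' ∈ Ioc 0 T) : (Z t').Finite := by
  have hcont := continuousOn_timeSlice H.contDiffOn_sol.continuousOn (Ioc_subset_Icc_self ht')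
  have hcompact : IsCompact (Z t') := isCompact_Icc.of_isClosed_subset
    (hcont.preimage_isClosed_of_isClosed isClosed_Icc isClosed_singleton) fun _ hx => hx.1
  refine hcompact.induction_on finite_empty (fun _ _ hst ht => ht.subset hst)
    (fun _ _ => Finite.union) fun x hx => ?_
  obtain ⟨ρ, hρ, hev⟩ := H.exists_eventually_subsingleton hw₀ hw₁ ht' hx
  exact ⟨Z t' ∩ Metric.ball x ρ, inter_mem self_mem_nhdsWithin
    (mem_nhdsWithin_of_mem_nhds (Metric.ball_mem_nhds x hρ)),
    (hev.self_of_nhdsWithin (left_mem_Icc.2 ht'.2)).finite⟩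

theorem eventually_zerosAt_subset (H : LinearParabolic x₀ x₁ T w a b c) {V : Set ℝ}
    (hV : IsOpen V) (hsub : Z t' ⊆ V) : ∀ᶠ t in 𝓝[Icc 0 T] t', Z t ⊆ V := by
  set B : Set (ℝ × ℝ) := S ∩ w ⁻¹' {0} ∩ Prod.fst ⁻¹' Vᶜ
  have hB : IsClosed (Prod.snd '' B) := by
    have hS := isCompact_spaceTimeRect x₀ x₁ T
    have hclosed : IsClosed (S ∩ w ⁻¹' {0}) :=
      H.contDiffOn_sol.continuousOn.preimage_isClosed_of_isClosed hS.isClosed isClosed_singleton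
    have hBc : IsCompact B := (hS.of_isClosed_subset hclosed inter_subset_left).inter_right
      (hV.isClosed_compl.preimage continuous_fst)
    exact (hBc.image continuous_snd).isClosed
  have hnot : t' ∉ Prod.snd '' B := by
    rintro ⟨⟨x, t⟩, ⟨⟨hz, hzero⟩, hxV⟩, rfl⟩
    exact hxV (hsub ⟨hz.1, hzero⟩)
  filter_upwards [self_mem_nhdsWithin, mem_nhdsWithin_of_mem_nhds (hB.isOpen_compl.mem_nhds hnot)]
    with t htm ht x hx
  by_contra hxV
  exact ht ⟨(x, t), ⟨⟨⟨hx.1, htm⟩, hx.2⟩, hxV⟩, rfl⟩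

theorem eventually_ncard_le_after (H : LinearParabolic x₀ x₁ T w a b c)
    (hw₀ : ∀ t ∈ Icc 0 T, w (x₀, t) ≠ 0) (hw₁ : ∀ t ∈ Icc 0 T, w (x₁, t) ≠ 0)
    (ht' : t' ∈ Ioc 0 T) : ∀ᶠ t in 𝓝[Icc t' T] t', (Z t).ncard ≤ (Z t').ncard := by
  have hfin := H.finite_zerosAt hw₀ hw₁ ht'
  have hloc := fun x (hx : x ∈ Z t') => H.exists_eventually_subsingleton hw₀ hw₁ ht' hx
  choose! ρ hρ hev using hloc
  have hsub : ∀ᶠ t in 𝓝[Icc t' T] t', Z t ⊆ ⋃ x ∈ Z t', Metric.ball x (ρ x) :=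
    (H.eventually_zerosAt_subset (isOpen_biUnion fun _ _ => Metric.isOpen_ball)
      fun x hx => mem_biUnion hx (Metric.mem_ball_self (hρ x hx))).filter_mono
      (nhdsWithin_mono _ (Icc_subset_Icc_left ht'.1.le))
  filter_upwards [(eventually_all_finite hfin).2 hev, hsub] with t hss hcover
  exact ncard_le_ncard_of_subset_biUnion hfin hcover hss

theorem eventually_ncard_le_before (H : LinearParabolic x₀ x₁ T w a b c)
    (hw₀ : ∀ t ∈ Icc 0 T, w (x₀, t) ≠ 0) (hw₁ : ∀ t ∈ Icc 0 T, w (x₁, t) ≠ 0)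
    (ht' : t' ∈ Ioc 0 T) : ∀ᶠ t in 𝓝[<] t', (Z t').ncard ≤ (Z t).ncard := by
  have hfin := H.finite_zerosAt hw₀ hw₁ ht'
  have hnear := (eventually_all_finite hfin).2 fun x hx =>
    H.eventually_nonempty_zeros hw₀ hw₁ ht' hx
  obtain ⟨ε, hε, hdisj⟩ := (hnear.and (eventually_pairwiseDisjoint_ball hfin)).exists
  filter_upwards [(eventually_all_finite hfin).2 hε, Ioo_mem_nhdsLT ht'.1] with t ht htm
  exact ncard_le_ncard_of_pairwiseDisjoint
    (H.finite_zerosAt hw₀ hw₁ ⟨htm.1, htm.2.le.trans ht'.2⟩) hdisj ht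

theorem eventually_ncard_lt_before (H : LinearParabolic x₀ x₁ T w a b c)
    (hw₀ : ∀ t ∈ Icc 0 T, w (x₀, t) ≠ 0) (hw₁ : ∀ t ∈ Icc 0 T, w (x₁, t) ≠ 0)
    (ht' : t' ∈ Ioc 0 T) (hx' : x' ∈ Z t') (htan : ∂ₓ w (x', t') = 0) :
    ∀ᶠ t in 𝓝[<] t', (Z t').ncard < (Z t).ncard := by
  have hfin := H.finite_zerosAt hw₀ hw₁ ht'
  have hnear := (eventually_all_finite hfin).2 fun x hx =>
    H.eventually_nonempty_zeros hw₀ hw₁ ht' hx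
  obtain ⟨ε, ⟨hε, hdisj⟩, htwo⟩ := ((hnear.and (eventually_pairwiseDisjoint_ball hfin)).and
    (H.eventually_nontrivial_zeros hw₀ hw₁ ht' hx' htan)).exists
  filter_upwards [(eventually_all_finite hfin).2 hε, htwo, Ioo_mem_nhdsLT ht'.1] with t ht ht₂ htm
  exact ncard_lt_ncard_of_pairwiseDisjoint
    (H.finite_zerosAt hw₀ hw₁ ⟨htm.1, htm.2.le.trans ht'.2⟩) hdisj ht hx' ht₂

theorem antitoneOn_ncard_zerosAt (H : LinearParabolic x₀ x₁ T w a b c)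
    (hw₀ : ∀ t ∈ Icc 0 T, w (x₀, t) ≠ 0) (hw₁ : ∀ t ∈ Icc 0 T, w (x₁, t) ≠ 0) :
    AntitoneOn (fun t => (Z t).ncard) (Ioc 0 T) := by
  intro s hs t ht hst
  refine le_of_eventually_le_nhdsGT_of_eventually_le_nhdsLT (N := fun t => (Z t).ncard) hst
    (fun r hr => ?_) fun r hr => ?_
  · have hrT : r < T := hr.2.trans_le ht.2
    rw [← nhdsWithin_Ioc_eq_nhdsGT hrT]
    exact (H.eventually_ncard_le_after hw₀ hw₁ ⟨hs.1.trans_le hr.1, hrT.le⟩).filter_mono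
      (nhdsWithin_mono r Ioc_subset_Icc_self)
  · exact H.eventually_ncard_le_before hw₀ hw₁ ⟨hs.1.trans hr.1, hr.2.trans ht.2⟩

theorem ncard_zerosAt_lt (H : LinearParabolic x₀ x₁ T w a b c)
    (hw₀ : ∀ t ∈ Icc 0 T, w (x₀, t) ≠ 0) (hw₁ : ∀ t ∈ Icc 0 T, w (x₁, t) ≠ 0)
    (hx' : x' ∈ Z t') (htan : ∂ₓ w (x', t') = 0) {t₁ t₂ : ℝ} (h₁ : 0 < t₁) (h₁' : t₁ < t')
    (h₂' : t' ≤ t₂) (h₂ : t₂ ≤ T) : (Z t₂).ncard < (Z t₁).ncard := by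
  have hanti := H.antitoneOn_ncard_zerosAt hw₀ hw₁
  have ht' : t' ∈ Ioc 0 T := ⟨h₁.trans h₁', h₂'.trans h₂⟩
  obtain ⟨q, hq, hqm⟩ := ((H.eventually_ncard_lt_before hw₀ hw₁ ht' hx' htan).and
    (Ioo_mem_nhdsLT h₁')).exists
  calc (Z t₂).ncard ≤ (Z t').ncard := hanti ht' ⟨ht'.1.trans_le h₂', h₂⟩ h₂'
    _ < (Z q).ncard := hq
    _ ≤ (Z t₁).ncard := hanti ⟨h₁, h₁'.le.trans ht'.2⟩ ⟨h₁.trans hqm.1, hqm.2.le.trans ht'.2⟩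
        hqm.1.le

end LinearParabolic

section FullyNonlinear

variable {x₀ x₁ T : ℝ}

theorem jet_eq_of_hasDerivWithinAt (hx : x₀ < x₁) (hT : 0 < T) {f fx fxx : ℝ → ℝ → ℝ}
    (hf : ContDiffOn ℝ ∞ (fun z : ℝ × ℝ => f z.1 z.2) (spaceTimeRect x₀ x₁ T))
    (hfx : ∀ x ∈ Icc x₀ x₁, ∀ t ∈ Icc 0 T,
      HasDerivWithinAt (fun y => f y t) (fx x t) (Icc x₀ x₁) x)
    (hfxx : ∀ x ∈ Icc x₀ x₁, ∀ t ∈ Icc 0 T,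
      HasDerivWithinAt (fun y => fx y t) (fxx x t) (Icc x₀ x₁) x)
    {z : ℝ × ℝ} (hz : z ∈ spaceTimeRect x₀ x₁ T) :
    jet (spaceTimeRect x₀ x₁ T) (fun z => f z.1 z.2) z =
      (fxx z.1 z.2, fx z.1 z.2, f z.1 z.2, z) := by
  have hS := uniqueDiffOn_spaceTimeRect hx hT
  have hfx' : EqOn (derivX (spaceTimeRect x₀ x₁ T) fun z => f z.1 z.2) (fun z => fx z.1 z.2)
      (spaceTimeRect x₀ x₁ T) := fun z hz =>
    derivX_eq_of_hasDerivWithinAt hx hf hz (hfx z.1 hz.1 z.2 hz.2)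
  have hfxx' := derivX_eq_of_hasDerivWithinAt hx (contDiffOn_derivX hS hf) hz
    ((hfxx z.1 hz.1 z.2 hz.2).congr (fun y hy => hfx' (x := (y, z.2)) ⟨hy, hz.2⟩) (hfx' hz))
  rw [jet, hfx' hz, hfxx']

theorem derivT_eq_of_solution (hx : x₀ < x₁) (hT : 0 < T) {F : ℝ → ℝ → ℝ → ℝ → ℝ → ℝ}
    {f ft fx fxx : ℝ → ℝ → ℝ}
    (hf : ContDiffOn ℝ ∞ (fun z : ℝ × ℝ => f z.1 z.2) (spaceTimeRect x₀ x₁ T))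
    (hft : ∀ x ∈ Icc x₀ x₁, ∀ t ∈ Icc 0 T,
      HasDerivWithinAt (fun s => f x s) (ft x t) (Icc 0 T) t)
    (hfx : ∀ x ∈ Icc x₀ x₁, ∀ t ∈ Icc 0 T,
      HasDerivWithinAt (fun y => f y t) (fx x t) (Icc x₀ x₁) x)
    (hfxx : ∀ x ∈ Icc x₀ x₁, ∀ t ∈ Icc 0 T,
      HasDerivWithinAt (fun y => fx y t) (fxx x t) (Icc x₀ x₁) x)
    (heq : ∀ x ∈ Icc x₀ x₁, ∀ t ∈ Icc 0 T, ft x t = F (fxx x t) (fx x t) (f x t) x t) :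
    ∀ z ∈ spaceTimeRect x₀ x₁ T, derivT (spaceTimeRect x₀ x₁ T) (fun z => f z.1 z.2) z =
      (fun y : ℝ × ℝ × ℝ × ℝ × ℝ => F y.1 y.2.1 y.2.2.1 y.2.2.2.1 y.2.2.2.2)
        (jet (spaceTimeRect x₀ x₁ T) (fun z => f z.1 z.2) z) := fun z hz => by
  rw [derivT_eq_of_hasDerivWithinAt hT hf hz (hft z.1 hz.1 z.2 hz.2),
    jet_eq_of_hasDerivWithinAt hx hT hf hfx hfxx hz, heq z.1 hz.1 z.2 hz.2]

theorem fderivWithin_jetDomain_apply_eq_of_hasDerivAt {Φ : ℝ × ℝ × ℝ × ℝ × ℝ → ℝ}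
    (hΦ : ContDiffOn ℝ ∞ Φ (jetDomain x₀ x₁ T)) {r c : ℝ} {y : ℝ × ℝ × ℝ × ℝ}
    (hy : (r, y) ∈ jetDomain x₀ x₁ T) (h : HasDerivAt (fun r' => Φ (r', y)) c r) :
    fderivWithin ℝ Φ (jetDomain x₀ x₁ T) (r, y) (1, 0) = c := by
  have hmaps : MapsTo (fun r' : ℝ => (r', y)) univ (jetDomain x₀ x₁ T) := fun _ _ =>
    ⟨trivial, hy.2⟩
  have hcomp := (hΦ.differentiableOn (by simp) _ hy).hasFDerivWithinAt.comp_hasDerivWithinAt r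
    ((hasDerivAt_id r).prodMk (hasDerivAt_const r y)).hasDerivWithinAt hmaps
  exact (hasDerivWithinAt_univ.1 hcomp).unique h

end FullyNonlinear

/-- Intersection-counting theorem: for two solutions of a
fully nonlinear parabolic equation in one space dimension which do not intersect
on the lateral boundary, the set of intersections is finite for positive times,
and a tangential intersection strictly decreases the number of intersections. -/
theorem intersection_counting
    (x₀ x₁ T : ℝ) (hx : x₀ < x₁) (hT : 0 < T)
    (F Fr : ℝ → ℝ → ℝ → ℝ → ℝ → ℝ)
    (hF_smooth : ContDiffOn ℝ (⊤ : ℕ∞)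
      (fun z : ℝ × ℝ × ℝ × ℝ × ℝ => F z.1 z.2.1 z.2.2.1 z.2.2.2.1 z.2.2.2.2)
      (Set.univ ×ˢ Set.univ ×ˢ Set.univ ×ˢ Set.Icc x₀ x₁ ×ˢ Set.Icc 0 T))
    (hFr : ∀ r p q : ℝ, ∀ x ∈ Set.Icc x₀ x₁, ∀ t ∈ Set.Icc (0:ℝ) T,
      HasDerivAt (fun r' => F r' p q x t) (Fr r p q x t) r)
    (hFr_pos : ∀ r p q : ℝ, ∀ x ∈ Set.Icc x₀ x₁, ∀ t ∈ Set.Icc (0:ℝ) T,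
      0 < Fr r p q x t)
    (u ut ux uxx v vt vx vxx : ℝ → ℝ → ℝ)
    (hu_smooth : ContDiffOn ℝ (⊤ : ℕ∞) (fun z : ℝ × ℝ => u z.1 z.2)
      (Set.Icc x₀ x₁ ×ˢ Set.Icc 0 T))
    (hv_smooth : ContDiffOn ℝ (⊤ : ℕ∞) (fun z : ℝ × ℝ => v z.1 z.2)
      (Set.Icc x₀ x₁ ×ˢ Set.Icc 0 T))
    (hut : ∀ x ∈ Set.Icc x₀ x₁, ∀ t ∈ Set.Icc (0:ℝ) T,
      HasDerivWithinAt (fun s => u x s) (ut x t) (Set.Icc 0 T) t)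
    (hux : ∀ x ∈ Set.Icc x₀ x₁, ∀ t ∈ Set.Icc (0:ℝ) T,
      HasDerivWithinAt (fun y => u y t) (ux x t) (Set.Icc x₀ x₁) x)
    (huxx : ∀ x ∈ Set.Icc x₀ x₁, ∀ t ∈ Set.Icc (0:ℝ) T,
      HasDerivWithinAt (fun y => ux y t) (uxx x t) (Set.Icc x₀ x₁) x)
    (hvt : ∀ x ∈ Set.Icc x₀ x₁, ∀ t ∈ Set.Icc (0:ℝ) T,
      HasDerivWithinAt (fun s => v x s) (vt x t) (Set.Icc 0 T) t)
    (hvx : ∀ x ∈ Set.Icc x₀ x₁, ∀ t ∈ Set.Icc (0:ℝ) T,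
      HasDerivWithinAt (fun y => v y t) (vx x t) (Set.Icc x₀ x₁) x)
    (hvxx : ∀ x ∈ Set.Icc x₀ x₁, ∀ t ∈ Set.Icc (0:ℝ) T,
      HasDerivWithinAt (fun y => vx y t) (vxx x t) (Set.Icc x₀ x₁) x)
    (hu_pde : ∀ x ∈ Set.Icc x₀ x₁, ∀ t ∈ Set.Icc (0:ℝ) T,
      ut x t = F (uxx x t) (ux x t) (u x t) x t)
    (hv_pde : ∀ x ∈ Set.Icc x₀ x₁, ∀ t ∈ Set.Icc (0:ℝ) T,
      vt x t = F (vxx x t) (vx x t) (v x t) x t)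
    (hlat : ∀ t ∈ Set.Icc (0:ℝ) T, u x₀ t ≠ v x₀ t ∧ u x₁ t ≠ v x₁ t) :
    (∀ t ∈ Set.Ioc (0:ℝ) T,
      {x ∈ Set.Icc x₀ x₁ | u x t = v x t}.Finite) ∧
    (∀ t' ∈ Set.Ioo (0:ℝ) T, ∀ x' ∈ Set.Ioo x₀ x₁,
      u x' t' = v x' t' → ux x' t' = vx x' t' →
      ∀ t₁ t₂ : ℝ, 0 < t₁ → t₁ < t' → t' < t₂ → t₂ ≤ T →
        {x ∈ Set.Icc x₀ x₁ | u x t₂ = v x t₂}.ncard <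
          {x ∈ Set.Icc x₀ x₁ | u x t₁ = v x t₁}.ncard) := by
  set Φ : ℝ × ℝ × ℝ × ℝ × ℝ → ℝ := fun y => F y.1 y.2.1 y.2.2.1 y.2.2.2.1 y.2.2.2.2
  have hΦ : ContDiffOn ℝ ∞ Φ (jetDomain x₀ x₁ T) := hF_smooth
  have hpos : ∀ y ∈ jetDomain x₀ x₁ T, 0 < fderivWithin ℝ Φ (jetDomain x₀ x₁ T) y (1, 0) :=
    fun ⟨r, p, q, x, t⟩ hy => by
      rw [fderivWithin_jetDomain_apply_eq_of_hasDerivAt hΦ hy (hFr r p q x hy.2.2.2.1 t hy.2.2.2.2)]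
      exact hFr_pos r p q x hy.2.2.2.1 t hy.2.2.2.2
  obtain ⟨a, b, c, H⟩ := exists_linearParabolic hx hT hΦ hpos hu_smooth hv_smooth
    (derivT_eq_of_solution hx hT hu_smooth hut hux huxx hu_pde)
    (derivT_eq_of_solution hx hT hv_smooth hvt hvx hvxx hv_pde)
  have hw₀ : ∀ t ∈ Icc 0 T, u x₀ t - v x₀ t ≠ 0 := fun t ht => sub_ne_zero.2 (hlat t ht).1
  have hw₁ : ∀ t ∈ Icc 0 T, u x₁ t - v x₁ t ≠ 0 := fun t ht => sub_ne_zero.2 (hlat t ht).2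
  have hZ : ∀ t, {x ∈ Icc x₀ x₁ | u x t = v x t} =
      zerosAt x₀ x₁ (fun z => u z.1 z.2 - v z.1 z.2) t := fun t => by
    simp only [zerosAt, sub_eq_zero]
  simp only [hZ]
  refine ⟨fun t ht => H.finite_zerosAt hw₀ hw₁ ht,
    fun t' ht' x' hx' huv huvx t₁ t₂ h₁ h₁' h₂' h₂ => ?_⟩
  have hz : (x', t') ∈ spaceTimeRect x₀ x₁ T :=
    ⟨Ioo_subset_Icc_self hx', Ioo_subset_Icc_self ht'⟩
  refine H.ncard_zerosAt_lt hw₀ hw₁ ⟨hz.1, sub_eq_zero.2 huv⟩ ?_ h₁ h₁' h₂'.le h₂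
  exact derivX_eq_of_hasDerivWithinAt hx (hu_smooth.sub hv_smooth) hz
    (sub_eq_zero.2 huvx ▸ (hux x' hz.1 t' hz.2).sub (hvx x' hz.1 t' hz.2))
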